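/- Let f ∈ ℚ[x] be a squarefree polynomial of degree at least 5. Then the set {(x, y) ∈ ℚ × ℚ : y² = f(x)} is finite. -/

import Mathlib

/-!
The proof is an explicit form of Vojta's method for the Mordell conjecture, in the product of two
elliptic curves.

**Reduction.** Let `K` be a number field containing the roots `αᵢ` of `f`. If `y² = f(x)` with
`y ≠ 0`, the products `(x - αᵢ) (x - αⱼ)` have even valuation outside a finite set of primes, so
by finiteness of the class group and Dirichlet's unit theorem they fall into finitely many classes
modulo squares (`selmer_finite`). With five distinct roots, the Möbius transformation
`u = (x - α₀) / (x - α₄)` and a finite extension of `K` turn this into: `u`, `u - κ₁`, `u - κ₂`,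
`u - κ₃` are all squares, where the `κᵢ` are nonzero and distinct, and integral after scaling
(`split_finite`). It remains to prove `four_squares_finite`: for distinct nonzero integers
`k, l, m` of a number field, only finitely many `x` are such that `x`, `x - k`, `x - l`, `x - m`
are all squares.

**Geometry of numbers.** Such an `x` defines a point `P` on the product of the elliptic curves
`y² = x (x - k) (x - l)` and `y² = x (x - k) (x - m)`. The group of rational points of this product
is finitely generated (`ep_fg`, by two-descent and heights), and the sum `q` of the canonical
heights is a nonnegative quadratic form on it. If there were infinitely many `x`, compactness of
an annulus in a Euclidean space would yield two points `P`, `Q` of large height and a large power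
`a = 2^(r+1)` with `q (a P - Q) ≤ q (a P) / 12` (`cluster`).

**The main inequality.** The contradiction comes from an upper bound for `q (a P + Q)`
(`main_ineq`, `pair_ineq`). Points whose `x`, `x - k`, `x - l` are squares have lifts
`(S, C, D, N)`, and the products of the coordinates of the sum and of the difference of two points
are given by an explicit matrix of rank one (`sdm`). On the product of the two curves, the vector
of products of the sum coordinates is orthogonal to a vector `τ` depending only on `a P`
(`key_relation`). Siegel's lemma gives an alternating form `ω` with polynomial entries of degree
about `5 a² / 6` in `x(P)`, of small size, with `ω ∧ τ = 0` (`exists_omega`). Contraction with `ω`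
yields auxiliary sections which factor as (a coordinate of `τ`) × (coordinates of the differences)
× (a common factor `G`) (`factor`). In the power series ring of a local parameter at `P`, the
leading coefficient of `G` cancels from the projective height, whence
`h(τ) + h(difference₁) + h(difference₂)` is at most the height of the leading coefficients of the
auxiliary sections, which is estimated place by place (`height_auxX`). Here `2 h(τ)` is at least
`q (a P)` up to a constant (`tau_lower`), and the coefficient `5 / 6 < 1` leaves a gain.

**The zero estimate.** The order of vanishing of `G` at `P` has to be small compared with `a²`.
One auxiliary section expands as a combination of polynomials in `x(P)` times radicals, with
coefficients depending on `Q`; the radicals are independent over the polynomials (`indep_y`), so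
the section is nonzero as soon as `Q` has height larger than a multiple of `a²` (`auxX_ne_zero`). A
high order of vanishing at `P` forces `x(P)` to be a root of high multiplicity of a Wronskian,
which is a polynomial of controlled size; this bounds the order in terms of the height of `x(P)`
(`order_bound`).
-/

/-! ### Algebraic identities for sums and differences of points -/

namespace HE
set_option linter.unusedSectionVars false
section Alg
variable {R : Type*} [CommRing R]

/-- `A = (S, C, D, N)` lifts the point with `x = S² / N²`, `y = S C D / N³` of the curve
`y² = x (x - k) (x - l)`: the factors `x - k = C² / N²` and `x - l = D² / N²` are squares too. -/
structure IsLift (k l : R) (A : Fin 4 → R) : Prop where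
  hC : A 1 ^ 2 = A 0 ^ 2 - k * A 3 ^ 2
  hD : A 2 ^ 2 = A 0 ^ 2 - l * A 3 ^ 2

/-- The sum-difference matrix of the point lifted by `A` and the point lifted by `(S, C, D, 1)`.
Its entry at `(U, T)` is the product of the coordinate `U` of a lift of the sum and the coordinate
`S` (for `T = 0`) or `N` (for `T = 1`) of a lift of the difference. -/
def sdm (k l : R) (A : Fin 4 → R) (S C D : R) : Fin 4 → Fin 2 → R :=
  ![![A 0 ^ 2 * S ^ 2 - k * l * A 3 ^ 2, A 3 * A 0 * C * D - S * A 1 * A 2],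
    ![A 1 * A 0 * C * S - k * A 3 * A 2 * D, A 3 * A 1 * S * D - C * A 0 * A 2],
    ![A 2 * A 0 * D * S - l * A 3 * A 1 * C, A 3 * A 2 * S * C - D * A 0 * A 1],
    ![A 3 * A 0 * C * D + S * A 1 * A 2, A 3 ^ 2 * S ^ 2 - A 0 ^ 2]]

/-- The vector `τ` of two lifts, whose entries are, up to sign and the factor `k`, the products of
equally named coordinates, in the order `C, S, N, D`. -/
def tauv (k : R) (A₁ A₂ : Fin 4 → R) : Fin 4 → R :=
  ![A₁ 1 * A₂ 1, -(A₁ 0 * A₂ 0), k * (A₁ 3 * A₂ 3), -(k * (A₁ 2 * A₂ 2))]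

/-- The sum-difference matrix has rank one, as befits a product of the coordinates of the sum and
of those of the difference. -/
theorem sdm_rank_one {k l : R} {A : Fin 4 → R} (hA : IsLift k l A) {S C D : R}
    (hC : C ^ 2 = S ^ 2 - k) (hD : D ^ 2 = S ^ 2 - l) (U V : Fin 4) :
    sdm k l A S C D U 0 * sdm k l A S C D V 1 = sdm k l A S C D U 1 * sdm k l A S C D V 0 := by
  obtain ⟨h1, h2⟩ := hA
  generalize hx0 : A 0 = x0 at *
  generalize hx1 : A 1 = x1 at *
  generalize hx2 : A 2 = x2 at *
  generalize hx3 : A 3 = x3 at *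
  fin_cases U <;> fin_cases V <;> simp [sdm, hx0, hx1, hx2, hx3] <;> grind

/-- On the curves with parameters `(k, l)` and `(k, m)`, take second points sharing `x = S²` and
`C² = x - k`. The vector of products of the sum coordinates on both curves is then orthogonal to
`τ`, which depends on the first points alone. -/
theorem key_relation {k l m : R} {A₁ A₂ : Fin 4 → R} (hA₁ : IsLift k l A₁) (hA₂ : IsLift k m A₂)
    {S C D E : R} (hC : C ^ 2 = S ^ 2 - k) (hD : D ^ 2 = S ^ 2 - l) (hE : E ^ 2 = S ^ 2 - m)
    (T T' : Fin 2) :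
    ∑ U, tauv k A₁ A₂ U * (sdm k l A₁ S C D U T * sdm k m A₂ S C E U T') = 0 := by
  obtain ⟨h1, h2⟩ := hA₁
  obtain ⟨h3, h4⟩ := hA₂
  generalize hx0 : A₁ 0 = x0 at *
  generalize hx1 : A₁ 1 = x1 at *
  generalize hx2 : A₁ 2 = x2 at *
  generalize hx3 : A₁ 3 = x3 at *
  generalize hy0 : A₂ 0 = y0 at *
  generalize hy1 : A₂ 1 = y1 at *
  generalize hy2 : A₂ 2 = y2 at *
  generalize hy3 : A₂ 3 = y3 at *
  fin_cases T <;> fin_cases T' <;>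
    simp [tauv, sdm, Fin.sum_univ_four, hx0, hx1, hx2, hx3, hy0, hy1, hy2, hy3] <;> grind

end Alg
end HE

/-! ### Heights from local bounds -/

namespace HE
set_option linter.unusedSectionVars false
open Height AdmissibleAbsValues

/-- Upper bound for the height of a tuple from local bounds. -/
theorem logHeight_le_of_local {K : Type*} [Field K] [AdmissibleAbsValues K] {ι : Type*} [Finite ι]
    {x : ι → K} (hx : x ≠ 0) (z u : K) (p q : ℕ) {C : ℝ} (hC : 1 ≤ C)
    (harch : ∀ v ∈ archAbsVal (K := K), ∀ i, v (x i) ≤ C * max (v z) 1 ^ p * max (v u) 1 ^ q)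
    (hna : ∀ v ∈ nonarchAbsVal (K := K), ∀ i, v (x i) ≤ max (v z) 1 ^ p * max (v u) 1 ^ q) :
    logHeight x ≤ totalWeight K * Real.log C + p * logHeight₁ z + q * logHeight₁ u := by
  have hne : Nonempty ι := by
    by_contra h
    rw [not_nonempty_iff] at h
    exact hx (Subsingleton.elim _ _)
  have hsup : ∀ v : AbsoluteValue K ℝ, 0 < ⨆ i, v (x i) := by
    intro v
    obtain ⟨i, hi⟩ := Function.ne_iff.mp hx
    exact lt_of_lt_of_le (v.pos hi) (Finite.le_ciSup_of_le i le_rfl)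
  have h1 : (archAbsVal.map fun v : AbsoluteValue K ℝ ↦ ⨆ i, v (x i)).prod ≤
      C ^ totalWeight K * (archAbsVal.map fun v : AbsoluteValue K ℝ ↦ max (v z) 1).prod ^ p *
        (archAbsVal.map fun v : AbsoluteValue K ℝ ↦ max (v u) 1).prod ^ q := by
    have : C ^ totalWeight K * (archAbsVal.map fun v : AbsoluteValue K ℝ ↦ max (v z) 1).prod ^ p *
        (archAbsVal.map fun v : AbsoluteValue K ℝ ↦ max (v u) 1).prod ^ q =
        (archAbsVal.map fun v : AbsoluteValue K ℝ ↦ C * max (v z) 1 ^ p * max (v u) 1 ^ q).prod := by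
      rw [Multiset.prod_map_mul, Multiset.prod_map_mul, Multiset.prod_map_pow,
        Multiset.prod_map_pow, Multiset.map_const', Multiset.prod_replicate]
      rfl
    rw [this]
    exact Multiset.prod_map_le_prod_map₀ _ _ (fun v _ ↦ (hsup v).le)
      (fun v hv ↦ ciSup_le (harch v hv))
  have hfin (y : K) : (fun v : nonarchAbsVal (K := K) ↦ max (v.val y) 1).HasFiniteMulSupport := by
    rcases eq_or_ne y 0 with rfl | hy
    · convert! (show (fun v : nonarchAbsVal (K := K) ↦ (1:ℝ)).HasFiniteMulSupport by fun_prop) using 2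
      simp
    · refine (AdmissibleAbsValues.hasFiniteMulSupport hy).subset ?_
      intro v hv hv'
      apply hv
      simp only at hv'
      simp [hv']
  have hfx : (fun v : nonarchAbsVal (K := K) ↦ ⨆ i, v.val (x i)).HasFiniteMulSupport := by
    have : (fun v : nonarchAbsVal (K := K) ↦ ⨆ i, v.val (x i)).mulSupport ⊆
       ⋃ i ∈ {i | x i ≠ 0}, (fun v : nonarchAbsVal (K := K) ↦ v.val (x i)).mulSupport := by
      intro v hv
      by_contra hc
      simp only [Set.mem_iUnion, not_exists, Function.mem_mulSupport, not_not, Set.mem_ofPred_eq] at hc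
      apply hv
      obtain ⟨i, hi⟩ := Function.ne_iff.mp hx
      refine le_antisymm (ciSup_le fun j ↦ ?_) (Finite.le_ciSup_of_le i (hc i hi).ge)
      by_cases hj : x j = 0
      · simp [hj]
      · exact (hc j hj).le
    refine Set.Finite.subset ?_ this
    exact Set.Finite.biUnion (Set.toFinite _) fun i hi ↦ AdmissibleAbsValues.hasFiniteMulSupport hi
  have h2 : ∏ᶠ v : nonarchAbsVal (K := K), ⨆ i, v.val (x i) ≤
      (∏ᶠ v : nonarchAbsVal (K := K), max (v.val z) 1) ^ p *
        (∏ᶠ v : nonarchAbsVal (K := K), max (v.val u) 1) ^ q := by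
    rw [finprod_pow (hfin z), finprod_pow (hfin u), ← finprod_mul_distrib]
    · refine finprod_le_finprod hfx (fun v ↦ (hsup v.1).le) ?_ ?_
      · refine Function.HasFiniteMulSupport.mul ?_ ?_
        · exact (hfin z).pow p
        · exact (hfin u).pow q
      · exact fun v ↦ ciSup_le (hna v.1 v.2)
    · exact (hfin z).pow p
    · exact (hfin u).pow q
  have hz := mulHeight₁_pos z
  have hu := mulHeight₁_pos u
  have h3 : mulHeight x ≤ C ^ totalWeight K * mulHeight₁ z ^ p * mulHeight₁ u ^ q := by
    rw [mulHeight_eq hx, mulHeight₁_eq, mulHeight₁_eq, mul_pow, mul_pow]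
    calc _ ≤ _ := mul_le_mul h1 h2 (finprod_nonneg fun v ↦ (hsup v.1).le) (by
          refine mul_nonneg (mul_nonneg (by positivity) ?_) ?_ <;>
          · refine pow_nonneg (Multiset.prod_nonneg ?_) _
            intro a ha
            obtain ⟨v, -, rfl⟩ := Multiset.mem_map.mp ha
            positivity)
      _ = _ := by ring
  have h4 : 0 < mulHeight x := mulHeight_pos x
  rw [logHeight_eq_log_mulHeight, logHeight₁_eq_log_mulHeight₁, logHeight₁_eq_log_mulHeight₁]
  calc _ ≤ Real.log (C ^ totalWeight K * mulHeight₁ z ^ p * mulHeight₁ u ^ q) :=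
        Real.log_le_log h4 h3
    _ = _ := by
      rw [Real.log_mul (by positivity) (by positivity), Real.log_mul (by positivity) (by positivity),
        Real.log_pow, Real.log_pow, Real.log_pow]

end HE

/-! ### Sizes of algebraic integers and of integral polynomials -/

namespace HE
set_option linter.unusedSectionVars false
open Height AdmissibleAbsValues NumberField Polynomial

section Norms
variable {K : Type*} [Field K] [NumberField K]

/-- The sum of the absolute values of all conjugates of an algebraic integer. -/
noncomputable def nrm (a : 𝓞 K) : ℝ := ∑ φ : K →+* ℂ, ‖φ a‖

theorem nrm_nonneg (a : 𝓞 K) : 0 ≤ nrm a := Finset.sum_nonneg fun _ _ ↦ norm_nonneg _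

@[simp] theorem nrm_zero : nrm (0 : 𝓞 K) = 0 := by simp [nrm]

theorem nrm_add_le (a b : 𝓞 K) : nrm (a + b) ≤ nrm a + nrm b := by
  simp only [nrm, ← Finset.sum_add_distrib]
  exact Finset.sum_le_sum fun φ _ ↦ by simpa using norm_add_le _ _

@[simp] theorem nrm_neg (a : 𝓞 K) : nrm (-a) = nrm a := by simp [nrm]

theorem norm_le_nrm (a : 𝓞 K) (φ : K →+* ℂ) : ‖φ a‖ ≤ nrm a :=
  Finset.single_le_sum (f := fun φ : K →+* ℂ ↦ ‖φ a‖) (fun _ _ ↦ norm_nonneg _) (Finset.mem_univ φ)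

theorem nrm_mul_le (a b : 𝓞 K) : nrm (a * b) ≤ nrm a * nrm b := by
  rw [nrm, nrm, Finset.sum_mul]
  refine Finset.sum_le_sum fun φ _ ↦ ?_
  rw [show ((a * b : 𝓞 K) : K) = a * b from rfl, map_mul, norm_mul]
  exact mul_le_mul_of_nonneg_left (norm_le_nrm b φ) (norm_nonneg _)

theorem house_le_nrm (a : 𝓞 K) : house (a : K) ≤ nrm a := by
  rw [house_eq_sup']
  have : (0:ℝ) ≤ nrm a := nrm_nonneg a
  lift nrm a to NNReal using this with r hr
  norm_cast
  refine Finset.sup'_le _ _ fun φ _ ↦ ?_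
  have := norm_le_nrm a φ
  rw [← hr] at this
  exact_mod_cast this

theorem nrm_le_house (a : 𝓞 K) : nrm a ≤ Module.finrank ℚ K * house (a : K) := by
  rw [nrm, ← NumberField.Embeddings.card K ℂ, ← nsmul_eq_mul]
  refine Finset.sum_le_card_nsmul _ _ _ fun φ _ ↦ ?_
  rw [house_eq_sup']
  exact_mod_cast Finset.le_sup' (fun φ : K →+* ℂ ↦ ‖φ (a : K)‖₊) (Finset.mem_univ φ)

theorem arch_le_nrm {v : AbsoluteValue K ℝ} (hv : v ∈ archAbsVal (K := K)) (a : 𝓞 K) :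
    v a ≤ nrm a := by
  have hv' : IsInfinitePlace v := mem_multisetInfinitePlace.mp hv
  obtain ⟨φ, rfl⟩ := hv'
  exact norm_le_nrm a φ

theorem nonarch_int_le {v : AbsoluteValue K ℝ} (hv : v ∈ nonarchAbsVal (K := K)) (a : 𝓞 K) :
    v a ≤ 1 := by
  obtain ⟨w, rfl⟩ := (isFinitePlace_iff v).mp hv
  obtain ⟨p, hp⟩ := w.2
  rw [← hp]
  exact FinitePlace.norm_le_one K p a

theorem arch_natCast {v : AbsoluteValue K ℝ} (hv : v ∈ archAbsVal (K := K)) (n : ℕ) :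
    v n = n := by
  have hv' : IsInfinitePlace v := mem_multisetInfinitePlace.mp hv
  obtain ⟨φ, rfl⟩ := hv'
  simp

/-- The `ℓ¹`-norm of a polynomial with algebraic integer coefficients. -/
noncomputable def pn (p : (𝓞 K)[X]) : ℝ := p.sum fun _ a ↦ nrm a

theorem pn_eq_sum (p : (𝓞 K)[X]) {n : ℕ} (hn : p.natDegree < n) :
    pn p = ∑ i ∈ Finset.range n, nrm (p.coeff i) :=
  p.sum_over_range' (fun _ ↦ nrm_zero) n hn

theorem pn_nonneg (p : (𝓞 K)[X]) : 0 ≤ pn p := Finset.sum_nonneg fun _ _ ↦ nrm_nonneg _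

@[simp] theorem pn_zero : pn (0 : (𝓞 K)[X]) = 0 := by simp [pn]

theorem pn_add_le (p q : (𝓞 K)[X]) : pn (p + q) ≤ pn p + pn q := by
  set n := max p.natDegree q.natDegree + 1
  rw [pn_eq_sum (p + q) (n := n) (by have := natDegree_add_le p q; omega),
    pn_eq_sum p (n := n) (by omega), pn_eq_sum q (n := n) (by omega), ← Finset.sum_add_distrib]
  exact Finset.sum_le_sum fun i _ ↦ by simpa using nrm_add_le _ _

@[simp] theorem pn_neg (p : (𝓞 K)[X]) : pn (-p) = pn p := by
  rw [pn_eq_sum (-p) (n := p.natDegree + 1) (by simp), pn_eq_sum p (n := p.natDegree + 1) (by simp)]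
  simp

theorem pn_sub_le (p q : (𝓞 K)[X]) : pn (p - q) ≤ pn p + pn q := by
  rw [sub_eq_add_neg, ← pn_neg q]; exact pn_add_le _ _

@[simp] theorem pn_monomial (n : ℕ) (a : 𝓞 K) : pn (monomial n a) = nrm a :=
  sum_monomial_index _ _ nrm_zero

@[simp] theorem pn_C (a : 𝓞 K) : pn (C a) = nrm a := pn_monomial 0 a

theorem pn_sum_le {ι : Type*} (s : Finset ι) (f : ι → (𝓞 K)[X]) :
    pn (∑ i ∈ s, f i) ≤ ∑ i ∈ s, pn (f i) := by
  classical
  induction s using Finset.induction_on with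
  | empty => simp
  | insert a s ha ih =>
    rw [Finset.sum_insert ha, Finset.sum_insert ha]
    exact (pn_add_le _ _).trans (by gcongr)

theorem pn_mul_le (p q : (𝓞 K)[X]) : pn (p * q) ≤ pn p * pn q := by
  have h : p * q = ∑ i ∈ p.support, ∑ j ∈ q.support, monomial (i + j) (p.coeff i * q.coeff j) := by
    rw [mul_eq_sum_sum]; rfl
  rw [h, show pn p = ∑ i ∈ p.support, nrm (p.coeff i) from rfl,
    show pn q = ∑ i ∈ q.support, nrm (q.coeff i) from rfl, Finset.sum_mul_sum]
  refine (pn_sum_le _ _).trans (Finset.sum_le_sum fun i _ ↦ ?_)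
  refine (pn_sum_le _ _).trans (Finset.sum_le_sum fun j _ ↦ ?_)
  rw [pn_monomial]
  exact nrm_mul_le _ _

theorem nrm_coeff_le (p : (𝓞 K)[X]) (i : ℕ) : nrm (p.coeff i) ≤ pn p := by
  by_cases h : i ∈ p.support
  · exact Finset.single_le_sum (f := fun i ↦ nrm (p.coeff i)) (fun _ _ ↦ nrm_nonneg _) h
  · rw [notMem_support_iff.mp h, nrm_zero]; exact pn_nonneg p

theorem pn_derivative_le (p : (𝓞 K)[X]) {d : ℕ} (hd : p.natDegree ≤ d) :
    pn (derivative p) ≤ d * pn p := by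
  have h : derivative p = ∑ i ∈ p.support, monomial (i - 1) (p.coeff i * i) := by
    conv_lhs => rw [p.as_sum_support, map_sum]
    simp [derivative_monomial]
  rw [h, show pn p = ∑ i ∈ p.support, nrm (p.coeff i) from rfl, Finset.mul_sum]
  refine (pn_sum_le _ _).trans (Finset.sum_le_sum fun i hi ↦ ?_)
  rw [pn_monomial]
  have : (i : ℝ) ≤ d := by exact_mod_cast (le_natDegree_of_mem_supp i hi).trans hd
  have h2 : nrm (p.coeff i * (i : 𝓞 K)) = i * nrm (p.coeff i) := by
    simp [nrm, Finset.mul_sum, mul_comm]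
  rw [h2]
  exact mul_le_mul_of_nonneg_right this (nrm_nonneg _)

end Norms
end HE

/-! ### Power series and their local sizes -/

namespace HE
set_option linter.unusedSectionVars false
open Height AdmissibleAbsValues NumberField Polynomial

section Sqrt
variable {K : Type*} [Field K]

/-- The power series `√(1 - 4 c X)`, given through the Catalan numbers. -/
noncomputable def sqs (c : K) : PowerSeries K :=
  PowerSeries.rescale c (1 - 2 * (PowerSeries.X * PowerSeries.catalanSeries.map (Nat.castRingHom K)))

theorem sqs_sq (c : K) : sqs c ^ 2 = 1 - PowerSeries.C (4 * c) * PowerSeries.X := by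
  have h := congrArg (PowerSeries.map (Nat.castRingHom K)) PowerSeries.catalanSeries_sq_mul_X_add_one
  simp only [map_add, map_mul, map_pow, PowerSeries.map_X, map_one] at h
  have h2 : (1 - 2 * (PowerSeries.X * PowerSeries.catalanSeries.map (Nat.castRingHom K))) ^ 2 =
      1 - 4 * PowerSeries.X := by
    linear_combination 4 * PowerSeries.X * h
  rw [sqs, ← map_pow, h2, map_sub, map_one, map_mul, PowerSeries.rescale_X]
  rw [show (4 : PowerSeries K) = (4 : ℕ) by norm_num, map_natCast]
  simp [mul_assoc]
  exact Or.inl (map_ofNat PowerSeries.C 4).symm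

/-- The integer coefficients of `√(1 - 4 X)`. -/
def sqc : ℕ → ℤ
  | 0 => 1
  | n + 1 => -2 * catalan n

theorem coeff_sqs (c : K) (n : ℕ) : PowerSeries.coeff n (sqs c) = c ^ n * (sqc n : K) := by
  rw [sqs, PowerSeries.coeff_rescale]
  congr 1
  rw [map_sub, show (2 : PowerSeries K) = PowerSeries.C 2 from (map_ofNat PowerSeries.C 2).symm, PowerSeries.coeff_C_mul]
  cases n with
  | zero => simp [sqc]
  | succ n => simp [sqc, PowerSeries.coeff_succ_X_mul, PowerSeries.coeff_one]

theorem abs_sqc_le (n : ℕ) : |(sqc n : ℝ)| ≤ 4 ^ n := by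
  cases n with
  | zero => simp [sqc]
  | succ n =>
    have h1 : catalan n ≤ 4 ^ n := by
      rw [catalan_eq_centralBinom_div]
      refine (Nat.div_le_self _ _).trans ?_
      rw [Nat.centralBinom]
      calc (2 * n).choose n ≤ 2 ^ (2 * n) := Nat.choose_le_two_pow _ _
        _ = 4 ^ n := by rw [pow_mul]; norm_num
    have h2 : (catalan n : ℝ) ≤ 4 ^ n := by exact_mod_cast h1
    simp only [sqc]
    push_cast
    rw [abs_mul, abs_neg, abs_of_pos (by norm_num : (0:ℝ) < 2), abs_of_nonneg (by positivity), pow_succ]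
    have : (0:ℝ) < 4 ^ n := by positivity
    linarith

@[simp] theorem constantCoeff_sqs (c : K) : PowerSeries.constantCoeff (sqs c) = 1 := by
  rw [← PowerSeries.coeff_zero_eq_constantCoeff_apply, coeff_sqs]; simp [sqc]

/-- The truncated `ℓ¹`-norm of radius `ρ` at an absolute value. -/
noncomputable def trn (v : AbsoluteValue K ℝ) (ρ : ℝ) (k : ℕ) (g : PowerSeries K) : ℝ :=
  ∑ l ∈ Finset.range (k + 1), v (PowerSeries.coeff l g) * ρ ^ l

theorem trn_mul_le (v : AbsoluteValue K ℝ) {ρ : ℝ} (hρ : 0 ≤ ρ) (k : ℕ) (f g : PowerSeries K) :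
    trn v ρ k (f * g) ≤ trn v ρ k f * trn v ρ k g := by
  rw [trn, trn, trn, Finset.sum_mul_sum, ← Finset.sum_product']
  set F : ℕ × ℕ → ℝ := fun p ↦ v (PowerSeries.coeff p.1 f) * ρ ^ p.1 *
    (v (PowerSeries.coeff p.2 g) * ρ ^ p.2) with hF
  have hF0 : ∀ p, 0 ≤ F p := fun p ↦ by
    simp only [hF]; positivity
  calc _ ≤ ∑ l ∈ Finset.range (k + 1), ∑ p ∈ Finset.HasAntidiagonal.antidiagonal l, F p := by
        refine Finset.sum_le_sum fun l _ ↦ ?_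
        rw [PowerSeries.coeff_mul]
        calc _ ≤ (∑ p ∈ Finset.HasAntidiagonal.antidiagonal l,
              v (PowerSeries.coeff p.1 f * PowerSeries.coeff p.2 g)) * ρ ^ l := by
              gcongr
              exact v.sum_le _ _
          _ = _ := by
              rw [Finset.sum_mul]
              refine Finset.sum_congr rfl fun p hp ↦ ?_
              rw [← Finset.HasAntidiagonal.mem_antidiagonal.mp hp, map_mul]
              simp only [hF]; ring
    _ = ∑ p ∈ (Finset.range (k + 1)).sigma (fun l ↦ Finset.HasAntidiagonal.antidiagonal l), F p.2 := by
        rw [Finset.sum_sigma]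
    _ = ∑ p ∈ ((Finset.range (k + 1)).sigma (fun l ↦ Finset.HasAntidiagonal.antidiagonal l)).image Sigma.snd, F p := by
        rw [Finset.sum_image]
        rintro ⟨l, p⟩ hp ⟨l', p'⟩ hp' h
        simp at hp hp' h
        subst h
        obtain rfl : l = l' := by omega
        rfl
    _ ≤ _ := by
        refine Finset.sum_le_sum_of_subset_of_nonneg ?_ fun p _ _ ↦ hF0 p
        intro p hp
        simp at hp ⊢
        omega

theorem nonarch_sum_le {v : AbsoluteValue K ℝ} (hv : IsNonarchimedean v) {ι : Type*} (s : Finset ι)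
    (f : ι → K) {B : ℝ} (hB : 0 ≤ B) (h : ∀ i ∈ s, v (f i) ≤ B) : v (∑ i ∈ s, f i) ≤ B := by
  classical
  induction s using Finset.induction_on with
  | empty => simpa
  | insert a s ha ih =>
    rw [Finset.sum_insert ha]
    exact (hv _ _).trans (max_le (h a (by simp)) (ih fun i hi ↦ h i (by simp [hi])))

end Sqrt

section Gauge
variable {K : Type*} [Field K] [NumberField K]

/-- A calculus of bounds for power series at one place: `P c b g` says that `g` has size at most
`b`, up to the constant `c` (which is ignored at nonarchimedean places). -/
structure Gauge (K : Type*) [Field K] [NumberField K] where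
  P : ℝ → ℝ → PowerSeries K → Prop
  add : ∀ {c c' b f g}, P c b f → P c' b g → P (c + c') b (f + g)
  mul : ∀ {c c' b b' f g}, P c b f → P c' b' g → P (c * c') (b * b') (f * g)
  neg : ∀ {c b f}, P c b f → P c b (-f)
  mono_b : ∀ {c b b' f}, P c b f → 0 ≤ c → b ≤ b' → P c b' f
  mono_c : ∀ {c c' b f}, P c b f → 0 ≤ b → c ≤ c' → P c' b f
  int : ∀ a : 𝓞 K, P (nrm a) 1 (PowerSeries.C (a : K))
  one : P 1 1 1

namespace Gauge
variable (G : Gauge K)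

theorem sub {c c' b : ℝ} {f g : PowerSeries K} (hf : G.P c b f) (hg : G.P c' b g) :
    G.P (c + c') b (f - g) := by
  rw [sub_eq_add_neg]; exact G.add hf (G.neg hg)

theorem pow {c b : ℝ} {f : PowerSeries K} (hf : G.P c b f) (n : ℕ) : G.P (c ^ n) (b ^ n) (f ^ n) := by
  induction n with
  | zero => simpa using G.one
  | succ n ih => rw [pow_succ, pow_succ, pow_succ]; exact G.mul ih hf

theorem zero {b : ℝ} (hb : 1 ≤ b) : G.P 0 b 0 := by
  have := G.int (0 : 𝓞 K)
  rw [nrm_zero] at this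
  simpa using G.mono_b this le_rfl hb

theorem sum {ι : Type*} (s : Finset ι) {c : ι → ℝ} {b : ℝ} (hb : 1 ≤ b) {f : ι → PowerSeries K}
    (hf : ∀ i ∈ s, G.P (c i) b (f i)) : G.P (∑ i ∈ s, c i) b (∑ i ∈ s, f i) := by
  classical
  induction s using Finset.induction_on with
  | empty => simpa using G.zero hb
  | insert a s ha ih =>
    rw [Finset.sum_insert ha, Finset.sum_insert ha]
    exact G.add (hf a (by simp)) (ih fun i hi ↦ hf i (by simp [hi]))

/-- Evaluation of a polynomial over the ring of integers. -/
theorem aeval {c b : ℝ} (hc : 1 ≤ c) (hb : 1 ≤ b) {f : PowerSeries K} (hf : G.P c b f)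
    (p : (𝓞 K)[X]) {d : ℕ} (hd : p.natDegree ≤ d) :
    G.P (pn p * c ^ d) (b ^ d) (Polynomial.aeval f p) := by
  rw [aeval_eq_sum_range' (n := d + 1) (by omega)]
  rw [pn_eq_sum p (n := d + 1) (by omega), Finset.sum_mul]
  refine G.sum _ (one_le_pow₀ hb) fun i hi ↦ ?_
  have hi' : i ≤ d := by simpa [Nat.lt_succ_iff] using hi
  have h := G.mul (G.int (p.coeff i)) (G.pow hf i)
  rw [one_mul] at h
  have e : (p.coeff i) • f ^ i = PowerSeries.C (p.coeff i : K) * f ^ i := by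
    rw [Algebra.smul_def]; rfl
  rw [e]
  refine G.mono_b (G.mono_c h (by positivity) ?_) ?_ (pow_le_pow_right₀ hb hi')
  · exact mul_le_mul_of_nonneg_left (pow_le_pow_right₀ hc hi') (nrm_nonneg _)
  · exact mul_nonneg (nrm_nonneg _) (by positivity)

end Gauge

/-- The gauge of an archimedean place. -/
noncomputable def archGauge {v : AbsoluteValue K ℝ} (hv : v ∈ archAbsVal (K := K)) {ρ : ℝ}
    (hρ : 0 ≤ ρ) (k : ℕ) : Gauge K where
  P c b g := trn v ρ k g ≤ c * b
  add {c c' b f g} hf hg := by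
    refine le_trans ?_ ((add_le_add hf hg).trans_eq (by ring))
    simp only [trn, ← Finset.sum_add_distrib, ← add_mul]
    refine Finset.sum_le_sum fun l _ ↦ ?_
    gcongr
    simpa using v.add_le _ _
  mul {c c' b b' f g} hf hg := by
    have h0 : ∀ f, 0 ≤ trn v ρ k f := fun f ↦ Finset.sum_nonneg fun l _ ↦ by positivity
    calc _ ≤ _ := trn_mul_le v hρ k f g
      _ ≤ (c * b) * (c' * b') := mul_le_mul hf hg (h0 g) ((h0 f).trans hf)
      _ = _ := by ring
  neg {c b f} hf := by simpa [trn] using hf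
  mono_b hf hc hb := hf.trans (mul_le_mul_of_nonneg_left hb hc)
  mono_c hf hc hb := hf.trans (mul_le_mul_of_nonneg_right hb hc)
  int a := by
    rw [trn, Finset.sum_range_succ']
    simp [PowerSeries.coeff_C]
    exact arch_le_nrm hv a
  one := by
    rw [trn, Finset.sum_range_succ']
    simp [PowerSeries.coeff_one]

/-- The gauge of a nonarchimedean place. -/
noncomputable def nonarchGauge {v : AbsoluteValue K ℝ} (hv : v ∈ nonarchAbsVal (K := K)) {ρ : ℝ}
    (hρ : 0 ≤ ρ) : Gauge K where
  P _ b g := ∀ l, v (PowerSeries.coeff l g) * ρ ^ l ≤ b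
  add {c c' b f g} hf hg l := by
    have h := AdmissibleAbsValues.isNonarchimedean v hv (PowerSeries.coeff l f) (PowerSeries.coeff l g)
    rw [map_add]
    calc _ ≤ max (v (PowerSeries.coeff l f)) (v (PowerSeries.coeff l g)) * ρ ^ l := by gcongr
      _ ≤ b := by
        rw [max_mul_of_nonneg _ _ (by positivity)]
        exact max_le (hf l) (hg l)
  mul {c c' b b' f g} hf hg l := by
    have hb : 0 ≤ b := le_trans (by positivity) (hf 0)
    have hb' : 0 ≤ b' := le_trans (by positivity) (hg 0)
    rcases eq_or_lt_of_le hρ with h0 | h0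
    · subst h0
      cases l with
      | zero =>
        have h1 := hf 0
        have h2 := hg 0
        simp only [pow_zero, mul_one, PowerSeries.coeff_zero_eq_constantCoeff_apply] at h1 h2 ⊢
        rw [map_mul, map_mul]
        exact mul_le_mul h1 h2 (by positivity) hb
      | succ l => simp; positivity
    rw [← le_div_iff₀ (by positivity), PowerSeries.coeff_mul]
    refine nonarch_sum_le (AdmissibleAbsValues.isNonarchimedean v hv) _ _ (by positivity) ?_
    intro p hp
    rw [le_div_iff₀ (by positivity), ← Finset.HasAntidiagonal.mem_antidiagonal.mp hp, map_mul, pow_add]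
    calc _ = (v (PowerSeries.coeff p.1 f) * ρ ^ p.1) * (v (PowerSeries.coeff p.2 g) * ρ ^ p.2) := by
          ring
      _ ≤ _ := mul_le_mul (hf _) (hg _) (by positivity) hb
  neg {c b f} hf := by simpa using hf
  mono_b hf hc hb l := (hf l).trans hb
  mono_c hf hc hb := hf
  int a l := by
    cases l with
    | zero => simpa using nonarch_int_le hv a
    | succ l => simp
  one l := by
    cases l with
    | zero => simp
    | succ l => simp [PowerSeries.coeff_one]

theorem archGauge_sqs {v : AbsoluteValue K ℝ} (hv : v ∈ archAbsVal (K := K)) {ρ : ℝ}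
    (hρ : 0 ≤ ρ) (k : ℕ) (c : K) (hc : v c * ρ ≤ 1 / 8) : (archGauge hv hρ k).P 2 1 (sqs c) := by
  change trn v ρ k (sqs c) ≤ 2 * 1
  have hval : ∀ n : ℕ, v (sqc n : K) ≤ 4 ^ n := by
    intro n
    refine le_trans (le_of_eq ?_) (abs_sqc_le n)
    have : ∀ z : ℤ, v (z : K) = |(z : ℝ)| := by
      intro z
      obtain ⟨n, rfl | rfl⟩ := Int.eq_nat_or_neg z <;> simp [arch_natCast hv]
    exact this _
  calc trn v ρ k (sqs c) ≤ ∑ l ∈ Finset.range (k + 1), (1 / 2 : ℝ) ^ l := by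
        refine Finset.sum_le_sum fun l _ ↦ ?_
        rw [coeff_sqs, map_mul, map_pow]
        calc _ = (v c * ρ) ^ l * v (sqc l : K) := by rw [mul_pow]; ring
          _ ≤ (1 / 8) ^ l * 4 ^ l := by
            gcongr
            exact hval l
          _ = (1 / 2) ^ l := by rw [← mul_pow]; norm_num
    _ ≤ 2 * 1 := by
        have := sum_geometric_two_le (k + 1)
        simpa using this

theorem nonarchGauge_sqs {v : AbsoluteValue K ℝ} (hv : v ∈ nonarchAbsVal (K := K)) {ρ : ℝ}
    (hρ : 0 ≤ ρ) (c : K) (hc : v c * ρ ≤ 1) (C : ℝ) : (nonarchGauge hv hρ).P C 1 (sqs c) := by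
  intro l
  rw [coeff_sqs, map_mul, map_pow]
  have h : v (sqc l : K) ≤ 1 := by
    simpa using nonarch_int_le hv (sqc l : 𝓞 K)
  calc _ = (v c * ρ) ^ l * v (sqc l : K) := by rw [mul_pow]; ring
    _ ≤ 1 * 1 := mul_le_mul (pow_le_one₀ (by positivity) hc) h (by positivity) zero_le_one
    _ = 1 := one_mul 1

theorem archGauge_C {v : AbsoluteValue K ℝ} (hv : v ∈ archAbsVal (K := K)) {ρ : ℝ}
    (hρ : 0 ≤ ρ) (k : ℕ) {c b : ℝ} {a : K} (h : v a ≤ c * b) :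
    (archGauge hv hρ k).P c b (PowerSeries.C a) := by
  change trn v ρ k _ ≤ _
  rw [trn, Finset.sum_range_succ']
  simpa [PowerSeries.coeff_C] using h

theorem nonarchGauge_C {v : AbsoluteValue K ℝ} (hv : v ∈ nonarchAbsVal (K := K)) {ρ : ℝ}
    (hρ : 0 ≤ ρ) {c b : ℝ} {a : K} (h : v a ≤ b) :
    (nonarchGauge hv hρ).P c b (PowerSeries.C a) := by
  intro l
  cases l with
  | zero => simpa using h
  | succ l => simpa [PowerSeries.coeff_C] using le_trans (v.nonneg _) h

theorem archGauge_coeff {v : AbsoluteValue K ℝ} (hv : v ∈ archAbsVal (K := K)) {ρ : ℝ}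
    (hρ : 0 ≤ ρ) (k : ℕ) {c b : ℝ} {g : PowerSeries K} (h : (archGauge hv hρ k).P c b g) :
    v (PowerSeries.coeff k g) * ρ ^ k ≤ c * b := by
  refine le_trans ?_ h
  exact Finset.single_le_sum (f := fun l ↦ v (PowerSeries.coeff l g) * ρ ^ l)
    (fun l _ ↦ by positivity) (by simp)

end Gauge
end HE

/-! ### Multiplication by powers of two through polynomials -/

namespace HE
set_option linter.unusedSectionVars false
open Polynomial

section LP
variable {R : Type*} [CommRing R]

/-- The polynomial `x (x - k) (x - l)`. -/
noncomputable def cubic (k l : R) : R[X] := X * (X - C k) * (X - C l)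

/-- The polynomials `s, c, d, ν` with `2^(r+1) P = (s : c : d : yν)`. -/
noncomputable def lp (k l : R) : ℕ → Fin 4 → R[X]
  | 0 => ![X ^ 2 - C (k * l), X ^ 2 - C (2 * k) * X + C (k * l), X ^ 2 - C (2 * l) * X + C (k * l), 2]
  | r + 1 =>
    let s := lp k l r 0
    let c := lp k l r 1
    let d := lp k l r 2
    let n := lp k l r 3
    ![s ^ 4 - C (k * l) * cubic k l ^ 2 * n ^ 4,
      c ^ 2 * s ^ 2 - C k * cubic k l * n ^ 2 * d ^ 2,
      d ^ 2 * s ^ 2 - C l * cubic k l * n ^ 2 * c ^ 2,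
      2 * n * s * c * d]

/-- The polynomials `lp` satisfy the relations of `IsLift`, with `y²` replaced by the cubic. -/
theorem lp_rel (k l : R) (r : ℕ) :
    lp k l r 1 ^ 2 = lp k l r 0 ^ 2 - C k * cubic k l * lp k l r 3 ^ 2 ∧
    lp k l r 2 ^ 2 = lp k l r 0 ^ 2 - C l * cubic k l * lp k l r 3 ^ 2 := by
  induction r with
  | zero =>
    have h2 : (C (2 : R) : R[X]) = 2 := map_ofNat C 2
    constructor <;> simp [lp, cubic, h2] <;> ring
  | succ r ih =>
    obtain ⟨h1, h2⟩ := ih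
    simp only [lp, Matrix.cons_val, map_mul]
    generalize lp k l r 0 = s at *
    generalize lp k l r 1 = c at *
    generalize lp k l r 2 = d at *
    generalize lp k l r 3 = n at *
    generalize cubic k l = F at *
    generalize (C k : R[X]) = k at *
    generalize (C l : R[X]) = l at *
    constructor <;> grind

theorem lp_deg [Nontrivial R] (k l : R) (r : ℕ) :
    (∀ i : Fin 4, i ≠ 3 → (lp k l r i).Monic ∧ (lp k l r i).natDegree = 2 * 4 ^ r) ∧
      (lp k l r 3).natDegree ≤ 2 * 4 ^ r - 2 := by
  have hF : (cubic k l).natDegree ≤ 3 := by unfold cubic; compute_degree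
  induction r with
  | zero =>
    refine ⟨fun i hi ↦ ?_, ?_⟩
    · fin_cases i
      · simp only [lp, Fin.zero_eta, Matrix.cons_val]
        constructor
        · monicity!
        · compute_degree!
      · simp only [lp, Fin.mk_one, Matrix.cons_val]
        constructor
        · monicity!
        · compute_degree!
      · simp only [lp, Fin.reduceFinMk, Matrix.cons_val]
        constructor
        · monicity!
        · compute_degree!
      · exact absurd rfl hi
    · simp [lp]
  | succ r ih =>
    obtain ⟨h, hn⟩ := ih
    obtain ⟨hs, hs'⟩ := h 0 (by decide)
    obtain ⟨hc, hc'⟩ := h 1 (by decide)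
    obtain ⟨hd, hd'⟩ := h 2 (by decide)
    have hpos : 1 ≤ 4 ^ r := Nat.one_le_pow _ _ (by norm_num)
    set N := 4 ^ r with hN
    have key : ∀ p q : R[X], p.Monic → p.natDegree = 8 * N → q.natDegree ≤ 8 * N - 1 →
        (p - q).Monic ∧ (p - q).natDegree = 8 * N := by
      intro p q hp hpd hq
      have hlt : q.degree < p.degree := by
        refine degree_lt_degree ?_
        omega
      exact ⟨hp.sub_of_left hlt, by rw [natDegree_sub_eq_left_of_natDegree_lt (by omega), hpd]⟩
    have e : 2 * 4 ^ (r + 1) = 8 * N := by rw [pow_succ, ← hN]; ring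
    rw [e]
    simp only [lp]
    generalize lp k l r 0 = s at *
    generalize lp k l r 1 = c at *
    generalize lp k l r 2 = d at *
    generalize lp k l r 3 = n at *
    generalize cubic k l = F at *
    refine ⟨fun i hi ↦ ?_, ?_⟩
    · fin_cases i
      · refine key _ _ (hs.pow 4) (by rw [hs.natDegree_pow, hs']; ring) ?_
        have h1 : (C (k * l) * F ^ 2 * n ^ 4).natDegree ≤ 0 + 2 * 3 + 4 * (2 * N - 2) := by
          refine natDegree_mul_le_of_le (natDegree_mul_le_of_le (natDegree_C _).le ?_) ?_
          · exact natDegree_pow_le_of_le 2 hF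
          · exact natDegree_pow_le_of_le 4 hn
        omega
      · refine key _ _ ((hc.pow 2).mul (hs.pow 2)) ?_ ?_
        · rw [(hc.pow 2).natDegree_mul (hs.pow 2), hc.natDegree_pow, hs.natDegree_pow, hs', hc']; ring
        have h1 : (C k * F * n ^ 2 * d ^ 2).natDegree ≤ 0 + 3 + 2 * (2 * N - 2) + 2 * (2 * N) := by
          refine natDegree_mul_le_of_le (natDegree_mul_le_of_le
            (natDegree_mul_le_of_le (by simp) hF) ?_) ?_
          · exact natDegree_pow_le_of_le 2 hn
          · exact natDegree_pow_le_of_le 2 hd'.le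
        omega
      · refine key _ _ ((hd.pow 2).mul (hs.pow 2)) ?_ ?_
        · rw [(hd.pow 2).natDegree_mul (hs.pow 2), hd.natDegree_pow, hs.natDegree_pow, hs', hd']; ring
        have h1 : (C l * F * n ^ 2 * c ^ 2).natDegree ≤ 0 + 3 + 2 * (2 * N - 2) + 2 * (2 * N) := by
          refine natDegree_mul_le_of_le (natDegree_mul_le_of_le
            (natDegree_mul_le_of_le (by simp) hF) ?_) ?_
          · exact natDegree_pow_le_of_le 2 hn
          · exact natDegree_pow_le_of_le 2 hc'.le
        omega
      · exact absurd rfl hi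
    · simp only [Matrix.cons_val]
      have h1 : (2 * n * s * c * d).natDegree ≤ 0 + (2 * N - 2) + 2 * N + 2 * N + 2 * N := by
        refine natDegree_mul_le_of_le (natDegree_mul_le_of_le (natDegree_mul_le_of_le
          (natDegree_mul_le_of_le (by simp) hn) hs'.le) hc'.le) hd'.le
      omega

end LP

section Bound
open NumberField
variable {K : Type*} [Field K] [NumberField K]

theorem pn_pow_le {p : (𝓞 K)[X]} {B : ℝ} (h : pn p ≤ B) {n : ℕ} (hn : n ≠ 0) :
    pn (p ^ n) ≤ B ^ n := by
  obtain ⟨n, rfl⟩ := Nat.exists_eq_succ_of_ne_zero hn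
  clear hn
  induction n with
  | zero => simpa using h
  | succ n ih =>
    rw [pow_succ, pow_succ B]
    exact (pn_mul_le _ _).trans (mul_le_mul ih h (pn_nonneg _) ((pn_nonneg _).trans ih))

theorem pn_mul_le_of {p q : (𝓞 K)[X]} {A B : ℝ} (h : pn p ≤ A) (h' : pn q ≤ B) :
    pn (p * q) ≤ A * B :=
  (pn_mul_le _ _).trans (mul_le_mul h h' (pn_nonneg _) ((pn_nonneg _).trans h))

theorem lp_bound (k l : 𝓞 K) : ∃ M : ℝ, 1 ≤ M ∧ ∀ r i, pn (lp k l r i) ≤ M ^ 4 ^ r := by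
  -- `L` bounds all the fixed polynomials occurring in the recursion
  obtain ⟨L, hL1, hkl, hk, hl, hF, h2, h0⟩ : ∃ L : ℝ, 1 ≤ L ∧ pn (C (k * l)) ≤ L ∧ pn (C k) ≤ L ∧
      pn (C l) ≤ L ∧ pn (cubic k l) ≤ L ∧ pn (2 : (𝓞 K)[X]) ≤ L ∧ ∀ i, pn (lp k l 0 i) ≤ L := by
    have := pn_nonneg (C (k * l)); have := pn_nonneg (C k); have := pn_nonneg (C l)
    have := pn_nonneg (cubic k l); have := pn_nonneg (2 : (𝓞 K)[X])
    have h : ∀ i, 0 ≤ pn (lp k l 0 i) := fun i ↦ pn_nonneg _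
    have hs : 0 ≤ ∑ i, pn (lp k l 0 i) := Finset.sum_nonneg fun i _ ↦ h i
    refine ⟨1 + pn (C (k * l)) + pn (C k) + pn (C l) + pn (cubic k l) + pn (2 : (𝓞 K)[X]) +
      ∑ i, pn (lp k l 0 i), by linarith, by linarith, by linarith, by linarith, by linarith,
      by linarith, fun i ↦ ?_⟩
    have := Finset.single_le_sum (f := fun i ↦ pn (lp k l 0 i)) (fun i _ ↦ h i) (Finset.mem_univ i)
    linarith
  -- induction on `pn (lp r i) * (2 L ^ 3) ≤ (2 L ^ 4) ^ (4 ^ r)`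
  have hL0 : 0 < L := by linarith
  have key : ∀ r i, pn (lp k l r i) * (2 * L ^ 3) ≤ (2 * L ^ 4) ^ 4 ^ r := by
    intro r
    induction r with
    | zero =>
      intro i
      calc _ ≤ L * (2 * L ^ 3) := by gcongr; exact h0 i
        _ = _ := by ring
    | succ r ih =>
      set B := (2 * L ^ 4) ^ 4 ^ r with hB
      have hBpos : 0 < B := by positivity
      set b := B / (2 * L ^ 3) with hb
      have hb0 : 0 < b := by positivity
      have ih' : ∀ i, pn (lp k l r i) ≤ b := fun i ↦ by
        rw [hb, le_div_iff₀ (by positivity)]; exact ih i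
      have hbb : B = b * (2 * L ^ 3) := by rw [hb]; field_simp
      have e : (2 * L ^ 4) ^ 4 ^ (r + 1) = B ^ 4 := by rw [hB, ← pow_mul, ← pow_succ]
      have hs := ih' 0
      have hc := ih' 1
      have hd := ih' 2
      have hn := ih' 3
      have hL3 : L ≤ L ^ 3 := le_self_pow₀ hL1 (by norm_num)
      have hL2 : L ^ 2 ≤ L ^ 3 := pow_le_pow_right₀ hL1 (by norm_num)
      have h13 : 1 ≤ L ^ 3 := one_le_pow₀ hL1
      have suff : ∀ i, pn (lp k l (r + 1) i) ≤ 2 * L ^ 3 * b ^ 4 := by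
        intro i
        simp only [lp]
        generalize lp k l r 0 = s at *
        generalize lp k l r 1 = c at *
        generalize lp k l r 2 = d at *
        generalize lp k l r 3 = n at *
        have hb4 : 0 < b ^ 4 := by positivity
        fin_cases i
        · refine (pn_sub_le _ _).trans ?_
          have h1 := pn_pow_le hs (n := 4) (by norm_num)
          have h2 := pn_mul_le_of (pn_mul_le_of hkl (pn_pow_le hF (n := 2) (by norm_num)))
            (pn_pow_le hn (n := 4) (by norm_num))
          nlinarith
        · refine (pn_sub_le _ _).trans ?_
          have h1 := pn_mul_le_of (pn_pow_le hc (n := 2) (by norm_num))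
            (pn_pow_le hs (n := 2) (by norm_num))
          have h2 := pn_mul_le_of (pn_mul_le_of (pn_mul_le_of hk hF)
            (pn_pow_le hn (n := 2) (by norm_num))) (pn_pow_le hd (n := 2) (by norm_num))
          nlinarith
        · refine (pn_sub_le _ _).trans ?_
          have h1 := pn_mul_le_of (pn_pow_le hd (n := 2) (by norm_num))
            (pn_pow_le hs (n := 2) (by norm_num))
          have h2 := pn_mul_le_of (pn_mul_le_of (pn_mul_le_of hl hF)
            (pn_pow_le hn (n := 2) (by norm_num))) (pn_pow_le hc (n := 2) (by norm_num))
          nlinarith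
        · have h1 := pn_mul_le_of (pn_mul_le_of (pn_mul_le_of (pn_mul_le_of h2 hn) hs) hc) hd
          simp only [Fin.reduceFinMk, Matrix.cons_val]
          nlinarith
      intro i
      rw [e, hbb]
      calc _ ≤ 2 * L ^ 3 * b ^ 4 * (2 * L ^ 3) := by gcongr; exact suff i
        _ ≤ 2 * L ^ 3 * b ^ 4 * (2 * L ^ 3) * (2 * L ^ 3) ^ 2 := by
          refine le_mul_of_one_le_right (by positivity) (one_le_pow₀ ?_)
          linarith
        _ = _ := by ring
  have h24 : 1 ≤ 2 * L ^ 4 := by have := one_le_pow₀ hL1 (n := 4); linarith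
  refine ⟨2 * L ^ 4, h24, fun r i ↦ le_trans ?_ (key r i)⟩
  refine le_mul_of_one_le_right (pn_nonneg _) ?_
  have := one_le_pow₀ hL1 (n := 3)
  linarith

end Bound
end HE

/-! ### Siegel's lemma -/

namespace HE
set_option linter.unusedSectionVars false
open Polynomial NumberField Module

section Siegel
variable {K : Type*} [Field K] [NumberField K]

/-- Mathlib's Siegel lemma with an unnamed constant. -/
theorem siegel_const (K : Type*) [Field K] [NumberField K] : ∃ c : ℝ, 1 ≤ c ∧
    ∀ {α β : Type} [Fintype α] [Fintype β] (a : Matrix α β (𝓞 K)) {A : ℝ}, 1 ≤ A → a ≠ 0 →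
      0 < Fintype.card α → Fintype.card α < Fintype.card β →
      (∀ k l, house (a k l : K) ≤ A) → ∃ ξ : β → 𝓞 K, ξ ≠ 0 ∧ a.mulVec ξ = 0 ∧
        ∀ l, house (ξ l : K) ≤ c * (c * Fintype.card β * A) ^
          ((Fintype.card α : ℝ) / (Fintype.card β - Fintype.card α)) := by
  classical
  obtain ⟨c, hc⟩ : ∃ c : ℝ, ∀ {α β : Type} [Fintype α] [Fintype β] (a : Matrix α β (𝓞 K)) {A : ℝ},
      a ≠ 0 → 0 < Fintype.card α → Fintype.card α < Fintype.card β →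
      (∀ k l, house (a k l : K) ≤ A) → ∃ ξ : β → 𝓞 K, ξ ≠ 0 ∧ a.mulVec ξ = 0 ∧
        ∀ l, house (ξ l : K) ≤ c * (c * Fintype.card β * A) ^
          ((Fintype.card α : ℝ) / (Fintype.card β - Fintype.card α)) :=
    ⟨_, fun a _ ha h0 hlt hA ↦ house.exists_ne_zero_int_vec_house_le K a ha h0 hlt rfl hA rfl⟩
  refine ⟨max |c| 1, le_max_right _ _, fun {α β} _ _ a A hA1 ha h0 hlt hA ↦ ?_⟩
  obtain ⟨ξ, h1, h2, h3⟩ := hc a ha h0 hlt hA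
  refine ⟨ξ, h1, h2, fun l ↦ (h3 l).trans ?_⟩
  have hpos : (0 : ℝ) < Fintype.card β - Fintype.card α := sub_pos.2 (by exact_mod_cast hlt)
  have hexp : (0 : ℝ) ≤ (Fintype.card α : ℝ) / (Fintype.card β - Fintype.card α) := by positivity
  refine (le_abs_self _).trans ?_
  rw [abs_mul]
  refine mul_le_mul (le_max_left _ _) ((Real.abs_rpow_le_abs_rpow _ _).trans ?_) (abs_nonneg _)
    (by positivity)
  refine Real.rpow_le_rpow (abs_nonneg _) ?_ hexp
  rw [abs_mul, abs_mul, abs_of_nonneg (a := A) (by linarith), Nat.abs_cast]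
  gcongr
  exact le_max_left _ _

/-- A Siegel lemma in terms of the dimension of the solution space over the field. -/
theorem siegel_ker (K : Type*) [Field K] [NumberField K] (e : ℕ) : ∃ c : ℝ, 1 ≤ c ∧
    ∀ {α β : Type} [Fintype α] [Fintype β] [DecidableEq β] (Φ : (β → 𝓞 K) →ₗ[𝓞 K] (α → 𝓞 K))
      (Ψ : (β → K) →ₗ[K] (α → K)) {A : ℝ}, 1 ≤ A →
      (∀ x i, Ψ (fun b ↦ (x b : K)) i = Φ x i) →
      (∀ b i, house (Φ (Pi.single b 1) i : K) ≤ A) →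
      0 < finrank K Ψ.ker → Fintype.card β ≤ e * finrank K Ψ.ker →
      ∃ ξ : β → 𝓞 K, ξ ≠ 0 ∧ Φ ξ = 0 ∧ ∀ l, house (ξ l : K) ≤ c * (c * Fintype.card β * A) ^ e := by
  obtain ⟨c, hc1, hc⟩ := siegel_const K
  refine ⟨c, hc1, fun {α β} _ _ _ Φ Ψ A hA1 hcomp hA hpos hcard ↦ ?_⟩
  let row : α → β → 𝓞 K := fun i b ↦ Φ (Pi.single b 1) i
  have hΦ : ∀ x i, Φ x i = ∑ b, row i b * x b := by
    intro x i
    have : x = ∑ b, x b • Pi.single b (1 : 𝓞 K) := by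
      ext b; simp [Finset.sum_apply, Pi.single_apply]
    conv_lhs => rw [this]
    simp [row, mul_comm, Finset.sum_apply]
  have hΨ : ∀ x i, Ψ x i = ∑ b, (row i b : K) * x b := by
    intro x i
    have : x = ∑ b, x b • (fun b' ↦ ((Pi.single b (1 : 𝓞 K) : β → 𝓞 K) b' : K)) := by
      ext b; simp [Finset.sum_apply, Pi.single_apply]
    conv_lhs => rw [this]
    simp only [map_sum, map_smul, Finset.sum_apply, Pi.smul_apply, hcomp, smul_eq_mul]
    exact Finset.sum_congr rfl fun b _ ↦ mul_comm _ _
  let rowK : α → β → K := fun i b ↦ (row i b : K)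
  have hrank : finrank K (Submodule.span K (Set.range rowK)) + finrank K Ψ.ker = Fintype.card β := by
    have h1 := Matrix.rank_eq_finrank_span_row (Matrix.of rowK)
    have h2 := LinearMap.finrank_range_add_finrank_ker (Matrix.of rowK).mulVecLin
    have h3 : (Matrix.of rowK).mulVecLin = Ψ := by
      refine LinearMap.ext fun x ↦ funext fun i ↦ ?_
      rw [hΨ]; rfl
    rw [← Matrix.rank, h1, h3, finrank_fintype_fun_eq_card] at h2
    exact h2
  obtain ⟨p, f, hf, hspan, hrank⟩ : ∃ (p : ℕ) (f : Fin p → β → K), (∀ i, f i ∈ Set.range rowK) ∧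
      Submodule.span K (Set.range f) = Submodule.span K (Set.range rowK) ∧
      p + finrank K Ψ.ker = Fintype.card β := by
    obtain ⟨f, hf, hspan, -⟩ := Submodule.exists_fun_fin_finrank_span_eq K (Set.range rowK)
    exact ⟨_, f, hf, hspan, hrank⟩
  choose g hg using hf
  have base : (1 : ℝ) ≤ c * Fintype.card β * A := by
    have : (1 : ℝ) ≤ Fintype.card β := by
      have : 0 < Fintype.card β := by omega
      exact_mod_cast this
    exact one_le_mul_of_one_le_of_one_le (one_le_mul_of_one_le_of_one_le hc1 this) hA1
  -- a vector killed by the selected rows is killed by all rows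
  have hall : ∀ ξ : β → 𝓞 K, (∀ k, ∑ b, row (g k) b * ξ b = 0) → Φ ξ = 0 := by
    intro ξ hξ
    have : ∀ w ∈ Submodule.span K (Set.range rowK), ∑ b, w b * (ξ b : K) = 0 := by
      intro w hw
      rw [← hspan] at hw
      induction hw using Submodule.span_induction with
      | mem w hw =>
        obtain ⟨k, rfl⟩ := hw
        rw [← hg k]
        have := congrArg (algebraMap (𝓞 K) K) (hξ k)
        simpa [rowK] using this
      | zero => simp
      | add x y _ _ hx hy => simp [add_mul, Finset.sum_add_distrib, hx, hy]
      | smul a x _ hx => simp [mul_assoc, ← Finset.mul_sum, hx]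
    ext i
    have h := this (rowK i) (Submodule.subset_span ⟨i, rfl⟩)
    rw [hΦ]
    simpa [rowK] using h
  have hβ : Nonempty β := Fintype.card_pos_iff.1 (by omega)
  rcases Nat.eq_zero_or_pos p with h0 | h0
  · -- no equations at all
    refine ⟨fun _ ↦ 1, fun h ↦ ?_, hall _ fun k ↦ absurd k.2 (by omega), fun l ↦ ?_⟩
    · exact one_ne_zero (congrFun h hβ.some)
    · have h1 : house (((1 : 𝓞 K)) : K) = 1 := by simpa using house_intCast (K := K) 1
      rw [h1]
      exact one_le_mul_of_one_le_of_one_le hc1 (one_le_pow₀ base)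
  · by_cases ha : (fun k b ↦ row (g k) b : Matrix (Fin p) β (𝓞 K)) = 0
    · refine ⟨fun _ ↦ 1, fun h ↦ ?_, hall _ fun k ↦ ?_, fun l ↦ ?_⟩
      · exact one_ne_zero (congrFun h hβ.some)
      · exact Finset.sum_eq_zero fun b _ ↦ by
          have := congrFun (congrFun ha k) b
          rw [show row (g k) b = 0 from this, zero_mul]
      · have h1 : house (((1 : 𝓞 K)) : K) = 1 := by simpa using house_intCast (K := K) 1
        rw [h1]
        exact one_le_mul_of_one_le_of_one_le hc1 (one_le_pow₀ base)
    obtain ⟨ξ, h1, h2, h3⟩ := hc (fun k b ↦ row (g k) b : Matrix (Fin p) β (𝓞 K)) hA1 ha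
      (by simpa using h0) (by rw [Fintype.card_fin]; omega) (fun k l ↦ hA _ _)
    refine ⟨ξ, h1, hall ξ fun k ↦ congrFun h2 k, fun l ↦ (h3 l).trans ?_⟩
    refine mul_le_mul_of_nonneg_left ?_ (by linarith)
    rw [← Real.rpow_natCast _ e]
    refine Real.rpow_le_rpow_of_exponent_le base ?_
    have hR : (p : ℝ) + finrank K Ψ.ker = Fintype.card β := by exact_mod_cast hrank
    have hpR : (0 : ℝ) < finrank K Ψ.ker := by exact_mod_cast hpos
    rw [Fintype.card_fin, ← hR, add_sub_cancel_left, div_le_iff₀ hpR]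
    have : (Fintype.card β : ℝ) ≤ e * finrank K Ψ.ker := by exact_mod_cast hcard
    linarith

end Siegel
end HE

/-! ### The alternating form annihilated by `τ` -/

namespace HE
set_option linter.unusedSectionVars false
open Polynomial NumberField Module

/-- `ω` is an alternating form with `ω ∧ τ = 0`. -/
structure Wedge {R : Type*} [CommRing R] (ω : Fin 4 → Fin 4 → R) (τ : Fin 4 → R) : Prop where
  anti : ∀ U V, ω U V = -ω V U
  diag : ∀ U, ω U U = 0
  rel : ∀ U V W, ω U V * τ W + ω V W * τ U + ω W U * τ V = 0

section Dim
variable {F : Type*} [Field F]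

theorem exists_primitive (τ : Fin 4 → F[X]) (h3 : τ 3 ≠ 0) :
    ∃ (g : F[X]) (t u : Fin 4 → F[X]), g ≠ 0 ∧ (∀ i, τ i = g * t i) ∧ ∑ i, u i * t i = 1 := by
  let I := Ideal.span (Set.range τ)
  obtain ⟨g, hg⟩ := (IsPrincipalIdealRing.principal I).principal
  have hmem : ∀ i, g ∣ τ i := fun i ↦ by
    rw [← Ideal.mem_span_singleton]
    change τ i ∈ Submodule.span _ {g}
    rw [← hg]
    exact Ideal.subset_span ⟨i, rfl⟩
  choose t ht using hmem
  have hg0 : g ≠ 0 := by rintro rfl; exact h3 (by rw [ht 3, zero_mul])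
  have : g ∈ Ideal.span (Set.range τ) := by
    change g ∈ I
    rw [hg]; exact Ideal.mem_span_singleton_self g
  obtain ⟨u, hu⟩ := Ideal.mem_span_range_iff_exists_fun.1 this
  refine ⟨g, t, u, hg0, ht, ?_⟩
  refine mul_left_cancel₀ hg0 ?_
  rw [mul_one, Finset.mul_sum]
  conv_rhs => rw [← hu]
  exact Finset.sum_congr rfl fun i _ ↦ by rw [ht i]; ring

theorem degree_mul_lt_of {a b : F[X]} {n d : ℕ} (ha : a.degree < n) (hb : b.degree ≤ d) :
    (a * b).degree < ((n + d : ℕ) : WithBot ℕ) := by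
  by_cases h0 : a = 0
  · simp [h0]
  by_cases h1 : b = 0
  · simp [h1]
  rw [degree_eq_natDegree h0] at ha
  rw [degree_eq_natDegree h1] at hb
  rw [degree_eq_natDegree (mul_ne_zero h0 h1), natDegree_mul h0 h1]
  norm_cast at *
  omega

/-- The alternating forms `ω` with entries of degree less than `m` and `ω ∧ τ = 0` form a space of
dimension at least `3 m - 2 D`: after division by the greatest common divisor of its entries, `τ`
becomes primitive, and such forms are the products `f ∧ τ`. -/
theorem omega_dim (τ : Fin 4 → F[X]) (h3 : τ 3 ≠ 0)
    (hdeg : ∀ i, (τ i).natDegree ≤ (τ 3).natDegree) {D : ℕ} (hD : (τ 3).natDegree ≤ D) (m : ℕ)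
    (S : Submodule F (Fin 4 × Fin 4 × Fin m → F))
    (hS : ∀ y : Fin 4 × Fin 4 × Fin m → F,
      Wedge (fun U V ↦ ∑ j : Fin m, monomial (j : ℕ) (y (U, V, j))) τ → y ∈ S) :
    3 * m ≤ finrank F S + 2 * D := by
  obtain ⟨g, t, u, hg0, ht, hu⟩ := exists_primitive τ h3
  have ht3 : t 3 ≠ 0 := by rintro h; exact h3 (by rw [ht 3, h, mul_zero])
  set d := (t 3).natDegree with hd
  have hdD : d ≤ D := by
    refine le_trans ?_ hD
    rw [ht 3, natDegree_mul hg0 ht3]; omega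
  have htd : ∀ i, (t i).natDegree ≤ d := by
    intro i
    by_cases h : t i = 0
    · simp [h]
    have := hdeg i
    rw [ht i, ht 3, natDegree_mul hg0 h, natDegree_mul hg0 ht3] at this
    omega
  have htd' : ∀ i, (t i).degree ≤ d := fun i ↦ degree_le_of_natDegree_le (htd i)
  -- `f : Fin 4 → F[X]` with `f₀, f₁, f₂` of degree `< d + m` and `f₃` of degree `< d`
  let E := (Fin 3 → degreeLT F (d + m)) × degreeLT F d
  let q : Fin 3 → E →ₗ[F] F[X] := fun i ↦
    LinearMap.mulRight F (t 3) ∘ₗ (degreeLT F (d + m)).subtype ∘ₗ LinearMap.proj i ∘ₗ LinearMap.fst F _ _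
     - LinearMap.mulRight F (t i.castSucc) ∘ₗ (degreeLT F d).subtype ∘ₗ LinearMap.snd F _ _
  have hq : ∀ i x, q i x = (x.1 i : F[X]) * t 3 - (x.2 : F[X]) * t i.castSucc := fun i x ↦ rfl
  let L : E →ₗ[F] (Fin 3 × Fin (2 * d) → F) :=
    LinearMap.pi fun p ↦ lcoeff F (m + p.2) ∘ₗ q p.1
  have hE : finrank F E = 3 * (d + m) + d := by
    have h1 : ∀ n, finrank F (degreeLT F n) = n := fun n ↦ by
      rw [(degreeLTEquiv F n).finrank_eq]; simp
    have : ∀ n, Module.Finite F (degreeLT F n) := fun n ↦ Module.Finite.equiv (degreeLTEquiv F n).symm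
    rw [finrank_prod, finrank_pi_fintype]; simp [h1]
  have hEf : FiniteDimensional F E := by
    have : ∀ n, Module.Finite F (degreeLT F n) := fun n ↦ Module.Finite.equiv (degreeLTEquiv F n).symm
    infer_instance
  have hker : 3 * m ≤ finrank F L.ker + 2 * d := by
    have h1 := LinearMap.finrank_range_add_finrank_ker L
    have h2 : finrank F L.range ≤ 6 * d := by
      refine (Submodule.finrank_le _).trans ?_
      simp; omega
    omega
  -- the wedge `f ∧ t`
  let fv : L.ker → Fin 4 → F[X] := fun x ↦ ![x.1.1 0, x.1.1 1, x.1.1 2, x.1.2]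
  let W : L.ker → Fin 4 → Fin 4 → F[X] := fun x U V ↦ fv x U * t V - fv x V * t U
  have hWq : ∀ x (i : Fin 3), W x i.castSucc 3 = q i x.1 := by
    intro x i; fin_cases i <;> rfl
  have hqdeg : ∀ (x : L.ker) i, (q i x.1).degree < m := by
    intro x i
    rw [degree_lt_iff_coeff_zero]
    intro n hn
    by_cases h : n < m + 2 * d
    · have h0 := congrFun (LinearMap.mem_ker.1 x.2) (i, ⟨n - m, by omega⟩)
      simp only [L, LinearMap.pi_apply, LinearMap.comp_apply, lcoeff_apply, Pi.zero_apply] at h0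
      rwa [show m + (n - m) = n by omega] at h0
    · have hb : (q i x.1).degree < ((m + 2 * d : ℕ) : WithBot ℕ) := by
        rw [hq]
        refine (degree_sub_le _ _).trans_lt (max_lt ?_ ?_)
        · have := degree_mul_lt_of (mem_degreeLT.1 (x.1.1 i).2) (htd' 3)
          rwa [show d + m + d = m + 2 * d by ring] at this
        · refine (degree_mul_lt_of (mem_degreeLT.1 x.1.2.2) (htd' i.castSucc)).trans_le ?_
          exact_mod_cast (by omega : d + d ≤ m + 2 * d)
      rw [degree_lt_iff_coeff_zero] at hb
      exact hb n (by omega)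
  have hWdeg : ∀ x U V, (W x U V).degree < m := by
    intro x U V
    have hanti : ∀ U V, W x U V = -W x V U := fun U V ↦ by simp only [W]; ring
    have h3 : ∀ i : Fin 3, (W x i.castSucc 3).degree < m := fun i ↦ by rw [hWq]; exact hqdeg x i
    induction V using Fin.lastCases with
    | last =>
      induction U using Fin.lastCases with
      | last =>
        rw [show W x (Fin.last 3) (Fin.last 3) = 0 by simp only [W]; ring, degree_zero]
        exact WithBot.bot_lt_coe m
      | cast i => exact h3 i
    | cast j =>
      induction U using Fin.lastCases with
      | last => rw [hanti, degree_neg]; exact h3 j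
      | cast i =>
        have e : W x i.castSucc j.castSucc * t 3 =
            W x i.castSucc 3 * t j.castSucc - W x j.castSucc 3 * t i.castSucc := by
          simp only [W]; ring
        have hlt : (W x i.castSucc j.castSucc * t 3).degree < ((m + d : ℕ) : WithBot ℕ) := by
          rw [e]
          exact (degree_sub_le _ _).trans_lt (max_lt (degree_mul_lt_of (h3 i) (htd' _))
            (degree_mul_lt_of (h3 j) (htd' _)))
        by_cases h0 : W x i.castSucc j.castSucc = 0
        · rw [h0, degree_zero]; exact WithBot.bot_lt_coe m
        rw [degree_eq_natDegree (mul_ne_zero h0 ht3), natDegree_mul h0 ht3] at hlt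
        rw [degree_eq_natDegree h0]
        norm_cast at *
        omega
  have fv_add : ∀ x y U, fv (x + y) U = fv x U + fv y U := by
    intro x y U; fin_cases U <;> rfl
  have fv_smul : ∀ (c : F) x U, fv (c • x) U = c • fv x U := by
    intro c x U; fin_cases U <;> rfl
  let Y : L.ker →ₗ[F] (Fin 4 × Fin 4 × Fin m → F) :=
    { toFun := fun x p ↦ (W x p.1 p.2.1).coeff p.2.2
      map_add' := fun x y ↦ by
        ext ⟨U, V, j⟩
        simp only [W, fv_add, Pi.add_apply, ← coeff_add]
        congr 1; ring
      map_smul' := fun c x ↦ by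
        ext ⟨U, V, j⟩
        simp only [W, fv_smul, Pi.smul_apply, ← coeff_smul, RingHom.id_apply]
        congr 1; simp only [smul_mul_assoc, smul_sub] }
  have hYW : ∀ x U V, ∑ j : Fin m, monomial (j : ℕ) (Y x (U, V, j)) = W x U V := by
    intro x U V
    ext n
    have hY : ∀ j : Fin m, Y x (U, V, j) = (W x U V).coeff j := fun j ↦ rfl
    simp only [hY, finsetSum_coeff, coeff_monomial]
    by_cases hn : n < m
    · rw [Finset.sum_eq_single ⟨n, hn⟩] <;> simp +contextual [Fin.ext_iff]
    · rw [(degree_lt_iff_coeff_zero _ _).1 (hWdeg x U V) n (by omega)]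
      exact Finset.sum_eq_zero fun j _ ↦ if_neg (by have := j.2; omega)
  have hYS : ∀ x, Y x ∈ S := by
    intro x
    refine hS _ ⟨fun U V ↦ ?_, fun U ↦ ?_, fun U V T ↦ ?_⟩
    · rw [hYW, hYW]; simp only [W]; ring
    · rw [hYW]; simp only [W]; ring
    · rw [hYW, hYW, hYW, ht, ht, ht]; simp only [W]; ring
  have hinj : Function.Injective (Y.codRestrict S hYS) := by
    rw [injective_iff_map_eq_zero]
    intro x hx
    have hY0 : Y x = 0 := congrArg Subtype.val hx
    have hW0 : ∀ U V, fv x U * t V = fv x V * t U := by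
      intro U V
      have := hYW x U V
      rw [hY0] at this
      simp only [Pi.zero_apply, map_zero, Finset.sum_const_zero] at this
      exact sub_eq_zero.1 this.symm
    -- Bezout: `t 3 ∣ f 3`
    have hdvd : fv x 3 = (∑ i, u i * fv x i) * t 3 := by
      rw [← mul_one (fv x 3), ← hu, Finset.mul_sum, Finset.sum_mul]
      exact Finset.sum_congr rfl fun i _ ↦ by linear_combination u i * hW0 3 i
    have h30 : fv x 3 = 0 := by
      refine eq_zero_of_dvd_of_degree_lt ⟨_, by rw [hdvd]; ring⟩ ?_ (p := t 3)
      rw [degree_eq_natDegree ht3]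
      exact mem_degreeLT.1 x.1.2.2
    have h0 : ∀ U, fv x U = 0 := fun U ↦ by
      have := hW0 U 3
      rw [h30, zero_mul] at this
      exact (mul_eq_zero.1 this).resolve_right ht3
    refine Subtype.ext (Prod.ext (funext fun i ↦ Subtype.ext ?_) (Subtype.ext (h0 3)))
    fin_cases i
    exacts [h0 0, h0 1, h0 2]
  have := LinearMap.finrank_le_finrank_of_injective hinj
  omega

end Dim

section Sys
variable {R : Type*} [CommRing R]

/-- The polynomials with coefficient vector `x`. -/
noncomputable def pol {m : ℕ} (x : Fin 4 × Fin 4 × Fin m → R) (U V : Fin 4) : R[X] :=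
  ∑ j : Fin m, monomial (j : ℕ) (x (U, V, j))

theorem pol_add {m : ℕ} (x y : Fin 4 × Fin 4 × Fin m → R) (U V : Fin 4) :
    pol (x + y) U V = pol x U V + pol y U V := by
  simp [pol, Finset.sum_add_distrib]

theorem pol_smul {m : ℕ} (c : R) (x : Fin 4 × Fin 4 × Fin m → R) (U V : Fin 4) :
    pol (c • x) U V = c • pol x U V := by
  simp [pol, Finset.smul_sum, smul_monomial]

theorem pol_coeff {m : ℕ} (x : Fin 4 × Fin 4 × Fin m → R) (U V : Fin 4) (j : Fin m) :
    (pol x U V).coeff j = x (U, V, j) := by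
  simp only [pol, finsetSum_coeff, coeff_monomial]
  rw [Finset.sum_eq_single j] <;> simp +contextual [Fin.ext_iff]

theorem pol_natDegree {m : ℕ} (hm : 0 < m) (x : Fin 4 × Fin 4 × Fin m → R) (U V : Fin 4) :
    (pol x U V).natDegree ≤ m - 1 := by
  refine natDegree_sum_le_of_forall_le _ _ fun j _ ↦ (natDegree_monomial_le _).trans ?_
  have := j.2
  omega

theorem pol_map {S : Type*} [CommRing S] (f : R →+* S) {m : ℕ} (x : Fin 4 × Fin 4 × Fin m → R)
    (U V : Fin 4) : pol (fun b ↦ f (x b)) U V = (pol x U V).map f := by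
  simp [pol, Polynomial.map_sum]

/-- The linear system expressing `Wedge (pol x) τ`, up to degree `n`. -/
noncomputable def wsys (τ : Fin 4 → R[X]) (m n : ℕ) : (Fin 4 × Fin 4 × Fin m → R) →ₗ[R]
    ((Fin 4 × Fin 4 × Fin m) ⊕ (Fin 4 × Fin 4 × Fin 4 × Fin n) → R) where
  toFun x := Sum.elim (fun p ↦ x p + x (p.2.1, p.1, p.2.2)) fun p ↦
    (pol x p.1 p.2.1 * τ p.2.2.1 + pol x p.2.1 p.2.2.1 * τ p.1 +
      pol x p.2.2.1 p.1 * τ p.2.1).coeff p.2.2.2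
  map_add' x y := by
    ext (p | p)
    · simp only [Sum.elim_inl, Pi.add_apply]; ring
    · simp only [Sum.elim_inr, Pi.add_apply, pol_add, ← coeff_add]
      congr 1; ring
  map_smul' c x := by
    ext (p | p)
    · simp only [Sum.elim_inl, Pi.smul_apply, smul_eq_mul, RingHom.id_apply]; ring
    · simp only [Sum.elim_inr, Pi.smul_apply, pol_smul, ← coeff_smul, RingHom.id_apply]
      congr 1; simp only [smul_mul_assoc, smul_add]

theorem wsys_map {S : Type*} [CommRing S] (f : R →+* S) (τ : Fin 4 → R[X]) (m n : ℕ)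
    (x : Fin 4 × Fin 4 × Fin m → R) (i) :
    wsys (fun i ↦ (τ i).map f) m n (fun b ↦ f (x b)) i = f (wsys τ m n x i) := by
  rcases i with p | p
  · simp [wsys]
  · simp only [wsys, LinearMap.coe_mk, AddHom.coe_mk, Sum.elim_inr, pol_map, ← Polynomial.map_mul,
      ← Polynomial.map_add, coeff_map]

theorem wsys_eq_zero_of_wedge {τ : Fin 4 → R[X]} {m : ℕ} (n : ℕ) {x : Fin 4 × Fin 4 × Fin m → R}
    (h : Wedge (pol x) τ) : wsys τ m n x = 0 := by
  ext (p | p)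
  · simp only [wsys, LinearMap.coe_mk, AddHom.coe_mk, Sum.elim_inl, Pi.zero_apply]
    rw [show x p = (pol x p.1 p.2.1).coeff p.2.2 from (pol_coeff x _ _ _).symm, ← pol_coeff x,
      ← coeff_add, h.anti]
    simp
  · simp only [wsys, LinearMap.coe_mk, AddHom.coe_mk, Sum.elim_inr, Pi.zero_apply, h.rel, coeff_zero]

theorem wedge_of_wsys_eq_zero [IsDomain R] [CharZero R] {τ : Fin 4 → R[X]} {m D : ℕ} (hm : 0 < m)
    (hτ : ∀ i, (τ i).natDegree ≤ D) {x : Fin 4 × Fin 4 × Fin m → R}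
    (h : wsys τ m (m + D) x = 0) : Wedge (pol x) τ := by
  have hanti : ∀ U V, pol x U V = -pol x V U := by
    intro U V
    simp only [pol, ← Finset.sum_neg_distrib, ← map_neg]
    refine Finset.sum_congr rfl fun j _ ↦ ?_
    have := congrFun h (Sum.inl (U, V, j))
    simp only [wsys, LinearMap.coe_mk, AddHom.coe_mk, Sum.elim_inl, Pi.zero_apply] at this
    rw [eq_neg_of_add_eq_zero_left this]
  refine ⟨hanti, fun U ↦ ?_, fun U V W ↦ ?_⟩
  · have h2 : (2 : R[X]) * pol x U U = 0 := by linear_combination hanti U U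
    exact (mul_eq_zero.1 h2).resolve_left two_ne_zero
  · ext k
    by_cases hk : k < m + D
    · exact congrFun h (Sum.inr (U, V, W, ⟨k, hk⟩))
    · have hb : ∀ U V W, (pol x U V * τ W).natDegree ≤ m - 1 + D := fun U V W ↦
        natDegree_mul_le_of_le (pol_natDegree hm _ _ _) (hτ _)
      rw [coeff_zero]
      refine coeff_eq_zero_of_natDegree_lt (lt_of_le_of_lt (natDegree_add_le_of_degree_le
        (natDegree_add_le_of_degree_le (hb _ _ _) (hb _ _ _)) (hb _ _ _)) (by omega))

end Sys

section Final
variable {K : Type*} [Field K] [NumberField K]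

theorem nrm_one : nrm (1 : 𝓞 K) = finrank ℚ K := by
  simp [nrm, NumberField.Embeddings.card]

theorem pn_pol_single {m : ℕ} (b : Fin 4 × Fin 4 × Fin m) (U V : Fin 4) :
    pn (pol (Pi.single b (1 : 𝓞 K)) U V) ≤ finrank ℚ K := by
  obtain ⟨P, Q, j⟩ := b
  refine (pn_sum_le _ _).trans ?_
  rw [Finset.sum_eq_single j]
  · rw [pn_monomial, Pi.single_apply]
    split_ifs
    · rw [nrm_one]
    · simp
  · intro i _ hi
    rw [Pi.single_apply, if_neg (by simp [hi])]
    simp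
  · simp

/-- Siegel's lemma yields a nonzero alternating form of degree about `5 D / 6` and small size with
`ω ∧ τ = 0`. Any degree above `2 D / 3` is possible; the value `5 D / 6` is small enough for the
final comparison of heights. -/
theorem exists_omega (K : Type*) [Field K] [NumberField K] {M : ℝ} (hM : 1 ≤ M) :
    ∃ C : ℝ, 1 ≤ C ∧ ∀ (D m : ℕ) (τ : Fin 4 → (𝓞 K)[X]), 0 < D → 6 * m = 5 * D + 4 → τ 3 ≠ 0 →
      (∀ i, (τ i).natDegree ≤ (τ 3).natDegree) → (τ 3).natDegree ≤ D → (∀ i, pn (τ i) ≤ M ^ D) →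
      ∃ ω : Fin 4 → Fin 4 → (𝓞 K)[X], Wedge ω τ ∧ (∃ U V, ω U V ≠ 0) ∧
        (∀ U V, (ω U V).natDegree ≤ m - 1) ∧ ∀ U V, pn (ω U V) ≤ C ^ D := by
  obtain ⟨c, hc1, hc⟩ := siegel_ker K 27
  set h : ℝ := (finrank ℚ K : ℝ) with hh
  have h1 : 1 ≤ h := by rw [hh]; exact_mod_cast finrank_pos (R := ℚ) (M := K)
  have hc0 : 0 < c := by linarith
  have hh0 : 0 < h := by linarith
  have hM0 : 0 < M := by linarith
  refine ⟨h * c * (48 * c * h) ^ 27 * (4 ^ 28 * M ^ 27), ?_, ?_⟩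
  · refine one_le_mul_of_one_le_of_one_le (one_le_mul_of_one_le_of_one_le
      (one_le_mul_of_one_le_of_one_le h1 hc1) (one_le_pow₀ ?_))
      (one_le_mul_of_one_le_of_one_le (by norm_num) (one_le_pow₀ hM))
    nlinarith
  intro D m τ hD hm h3 hdeg hdeg3 hpn
  have hm0 : 0 < m := by omega
  have hMD : 1 ≤ M ^ D := one_le_pow₀ hM
  let τK : Fin 4 → K[X] := fun i ↦ (τ i).map (algebraMap (𝓞 K) K)
  have hinj : Function.Injective (algebraMap (𝓞 K) K) := RingOfIntegers.coe_injective
  have hdim := omega_dim τK ((Polynomial.map_ne_zero_iff hinj).2 h3)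
    (fun i ↦ by simpa only [τK, natDegree_map_eq_of_injective hinj] using hdeg i) (D := D)
    (by simpa only [τK, natDegree_map_eq_of_injective hinj] using hdeg3) m
    (wsys τK m (m + D)).ker (fun y hy ↦ LinearMap.mem_ker.2 (wsys_eq_zero_of_wedge _ hy))
  obtain ⟨ξ, hξ0, hξ, hb⟩ := hc (wsys τ m (m + D)) (wsys τK m (m + D)) (A := 3 * h * M ^ D)
    (by nlinarith) (fun x i ↦ wsys_map (algebraMap (𝓞 K) K) τ m (m + D) x i) (by
      intro b i
      refine (house_le_nrm _).trans ?_
      rcases i with p | p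
      · simp only [wsys, LinearMap.coe_mk, AddHom.coe_mk, Sum.elim_inl]
        have hs : ∀ b b' : Fin 4 × Fin 4 × Fin m,
            nrm ((Pi.single b 1 : Fin 4 × Fin 4 × Fin m → 𝓞 K) b') ≤ h := by
          intro b b'
          rw [Pi.single_apply]
          split_ifs
          · rw [nrm_one]
          · simpa using hh0.le
        refine (nrm_add_le _ _).trans ?_
        have := hs b p
        have := hs b (p.2.1, p.1, p.2.2)
        nlinarith
      · simp only [wsys, LinearMap.coe_mk, AddHom.coe_mk, Sum.elim_inr]
        refine (nrm_coeff_le _ _).trans ?_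
        have hs : ∀ U V W, pn (pol (Pi.single b (1 : 𝓞 K)) U V * τ W) ≤ h * M ^ D := fun U V W ↦
          pn_mul_le_of (pn_pol_single b U V) (hpn W)
        have := pn_add_le (pol (Pi.single b (1 : 𝓞 K)) p.1 p.2.1 * τ p.2.2.1 +
          pol (Pi.single b (1 : 𝓞 K)) p.2.1 p.2.2.1 * τ p.1)
          (pol (Pi.single b (1 : 𝓞 K)) p.2.2.1 p.1 * τ p.2.1)
        have := pn_add_le (pol (Pi.single b (1 : 𝓞 K)) p.1 p.2.1 * τ p.2.2.1)
          (pol (Pi.single b (1 : 𝓞 K)) p.2.1 p.2.2.1 * τ p.1)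
        have := hs p.1 p.2.1 p.2.2.1
        have := hs p.2.1 p.2.2.1 p.1
        have := hs p.2.2.1 p.1 p.2.1
        linarith) (by omega) (by simp; omega)
  refine ⟨pol ξ, wedge_of_wsys_eq_zero hm0 (fun i ↦ (hdeg i).trans hdeg3) hξ, ?_,
    pol_natDegree hm0 ξ, fun U V ↦ ?_⟩
  · by_contra hcon
    push Not at hcon
    refine hξ0 (funext fun ⟨U, V, j⟩ ↦ ?_)
    rw [← pol_coeff ξ, hcon, coeff_zero, Pi.zero_apply]
  · have hcard : Fintype.card (Fin 4 × Fin 4 × Fin m) = 16 * m := by simp; ring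
    rw [hcard] at hb
    have hmD : (m : ℝ) ≤ 4 ^ D := by
      have h1 : m ≤ D + 1 := by omega
      have h2 : D + 1 ≤ 4 ^ D := Nat.lt_pow_self (by norm_num)
      exact_mod_cast h1.trans h2
    calc pn (pol ξ U V) ≤ ∑ j : Fin m, nrm (ξ (U, V, j)) := by
          refine (pn_sum_le _ _).trans (le_of_eq ?_)
          simp
      _ ≤ ∑ j : Fin m, h * (c * (c * (16 * m : ℕ) * (3 * h * M ^ D)) ^ 27) := by
          refine Finset.sum_le_sum fun j _ ↦ (nrm_le_house _).trans ?_
          exact mul_le_mul_of_nonneg_left (hb _) hh0.le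
      _ = m * (h * (c * (c * (16 * m : ℕ) * (3 * h * M ^ D)) ^ 27)) := by simp
      _ ≤ 4 ^ D * (h * (c * (c * (16 * 4 ^ D) * (3 * h * M ^ D)) ^ 27)) := by
          push_cast
          gcongr
      _ = (h * c * (48 * c * h) ^ 27) * (4 ^ 28 * M ^ 27) ^ D := by
          rw [mul_pow (4 ^ 28), ← pow_mul, ← pow_mul, mul_comm 28, mul_comm 27, pow_mul, pow_mul]
          ring
      _ ≤ (h * c * (48 * c * h) ^ 27) ^ D * (4 ^ 28 * M ^ 27) ^ D := by
          gcongr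
          refine le_self_pow₀ ?_ hD.ne'
          refine one_le_mul_of_one_le_of_one_le
            (one_le_mul_of_one_le_of_one_le h1 hc1) (one_le_pow₀ ?_)
          nlinarith
      _ = _ := by rw [← mul_pow]

end Final
end HE

/-! ### The auxiliary sections -/

namespace HE
set_option linter.unusedSectionVars false
open Polynomial

section Gen
variable {R S : Type*} [CommRing R] [CommRing S] [Algebra R S]

/-- The lift `(s : c : d : y ν)` of the `2^(r+1)`-multiple of a point `(x, y)`. -/
noncomputable def liftPt (k l : R) (r : ℕ) (x y : S) : Fin 4 → S :=
  ![aeval x (lp k l r 0), aeval x (lp k l r 1), aeval x (lp k l r 2), y * aeval x (lp k l r 3)]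

theorem liftPt_isLift {k l : R} {x y : S}
    (h : y ^ 2 = x * (x - algebraMap R S k) * (x - algebraMap R S l)) (r : ℕ) :
    IsLift (algebraMap R S k) (algebraMap R S l) (liftPt k l r x y) := by
  have h1 := congrArg (aeval x) (lp_rel k l r).1
  have h2 := congrArg (aeval x) (lp_rel k l r).2
  simp only [map_pow, map_sub, map_mul, aeval_C, cubic, aeval_X] at h1 h2
  refine ⟨?_, ?_⟩
  · simp only [liftPt, Matrix.cons_val]
    rw [h1, mul_pow, h]; ring
  · simp only [liftPt, Matrix.cons_val]
    rw [h2, mul_pow, h]; ring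

/-- A point `z = (√x, √(x-k), √(x-l), √(x-m))`. -/
structure IsPt (k l m : R) (z : Fin 4 → S) : Prop where
  h1 : z 1 ^ 2 = z 0 ^ 2 - algebraMap R S k
  h2 : z 2 ^ 2 = z 0 ^ 2 - algebraMap R S l
  h3 : z 3 ^ 2 = z 0 ^ 2 - algebraMap R S m

/-- The lift of the `2^(r+1)`-multiple of the point attached to `z` on the first curve
`y² = x (x - k) (x - l)`. -/
noncomputable def liftA (k l : R) (r : ℕ) (z : Fin 4 → S) : Fin 4 → S :=
  liftPt k l r (z 0 ^ 2) (z 0 * z 1 * z 2)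

/-- The lift of the `2^(r+1)`-multiple of the point attached to `z` on the second curve
`y² = x (x - k) (x - m)`. -/
noncomputable def liftB (k m : R) (r : ℕ) (z : Fin 4 → S) : Fin 4 → S :=
  liftPt k m r (z 0 ^ 2) (z 0 * z 1 * z 3)

theorem IsPt.liftA {k l m : R} {z : Fin 4 → S} (h : IsPt k l m z) (r : ℕ) :
    IsLift (algebraMap R S k) (algebraMap R S l) (liftA k l r z) := by
  refine liftPt_isLift ?_ r
  rw [mul_pow, mul_pow, h.h1, h.h2]

theorem IsPt.liftB {k l m : R} {z : Fin 4 → S} (h : IsPt k l m z) (r : ℕ) :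
    IsLift (algebraMap R S k) (algebraMap R S m) (liftB k m r z) := by
  refine liftPt_isLift ?_ r
  rw [mul_pow, mul_pow, h.h1, h.h3]

/-- The entries of `τ` as polynomials in `x`, with the radical `√((x - l) (x - m))` removed from
the entry of index `2`. -/
noncomputable def tauP (k l m : R) (r : ℕ) : Fin 4 → R[X] :=
  ![lp k l r 1 * lp k m r 1, -(lp k l r 0 * lp k m r 0),
    C k * (X * (X - C k) * (lp k l r 3 * lp k m r 3)), -(C k * (lp k l r 2 * lp k m r 2))]

/-- The factors by which the polynomials `tauP` differ from `τ`, for `y = √((x - l) (x - m))`. -/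
def tw (y : S) : Fin 4 → S := ![1, 1, y, 1]

/-- The vector `τ` of the two `2^(r+1)`-multiples attached to the point `z`. -/
noncomputable def tauA (k l m : R) (r : ℕ) (z : Fin 4 → S) : Fin 4 → S :=
  tauv (algebraMap R S k) (liftA k l r z) (liftB k m r z)

theorem IsPt.tauA_eq {k l m : R} {z : Fin 4 → S} (h : IsPt k l m z) (r : ℕ) (U : Fin 4) :
    tauA k l m r z U = tw (z 2 * z 3) U * aeval (z 0 ^ 2) (tauP k l m r U) := by
  have e : z 0 ^ 2 - algebraMap R S k = z 1 ^ 2 := h.h1.symm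
  fin_cases U <;> simp [tauA, HE.liftA, HE.liftB, liftPt, tauP, tw, tauv, e]
  ring

/-- The values at `z` of an alternating form `ω` with polynomial entries, twisted like `τ`. -/
noncomputable def omA (ω : Fin 4 → Fin 4 → R[X]) (z : Fin 4 → S) (U V : Fin 4) : S :=
  tw (z 2 * z 3) U * tw (z 2 * z 3) V * aeval (z 0 ^ 2) (ω U V)

theorem IsPt.wedge {k l m : R} {z : Fin 4 → S} (h : IsPt k l m z) {r : ℕ}
    {ω : Fin 4 → Fin 4 → R[X]} (hω : Wedge ω (tauP k l m r)) :
    Wedge (omA ω z) (tauA k l m r z) := by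
  refine ⟨fun U V ↦ ?_, fun U ↦ ?_, fun U V W ↦ ?_⟩
  · rw [omA, omA, hω.anti U V, map_neg]; ring
  · rw [omA, hω.diag, map_zero, mul_zero]
  · have := congrArg (aeval (z 0 ^ 2)) (hω.rel U V W)
    simp only [map_add, map_mul, map_zero] at this
    rw [h.tauA_eq, h.tauA_eq, h.tauA_eq, omA, omA, omA]
    linear_combination (tw (z 2 * z 3) U * tw (z 2 * z 3) V * tw (z 2 * z 3) W) * this

/-- The sum-difference matrix on the first curve of the `2^(r+1)`-multiple of `z` and of `s`. -/
noncomputable def mA (k l : R) (r : ℕ) (z s : Fin 4 → S) : Fin 4 → Fin 2 → S :=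
  sdm (algebraMap R S k) (algebraMap R S l) (liftA k l r z) (s 0) (s 1) (s 2)

/-- The sum-difference matrix on the second curve of the `2^(r+1)`-multiple of `z` and of `s`. -/
noncomputable def mB (k m : R) (r : ℕ) (z s : Fin 4 → S) : Fin 4 → Fin 2 → S :=
  sdm (algebraMap R S k) (algebraMap R S m) (liftB k m r z) (s 0) (s 1) (s 3)

theorem sdm_rank_one' {k l : S} {A : Fin 4 → S} (hA : IsLift k l A) {s c d : S}
    (hC : c ^ 2 = s ^ 2 - k) (hD : d ^ 2 = s ^ 2 - l) (U V : Fin 4) (T T' : Fin 2) :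
    sdm k l A s c d U T * sdm k l A s c d V T' = sdm k l A s c d U T' * sdm k l A s c d V T := by
  have := sdm_rank_one hA hC hD U V
  fin_cases T <;> fin_cases T'
  · rfl
  · exact this
  · exact this.symm
  · rfl

/-- The auxiliary section with indices `V`, `T`, `T'`: the contraction with `ω` of the sum
coordinates, which leaves the coordinates `T`, `T'` of the two differences. -/
noncomputable def auxX (k l m : R) (r : ℕ) (ω : Fin 4 → Fin 4 → R[X]) (z s : Fin 4 → S)
    (V : Fin 4) (T T' : Fin 2) : S :=
  ∑ U, omA ω z U V * (mA k l r z s U T * mB k m r z s U T')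

end Gen

section Factor
variable {K : Type*} [Field K]
open PowerSeries in
theorem isUnit_of_const {f : PowerSeries K} (h : constantCoeff f ≠ 0) : IsUnit f :=
  PowerSeries.isUnit_iff_constantCoeff.2 h.isUnit

open PowerSeries in
/-- All auxiliary sections are multiples, by one common factor `G`, of the products of a coordinate
of `τ` and coordinates of the two differences. Indeed `ω = f ∧ τ` locally, and `τ` is orthogonal to
the vector with which `ω` is contracted. -/
theorem factor {M₁ M₂ : Fin 4 → Fin 2 → PowerSeries K} {ω : Fin 4 → Fin 4 → PowerSeries K}
    {τ : Fin 4 → PowerSeries K} (hω : Wedge ω τ)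
    (h1 : ∀ U V T T', M₁ U T * M₁ V T' = M₁ U T' * M₁ V T)
    (h2 : ∀ U V T T', M₂ U T * M₂ V T' = M₂ U T' * M₂ V T)
    (hrel : ∀ T T', ∑ U, τ U * (M₁ U T * M₂ U T') = 0)
    {U₁ U₂ V₀ : Fin 4} {T₁ T₂ : Fin 2} (hU₁ : constantCoeff (M₁ U₁ T₁) ≠ 0)
    (hU₂ : constantCoeff (M₂ U₂ T₂) ≠ 0) (hV₀ : constantCoeff (τ V₀) ≠ 0) :
    ∃ G, ∀ V T T', ∑ U, ω U V * (M₁ U T * M₂ U T') = τ V * (M₁ U₁ T * M₂ U₂ T') * G := by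
  obtain ⟨a, ha⟩ := (isUnit_of_const hU₁).exists_right_inv
  obtain ⟨b, hb⟩ := (isUnit_of_const hU₂).exists_right_inv
  obtain ⟨c, hc⟩ := (isUnit_of_const hV₀).exists_right_inv
  -- `M₁ U T = p U * M₁ U₁ T`
  have e1 : ∀ U T, M₁ U T = M₁ U T₁ * a * M₁ U₁ T := fun U T ↦ by
    linear_combination (-M₁ U T) * ha + a * h1 U U₁ T T₁
  have e2 : ∀ U T, M₂ U T = M₂ U T₂ * b * M₂ U₂ T := fun U T ↦ by
    linear_combination (-M₂ U T) * hb + b * h2 U U₂ T T₂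
  let q : Fin 4 → PowerSeries K := fun U ↦ M₁ U T₁ * a * (M₂ U T₂ * b)
  have hq : ∀ U T T', M₁ U T * M₂ U T' = q U * (M₁ U₁ T * M₂ U₂ T') := fun U T T' ↦ by
    rw [e1 U T, e2 U T']; simp only [q]; ring
  have hq0 : ∑ U, τ U * q U = 0 := by
    have := congrArg (· * (a * b)) (hrel T₁ T₂)
    simp only [zero_mul, Finset.sum_mul] at this
    rw [← this]
    exact Finset.sum_congr rfl fun U _ ↦ by simp only [q]; ring
  let Y : Fin 4 → PowerSeries K := fun V ↦ ∑ U, ω U V * q U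
  have hY : ∀ V, Y V = τ V * (Y V₀ * c) := by
    intro V
    have h3 : Y V * τ V₀ = τ V * Y V₀ := by
      have : Y V * τ V₀ - τ V * Y V₀ = - ω V V₀ * ∑ U, τ U * q U := by
        simp only [Y, Finset.sum_mul, Finset.mul_sum, ← Finset.sum_sub_distrib]
        refine Finset.sum_congr rfl fun U _ ↦ ?_
        linear_combination q U * hω.rel U V V₀ - q U * τ V * hω.anti V₀ U
      rw [hq0, mul_zero] at this
      exact sub_eq_zero.1 this
    linear_combination c * h3 - Y V * hc
  refine ⟨Y V₀ * c, fun V T T' ↦ ?_⟩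
  calc ∑ U, ω U V * (M₁ U T * M₂ U T') = Y V * (M₁ U₁ T * M₂ U₂ T') := by
        simp only [Y, Finset.sum_mul]
        exact Finset.sum_congr rfl fun U _ ↦ by rw [hq]; ring
    _ = _ := by rw [hY V]; ring

/-- The point with coordinates in `K⟦w⟧`, with `x = x₀ - 4 Ξ w`. -/
noncomputable def zs (ξ : Fin 4 → K) (i : Fin 4) : PowerSeries K :=
  PowerSeries.C (ξ i) * sqs (∏ j ∈ Finset.univ.erase i, ξ j ^ 2)

theorem zs_sq (ξ : Fin 4 → K) (i : Fin 4) :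
    zs ξ i ^ 2 = PowerSeries.C (ξ i ^ 2) - PowerSeries.C (4 * ∏ j, ξ j ^ 2) * PowerSeries.X := by
  have h : ∏ j, ξ j ^ 2 = ξ i ^ 2 * ∏ j ∈ Finset.univ.erase i, ξ j ^ 2 :=
    (Finset.mul_prod_erase _ _ (Finset.mem_univ i)).symm
  rw [zs, mul_pow, sqs_sq, h]
  simp only [map_mul, map_pow]
  ring

theorem constantCoeff_zs (ξ : Fin 4 → K) (i : Fin 4) : PowerSeries.constantCoeff (zs ξ i) = ξ i := by
  simp [zs]

end Factor
end HE

/-! ### Local bounds for the auxiliary sections -/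

namespace HE
set_option linter.unusedSectionVars false
open Polynomial NumberField Height AdmissibleAbsValues

section G
variable {K : Type*} [Field K] [NumberField K]

theorem Gauge.rel (G : Gauge K) {c c' b b' : ℝ} {f : PowerSeries K} (h : G.P c b f) (hc : 0 ≤ c)
    (hb : 0 ≤ b) (hcc : c ≤ c') (hbb : b ≤ b') : G.P c' b' f :=
  G.mono_b (G.mono_c h hb hcc) (hc.trans hcc) hbb

theorem algMap_ps (a : 𝓞 K) : algebraMap (𝓞 K) (PowerSeries K) a = PowerSeries.C (a : K) := rfl

theorem gauge_liftPt (G : Gauge K) {k l : 𝓞 K} {M : ℝ} (hM1 : 1 ≤ M) {r : ℕ}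
    (hM : ∀ i, pn (lp k l r i) ≤ M ^ 4 ^ r) {c Z : ℝ} (hc : 1 ≤ c) (hZ : 1 ≤ Z)
    {x y : PowerSeries K} (hx : G.P (c ^ 2) (Z ^ 2) x) (hy : G.P (c ^ 3) (Z ^ 3) y) (i : Fin 4) :
    G.P ((M * c) ^ 4 ^ (r + 1)) (Z ^ 4 ^ (r + 1)) (liftPt k l r x y i) := by
  have hc2 : 1 ≤ c ^ 2 := one_le_pow₀ hc
  have hZ2 : 1 ≤ Z ^ 2 := one_le_pow₀ hZ
  have hpos : 1 ≤ 4 ^ r := Nat.one_le_pow _ _ (by norm_num)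
  have e4 : 4 ^ (r + 1) = 4 * 4 ^ r := by ring
  have hMM : M ^ 4 ^ r ≤ M ^ 4 ^ (r + 1) := pow_le_pow_right₀ hM1 (by omega)
  have main : ∀ i : Fin 4, i ≠ 3 → G.P ((M * c) ^ 4 ^ (r + 1)) (Z ^ 4 ^ (r + 1))
      (aeval x (lp k l r i)) := by
    intro i hi
    have := G.aeval hc2 hZ2 hx (lp k l r i) ((lp_deg k l r).1 i hi).2.le
    rw [← pow_mul, ← pow_mul, show 2 * (2 * 4 ^ r) = 4 ^ (r + 1) by ring] at this
    refine G.rel this (mul_nonneg (pn_nonneg _) (by positivity)) (by positivity) ?_ le_rfl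
    rw [mul_pow]
    exact mul_le_mul_of_nonneg_right ((hM i).trans hMM) (by positivity)
  have last : G.P ((M * c) ^ 4 ^ (r + 1)) (Z ^ 4 ^ (r + 1)) (y * aeval x (lp k l r 3)) := by
    have := G.mul hy (G.aeval hc2 hZ2 hx (lp k l r 3) (lp_deg k l r).2)
    rw [← pow_mul, ← pow_mul] at this
    have hcp : 0 ≤ c ^ 3 := by positivity
    refine G.rel this (mul_nonneg hcp (mul_nonneg (pn_nonneg _) (by positivity))) (by positivity) ?_ ?_
    · calc _ = pn (lp k l r 3) * c ^ (3 + 2 * (2 * 4 ^ r - 2)) := by rw [pow_add]; ring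
        _ ≤ M ^ 4 ^ (r + 1) * c ^ 4 ^ (r + 1) := by
          refine mul_le_mul ((hM 3).trans hMM) (pow_le_pow_right₀ hc ?_) (by positivity)
            (by positivity)
          omega
        _ = _ := by rw [mul_pow]
    · rw [← pow_add]
      exact pow_le_pow_right₀ hZ (by omega)
  fin_cases i
  · exact main 0 (by decide)
  · exact main 1 (by decide)
  · exact main 2 (by decide)
  · exact last

theorem gauge_sdm (G : Gauge K) {k l : 𝓞 K} {N : ℝ} (hN : 1 ≤ N) (hk : nrm k ≤ N) (hl : nrm l ≤ N)
    {L B c W : ℝ} (hL : 1 ≤ L) (hB : 1 ≤ B) (hc : 1 ≤ c) (hW : 1 ≤ W) {A : Fin 4 → PowerSeries K}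
    (hA : ∀ i, G.P L B (A i)) {s p q : PowerSeries K} (hs : G.P c W s) (hp : G.P c W p)
    (hq : G.P c W q) (U : Fin 4) (T : Fin 2) :
    G.P (2 * (N ^ 2 * (L ^ 2 * c ^ 2))) (B ^ 2 * W ^ 2)
      (sdm (algebraMap (𝓞 K) _ k) (algebraMap (𝓞 K) _ l) A s p q U T) := by
  have hk' : G.P N 1 (algebraMap (𝓞 K) _ k) := by
    rw [algMap_ps]; exact G.mono_c (G.int k) zero_le_one hk
  have hl' : G.P N 1 (algebraMap (𝓞 K) _ l) := by
    rw [algMap_ps]; exact G.mono_c (G.int l) zero_le_one hl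
  have hN2 : 1 ≤ N ^ 2 := one_le_pow₀ hN
  have hc2 : 1 ≤ c ^ 2 := one_le_pow₀ hc
  have hL2 : 1 ≤ L ^ 2 := one_le_pow₀ hL
  have hW2 : 1 ≤ W ^ 2 := one_le_pow₀ hW
  have hN0 : 0 ≤ N := by linarith
  have hNN : N ≤ N ^ 2 := le_self_pow₀ hN (by norm_num)
  -- products of two coordinates and two coordinates
  have t1 : ∀ {i j a b}, G.P c W a → G.P c W b →
      G.P (N ^ 2 * (L ^ 2 * c ^ 2)) (B ^ 2 * W ^ 2) (A i * A j * a * b) := by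
    intro i j a b ha hb
    refine G.rel (G.mul (G.mul (G.mul (hA i) (hA j)) ha) hb) (by positivity) (by positivity) ?_ ?_
    · calc _ = 1 * (L ^ 2 * c ^ 2) := by ring
        _ ≤ _ := by gcongr
    · exact le_of_eq (by ring)
  have t2 : ∀ {i j a e}, G.P N 1 e → G.P c W a →
      G.P (N ^ 2 * (L ^ 2 * c ^ 2)) (B ^ 2 * W ^ 2) (e * A i * A j * a) := by
    intro i j a e he ha
    refine G.rel (G.mul (G.mul (G.mul he (hA i)) (hA j)) ha) (by positivity) (by positivity) ?_ ?_
    · calc _ = N * (L ^ 2 * c) := by ring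
        _ ≤ _ := by gcongr; exact le_self_pow₀ hc (by norm_num)
    · calc _ = B ^ 2 * W := by ring
        _ ≤ _ := by gcongr; exact le_self_pow₀ hW (by norm_num)
  have t3 : ∀ {i j}, G.P (N ^ 2 * (L ^ 2 * c ^ 2)) (B ^ 2 * W ^ 2)
      (algebraMap (𝓞 K) _ k * algebraMap (𝓞 K) _ l * (A i * A j)) := by
    intro i j
    refine G.rel (G.mul (G.mul hk' hl') (G.mul (hA i) (hA j))) (by positivity) (by positivity) ?_ ?_
    · calc _ = N ^ 2 * (L ^ 2 * 1) := by ring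
        _ ≤ _ := by gcongr
    · calc _ = B ^ 2 * 1 := by ring
        _ ≤ _ := by gcongr
  have t4 : ∀ {i j}, G.P (N ^ 2 * (L ^ 2 * c ^ 2)) (B ^ 2 * W ^ 2) (A i * A j) := by
    intro i j
    refine G.rel (G.mul (hA i) (hA j)) (by positivity) (by positivity) ?_ ?_
    · calc _ = 1 * (L ^ 2 * 1) := by ring
        _ ≤ _ := by gcongr
    · calc _ = B ^ 2 * 1 := by ring
        _ ≤ _ := by gcongr
  have t5 : ∀ {i j a}, G.P c W a →
      G.P (N ^ 2 * (L ^ 2 * c ^ 2)) (B ^ 2 * W ^ 2) (a * A i * A j) := by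
    intro i j a ha
    refine G.rel (G.mul (G.mul ha (hA i)) (hA j)) (by positivity) (by positivity) ?_ ?_
    · calc _ = 1 * (L ^ 2 * c) := by ring
        _ ≤ _ := by gcongr; exact le_self_pow₀ hc (by norm_num)
    · calc _ = B ^ 2 * W := by ring
        _ ≤ _ := by gcongr; exact le_self_pow₀ hW (by norm_num)
  have fin : ∀ {f g}, G.P (N ^ 2 * (L ^ 2 * c ^ 2)) (B ^ 2 * W ^ 2) f →
      G.P (N ^ 2 * (L ^ 2 * c ^ 2)) (B ^ 2 * W ^ 2) g →
      G.P (2 * (N ^ 2 * (L ^ 2 * c ^ 2))) (B ^ 2 * W ^ 2) (f - g) := by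
    intro f g hf hg
    rw [two_mul]; exact G.sub hf hg
  have fin' : ∀ {f g}, G.P (N ^ 2 * (L ^ 2 * c ^ 2)) (B ^ 2 * W ^ 2) f →
      G.P (N ^ 2 * (L ^ 2 * c ^ 2)) (B ^ 2 * W ^ 2) g →
      G.P (2 * (N ^ 2 * (L ^ 2 * c ^ 2))) (B ^ 2 * W ^ 2) (f + g) := by
    intro f g hf hg
    rw [two_mul]; exact G.add hf hg
  fin_cases U <;> fin_cases T
  · change G.P _ _ (A 0 ^ 2 * s ^ 2 - _ * _ * A 3 ^ 2)
    rw [show A 0 ^ 2 * s ^ 2 = A 0 * A 0 * s * s by ring, pow_two (A 3)]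
    exact fin (t1 hs hs) t3
  · exact fin (t1 hp hq) (t5 hs)
  · exact fin (t1 hp hs) (t2 hk' hq)
  · exact fin (t1 hs hq) (t5 hp)
  · exact fin (t1 hq hs) (t2 hl' hp)
  · exact fin (t1 hs hp) (t5 hq)
  · exact fin' (t1 hp hq) (t5 hs)
  · change G.P _ _ (A 3 ^ 2 * s ^ 2 - A 0 ^ 2)
    rw [show A 3 ^ 2 * s ^ 2 = A 3 * A 3 * s * s by ring, pow_two (A 0)]
    exact fin (t1 hs hs) t4

theorem gauge_auxX (G : Gauge K) {k l m : 𝓞 K} {N : ℝ} (hN : 1 ≤ N) (hk : nrm k ≤ N)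
    (hl : nrm l ≤ N) (hm : nrm m ≤ N) {M : ℝ} (hM1 : 1 ≤ M) {r : ℕ}
    (hM : ∀ i, pn (lp k l r i) ≤ M ^ 4 ^ r) (hM' : ∀ i, pn (lp k m r i) ≤ M ^ 4 ^ r)
    {c Z c' W : ℝ} (hc : 1 ≤ c) (hZ : 1 ≤ Z) (hc' : 1 ≤ c') (hW : 1 ≤ W)
    {z s : Fin 4 → PowerSeries K} (hz : ∀ i, G.P c Z (z i)) (hs : ∀ i, G.P c' W (s i))
    {ω : Fin 4 → Fin 4 → (𝓞 K)[X]} {d : ℕ} (hd : ∀ U V, (ω U V).natDegree ≤ d) {C₁ : ℝ}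
    (hω : ∀ U V, pn (ω U V) ≤ C₁) (V : Fin 4) (T T' : Fin 2) :
    G.P (4 * (c ^ 4 * (C₁ * c ^ (2 * d)) * (2 * (N ^ 2 * (((M * c) ^ 4 ^ (r + 1)) ^ 2 * c' ^ 2))) ^ 2))
      (Z ^ (4 + 2 * d + 4 * 4 ^ (r + 1)) * W ^ 4) (auxX k l m r ω z s V T T') := by
  have hC₁ : 0 ≤ C₁ := (pn_nonneg _).trans (hω 0 0)
  have hx : G.P (c ^ 2) (Z ^ 2) (z 0 ^ 2) := by
    rw [pow_two, pow_two, pow_two]; exact G.mul (hz 0) (hz 0)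
  have hy : ∀ i, G.P (c ^ 3) (Z ^ 3) (z 0 * z 1 * z i) := fun i ↦ by
    rw [show c ^ 3 = c * c * c by ring, show Z ^ 3 = Z * Z * Z by ring]
    exact G.mul (G.mul (hz 0) (hz 1)) (hz i)
  have hc2 : 1 ≤ c ^ 2 := one_le_pow₀ hc
  have hZ2 : 1 ≤ Z ^ 2 := one_le_pow₀ hZ
  have hMc : 1 ≤ M * c := one_le_mul_of_one_le_of_one_le hM1 hc
  have hL : 1 ≤ (M * c) ^ 4 ^ (r + 1) := one_le_pow₀ hMc
  have hB : 1 ≤ Z ^ 4 ^ (r + 1) := one_le_pow₀ hZ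
  have hA := gauge_liftPt G hM1 hM hc hZ hx (hy 2)
  have hA' := gauge_liftPt G hM1 hM' hc hZ hx (hy 3)
  have m1 := gauge_sdm G hN hk hl hL hB hc' hW hA (hs 0) (hs 1) (hs 2)
  have m2 := gauge_sdm G hN hk hm hL hB hc' hW hA' (hs 0) (hs 1) (hs 3)
  have htw : ∀ U, G.P (c ^ 2) (Z ^ 2) (tw (z 2 * z 3) U) := by
    have h1 : G.P (c ^ 2) (Z ^ 2) 1 := G.rel G.one zero_le_one zero_le_one hc2 hZ2
    have h2 : G.P (c ^ 2) (Z ^ 2) (z 2 * z 3) := by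
      rw [pow_two, pow_two]; exact G.mul (hz 2) (hz 3)
    intro U
    fin_cases U
    exacts [h1, h1, h2, h1]
  have term : ∀ U, G.P (c ^ 4 * (C₁ * c ^ (2 * d)) *
      (2 * (N ^ 2 * (((M * c) ^ 4 ^ (r + 1)) ^ 2 * c' ^ 2))) ^ 2)
      (Z ^ (4 + 2 * d + 4 * 4 ^ (r + 1)) * W ^ 4)
      (omA ω z U V * (mA k l r z s U T * mB k m r z s U T')) := by
    intro U
    have ha := G.aeval hc2 hZ2 hx (ω U V) (hd U V)
    refine G.rel (G.mul (G.mul (G.mul (htw U) (htw V)) ha) (G.mul (m1 U T) (m2 U T'))) ?_ ?_ ?_ ?_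
    · have := pn_nonneg (ω U V)
      positivity
    · positivity
    · calc _ = c ^ 4 * (pn (ω U V) * c ^ (2 * d)) *
          (2 * (N ^ 2 * (((M * c) ^ 4 ^ (r + 1)) ^ 2 * c' ^ 2))) ^ 2 := by
            rw [pow_mul c 2 d]; ring
        _ ≤ _ := by
          have := hω U V
          gcongr
    · refine le_of_eq ?_
      generalize 4 ^ (r + 1) = D
      ring
  rw [auxX, Fin.sum_univ_four]
  rw [show ∀ t : ℝ, 4 * t = t + t + t + t by intro t; ring]
  exact G.add (G.add (G.add (term 0) (term 1)) (term 2)) (term 3)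

end G
end HE

/-! ### Height bound for the coefficients of the auxiliary sections -/

namespace HE
set_option linter.unusedSectionVars false
open Polynomial NumberField Height AdmissibleAbsValues

section G
variable {K : Type*} [Field K] [NumberField K]

/-- A constant dominating the archimedean sizes of `k, l, m`. -/
noncomputable def nk (k l m : 𝓞 K) : ℝ := 1 + nrm k + nrm l + nrm m

theorem one_le_nk (k l m : 𝓞 K) : 1 ≤ nk k l m := by
  have := nrm_nonneg k; have := nrm_nonneg l; have := nrm_nonneg m
  rw [nk]; linarith

theorem IsPt.arch_le {k l m : 𝓞 K} {ξ : Fin 4 → K} (h : IsPt k l m ξ) {v : AbsoluteValue K ℝ}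
    (hv : v ∈ archAbsVal (K := K)) (i : Fin 4) : v (ξ i) ≤ nk k l m * max (v (ξ 0)) 1 := by
  set Z := max (v (ξ 0)) 1
  have hZ : 1 ≤ Z := le_max_right _ _
  have hx : v (ξ 0) ≤ Z := le_max_left _ _
  have hN := one_le_nk k l m
  have hk := nrm_nonneg k; have hl := nrm_nonneg l; have hm := nrm_nonneg m
  have key : ∀ (a : 𝓞 K) (j : Fin 4), ξ j ^ 2 = ξ 0 ^ 2 - (a : K) → 1 + nrm a ≤ nk k l m →
      v (ξ j) ≤ nk k l m * Z := by
    intro a j hj ha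
    have h1 : v (ξ j) ^ 2 ≤ v (ξ 0) ^ 2 + nrm a := by
      rw [← map_pow, hj, ← map_pow]
      refine (v.sub_le_add _ _).trans ?_
      gcongr
      exact arch_le_nrm hv a
    have ha0 := nrm_nonneg a
    refine le_of_sq_le_sq ?_ (by positivity)
    have h2 : v (ξ 0) ^ 2 ≤ Z ^ 2 := pow_le_pow_left₀ (v.nonneg _) hx 2
    have hZ2 : 1 ≤ Z ^ 2 := one_le_pow₀ hZ
    calc v (ξ j) ^ 2 ≤ Z ^ 2 + nrm a := by linarith
      _ ≤ Z ^ 2 * (1 + nrm a) := by nlinarith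
      _ ≤ Z ^ 2 * nk k l m ^ 2 := by
        gcongr
        exact ha.trans (le_self_pow₀ hN (by norm_num))
      _ = _ := by ring
  fin_cases i
  · exact hx.trans (le_mul_of_one_le_left (by positivity) hN)
  · exact key k 1 h.h1 (by rw [nk]; linarith)
  · exact key l 2 h.h2 (by rw [nk]; linarith)
  · exact key m 3 h.h3 (by rw [nk]; linarith)

theorem IsPt.nonarch_le {k l m : 𝓞 K} {ξ : Fin 4 → K} (h : IsPt k l m ξ) {v : AbsoluteValue K ℝ}
    (hv : v ∈ nonarchAbsVal (K := K)) (i : Fin 4) : v (ξ i) ≤ max (v (ξ 0)) 1 := by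
  set Z := max (v (ξ 0)) 1
  have hZ : 1 ≤ Z := le_max_right _ _
  have hx : v (ξ 0) ≤ Z := le_max_left _ _
  have key : ∀ (a : 𝓞 K) (j : Fin 4), ξ j ^ 2 = ξ 0 ^ 2 - (a : K) → v (ξ j) ≤ Z := by
    intro a j hj
    refine le_of_sq_le_sq ?_ (by positivity)
    rw [← map_pow, hj, sub_eq_add_neg]
    refine (AdmissibleAbsValues.isNonarchimedean v hv _ _).trans ?_
    rw [map_pow, map_neg_eq_map]
    refine max_le (pow_le_pow_left₀ (v.nonneg _) hx 2) ?_
    exact (nonarch_int_le hv a).trans (one_le_pow₀ hZ)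
  fin_cases i
  · exact hx
  · exact key k 1 h.h1
  · exact key l 2 h.h2
  · exact key m 3 h.h3

/-- The coefficients of the auxiliary sections have small height. -/
theorem height_auxX {k l m : 𝓞 K} {M : ℝ} (hM1 : 1 ≤ M) {r : ℕ}
    (hM : ∀ i, pn (lp k l r i) ≤ M ^ 4 ^ r) (hM' : ∀ i, pn (lp k m r i) ≤ M ^ 4 ^ r)
    {ω : Fin 4 → Fin 4 → (𝓞 K)[X]} {d : ℕ} (hd : ∀ U V, (ω U V).natDegree ≤ d)
    (hdD : d ≤ 4 ^ (r + 1)) {C₁ : ℝ} (hC₁ : 1 ≤ C₁)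
    (hω : ∀ U V, pn (ω U V) ≤ C₁ ^ 4 ^ (r + 1)) {ξ σ : Fin 4 → K} (hξ : IsPt k l m ξ)
    (hσ : IsPt k l m σ) (n : ℕ)
    (hne : (fun p : Fin 4 × Fin 2 × Fin 2 ↦ PowerSeries.coeff n
      (auxX k l m r ω (zs ξ) (fun i ↦ PowerSeries.C (σ i)) p.1 p.2.1 p.2.2)) ≠ 0) :
    logHeight (fun p : Fin 4 × Fin 2 × Fin 2 ↦ PowerSeries.coeff n
      (auxX k l m r ω (zs ξ) (fun i ↦ PowerSeries.C (σ i)) p.1 p.2.1 p.2.2)) ≤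
    totalWeight K * Real.log (((256 * nk k l m ^ 12) * C₁ * (2 * nk k l m) ^ 2 *
      (M * (2 * nk k l m)) ^ 4) ^ 4 ^ (r + 1) * (8 * nk k l m ^ 6) ^ n) +
      (4 + 2 * d + 4 * 4 ^ (r + 1) + 6 * n : ℕ) * logHeight₁ (ξ 0) + (4 : ℕ) * logHeight₁ (σ 0) := by
  set N := nk k l m with hNdef
  have hN : 1 ≤ N := one_le_nk k l m
  have hk0 := nrm_nonneg k; have hl0 := nrm_nonneg l; have hm0 := nrm_nonneg m
  have hk : nrm k ≤ N := by rw [hNdef, nk]; linarith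
  have hl : nrm l ≤ N := by rw [hNdef, nk]; linarith
  have hm : nrm m ≤ N := by rw [hNdef, nk]; linarith
  have h2N : 1 ≤ 2 * N := by linarith
  have hcard : ∀ i : Fin 4, (Finset.univ.erase i).card = 3 := fun i ↦ by
    rw [Finset.card_erase_of_mem (Finset.mem_univ i)]; simp
  have hprod : ∀ (v : AbsoluteValue K ℝ) (t : ℝ), (∀ j, v (ξ j) ≤ t) → ∀ i : Fin 4,
      v (∏ j ∈ Finset.univ.erase i, ξ j ^ 2) ≤ t ^ 6 := by
    intro v t ht i
    rw [map_prod]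
    calc ∏ j ∈ Finset.univ.erase i, v (ξ j ^ 2) ≤ ∏ j ∈ Finset.univ.erase i, t ^ 2 := by
          refine Finset.prod_le_prod (fun j _ ↦ v.nonneg _) fun j _ ↦ ?_
          rw [map_pow]; exact pow_le_pow_left₀ (v.nonneg _) (ht j) 2
      _ = t ^ 6 := by rw [Finset.prod_const, hcard]; ring
  refine logHeight_le_of_local hne (ξ 0) (σ 0) _ _ ?_ ?_ ?_
  · have a1 : 1 ≤ N ^ 12 := one_le_pow₀ hN
    have a2 : 1 ≤ N ^ 6 := one_le_pow₀ hN
    refine one_le_mul_of_one_le_of_one_le (one_le_pow₀ ?_) (one_le_pow₀ (by linarith))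
    refine one_le_mul_of_one_le_of_one_le (one_le_mul_of_one_le_of_one_le
      (one_le_mul_of_one_le_of_one_le (by linarith) hC₁) (one_le_pow₀ h2N)) (one_le_pow₀ ?_)
    exact one_le_mul_of_one_le_of_one_le hM1 h2N
  · rintro v hv ⟨V, T, T'⟩
    set Z := max (v (ξ 0)) 1
    set W := max (v (σ 0)) 1
    have hZ : 1 ≤ Z := le_max_right _ _
    have hW : 1 ≤ W := le_max_right _ _
    set ρ : ℝ := (8 * (N * Z) ^ 6)⁻¹ with hρdef
    have hρ : 0 ≤ ρ := by positivity
    have hρ' : ρ * (8 * (N * Z) ^ 6) = 1 := inv_mul_cancel₀ (by positivity)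
    have hz : ∀ i, (archGauge hv hρ n).P (2 * N) Z (zs ξ i) := by
      intro i
      have h1 := archGauge_C hv hρ n (c := N) (b := Z) (hξ.arch_le hv i)
      have h2 := archGauge_sqs hv hρ n (∏ j ∈ Finset.univ.erase i, ξ j ^ 2) (by
        have := hprod v (N * Z) (hξ.arch_le hv) i
        calc _ ≤ (N * Z) ^ 6 * ρ := by gcongr
          _ ≤ 1 / 8 := by linarith)
      have := Gauge.mul _ h1 h2
      rwa [mul_one, mul_comm N 2] at this
    have hs : ∀ i, (archGauge hv hρ n).P N W (PowerSeries.C (σ i)) :=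
      fun i ↦ archGauge_C hv hρ n (hσ.arch_le hv i)
    have := archGauge_coeff hv hρ n (gauge_auxX _ hN hk hl hm hM1 hM hM' h2N hZ hN hW hz hs hd hω V T T')
    have hpos : 0 < 8 * (N * Z) ^ 6 := by positivity
    rw [hρdef, inv_pow, ← div_eq_mul_inv, div_le_iff₀ (by positivity)] at this
    refine this.trans ?_
    have hD1 : 1 ≤ 4 ^ (r + 1) := Nat.one_le_pow _ _ (by norm_num)
    generalize 4 ^ (r + 1) = D at *
    have e1 : (4 * 2 ^ 4 * 2 ^ 2 * N ^ 12 : ℝ) ≤ (256 * N ^ 12) ^ D := by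
      rw [show (4 * 2 ^ 4 * 2 ^ 2 * N ^ 12 : ℝ) = 256 * N ^ 12 by norm_num]
      refine le_self_pow₀ ?_ (by omega)
      have : 1 ≤ N ^ 12 := one_le_pow₀ hN
      linarith
    have e2 : (2 * N) ^ (2 * d) ≤ ((2 * N) ^ 2) ^ D := by
      rw [← pow_mul]; exact pow_le_pow_right₀ h2N (by omega)
    calc _ = (4 * 2 ^ 4 * 2 ^ 2 * N ^ 12) * C₁ ^ D * (2 * N) ^ (2 * d) * ((M * (2 * N)) ^ 4) ^ D *
          (8 * N ^ 6) ^ n * (Z ^ (4 + 2 * d + 4 * D + 6 * n)) * W ^ 4 := by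
          rw [pow_add Z _ (6 * n), pow_mul Z 6 n, show 8 * (N * Z) ^ 6 = (8 * N ^ 6) * Z ^ 6 by ring,
            mul_pow _ (Z ^ 6), ← pow_mul (M * (2 * N)) 4 D, mul_comm 4 D, pow_mul (M * (2 * N)) D 4]
          generalize (M * (2 * N)) ^ D = L
          ring
      _ ≤ (256 * N ^ 12) ^ D * C₁ ^ D * ((2 * N) ^ 2) ^ D * ((M * (2 * N)) ^ 4) ^ D *
          (8 * N ^ 6) ^ n * (Z ^ (4 + 2 * d + 4 * D + 6 * n)) * W ^ 4 := by gcongr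
      _ = _ := by rw [← mul_pow, ← mul_pow, ← mul_pow]
  · rintro v hv ⟨V, T, T'⟩
    set Z := max (v (ξ 0)) 1
    set W := max (v (σ 0)) 1
    have hZ : 1 ≤ Z := le_max_right _ _
    have hW : 1 ≤ W := le_max_right _ _
    set ρ : ℝ := (Z ^ 6)⁻¹ with hρdef
    have hρ : 0 ≤ ρ := by positivity
    have hz : ∀ i, (nonarchGauge hv hρ).P (2 * N) Z (zs ξ i) := by
      intro i
      have h1 := nonarchGauge_C hv hρ (c := 2 * N) (b := Z) (hξ.nonarch_le hv i)
      have h2 := nonarchGauge_sqs hv hρ (∏ j ∈ Finset.univ.erase i, ξ j ^ 2) (by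
        have := hprod v Z (hξ.nonarch_le hv) i
        calc _ ≤ Z ^ 6 * ρ := by gcongr
          _ = 1 := mul_inv_cancel₀ (by positivity)) 1
      have := Gauge.mul _ h1 h2
      rwa [mul_one, mul_one] at this
    have hs : ∀ i, (nonarchGauge hv hρ).P N W (PowerSeries.C (σ i)) :=
      fun i ↦ nonarchGauge_C hv hρ (hσ.nonarch_le hv i)
    have := gauge_auxX _ hN hk hl hm hM1 hM hM' h2N hZ hN hW hz hs hd hω V T T'
    have := this n
    rw [hρdef, inv_pow, ← div_eq_mul_inv, div_le_iff₀ (by positivity)] at this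
    refine this.trans (le_of_eq ?_)
    rw [pow_add Z _ (6 * n), pow_mul Z 6 n]; ring

end G
end HE

/-! ### The leading coefficient of the auxiliary sections -/

namespace HE
set_option linter.unusedSectionVars false
open Polynomial NumberField Height AdmissibleAbsValues

section Map
variable {R S S' : Type*} [CommRing R] [CommRing S] [Algebra R S] [CommRing S'] [Algebra R S']
  (φ : S →ₐ[R] S')

theorem map_liftPt (k l : R) (r : ℕ) (x y : S) (i : Fin 4) :
    φ (liftPt k l r x y i) = liftPt k l r (φ x) (φ y) i := by
  fin_cases i <;> simp [liftPt, aeval_algHom_apply]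

theorem map_mA (k l : R) (r : ℕ) (z s : Fin 4 → S) (U : Fin 4) (T : Fin 2) :
    φ (mA k l r z s U T) = mA k l r (fun i ↦ φ (z i)) (fun i ↦ φ (s i)) U T := by
  have h : ∀ i, liftA k l r (fun i ↦ φ (z i)) i = φ (liftA k l r z i) := fun i ↦ by
    simp [liftA, map_liftPt]
  fin_cases U <;> fin_cases T <;> simp [mA, sdm, h]

theorem map_mB (k l : R) (r : ℕ) (z s : Fin 4 → S) (U : Fin 4) (T : Fin 2) :
    φ (mB k l r z s U T) = mB k l r (fun i ↦ φ (z i)) (fun i ↦ φ (s i)) U T := by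
  have h : ∀ i, liftB k l r (fun i ↦ φ (z i)) i = φ (liftB k l r z i) := fun i ↦ by
    simp [liftB, map_liftPt]
  fin_cases U <;> fin_cases T <;> simp [mB, sdm, h]

theorem map_tauA (k l m : R) (r : ℕ) (z : Fin 4 → S) (U : Fin 4) :
    φ (tauA k l m r z U) = tauA k l m r (fun i ↦ φ (z i)) U := by
  have h : ∀ i, liftA k l r (fun i ↦ φ (z i)) i = φ (liftA k l r z i) := fun i ↦ by
    simp [liftA, map_liftPt]
  have h' : ∀ i, liftB k m r (fun i ↦ φ (z i)) i = φ (liftB k m r z i) := fun i ↦ by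
    simp [liftB, map_liftPt]
  fin_cases U <;> simp [tauA, tauv, h, h']

end Map

section
variable {K : Type*} [Field K] [NumberField K]

/-- Evaluation at `w = 0` as an algebra map. -/
noncomputable def ccHom : PowerSeries K →ₐ[𝓞 K] K :=
  { PowerSeries.constantCoeff (R := K) with
    commutes' := fun a ↦ by
      change PowerSeries.constantCoeff (algebraMap (𝓞 K) (PowerSeries K) a) = _
      rw [algMap_ps]; simp }

theorem ccHom_apply (f : PowerSeries K) : ccHom f = PowerSeries.constantCoeff f := rfl

theorem zs_isPt' {k l m : 𝓞 K} {ξ : Fin 4 → K} (h : IsPt k l m ξ) : IsPt k l m (zs ξ) := by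
  refine ⟨?_, ?_, ?_⟩ <;> rw [zs_sq, zs_sq, algMap_ps]
  · rw [h.h1, map_sub]; ring
  · rw [h.h2, map_sub]; ring
  · rw [h.h3, map_sub]; ring

end

section G
variable {K : Type*} [Field K] [NumberField K]

/-- At the first order `n` at which the common factor of the auxiliary sections does not vanish,
their coefficients are proportional to the products of a coordinate of `τ` and coordinates of the
two differences. -/
theorem exists_leading {k l m : 𝓞 K} {r : ℕ} {ω : Fin 4 → Fin 4 → (𝓞 K)[X]}
    (hω : Wedge ω (tauP k l m r)) {ξ σ : Fin 4 → K} (hξ : IsPt k l m ξ) (hσ : IsPt k l m σ)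
    {U₁ U₂ V₀ : Fin 4} {T₁ T₂ : Fin 2} (hU₁ : mA k l r ξ σ U₁ T₁ ≠ 0)
    (hU₂ : mB k m r ξ σ U₂ T₂ ≠ 0) (hV₀ : tauA k l m r ξ V₀ ≠ 0) {V : Fin 4} {T T' : Fin 2}
    (hX : auxX k l m r ω (zs ξ) (fun i ↦ PowerSeries.C (σ i)) V T T' ≠ 0) :
    ∃ n : ℕ, PowerSeries.X ^ n ∣ auxX k l m r ω (zs ξ) (fun i ↦ PowerSeries.C (σ i)) V T T' ∧
      ∃ g : K, g ≠ 0 ∧ ∀ V T T', PowerSeries.coeff n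
        (auxX k l m r ω (zs ξ) (fun i ↦ PowerSeries.C (σ i)) V T T') =
        g * (tauA k l m r ξ V * (mA k l r ξ σ U₁ T * mB k m r ξ σ U₂ T')) := by
  set s : Fin 4 → PowerSeries K := fun i ↦ PowerSeries.C (σ i) with hs
  have hz : IsPt k l m (zs ξ) := zs_isPt' hξ
  have hsp : IsPt k l m s := by
    have e : ∀ a : 𝓞 K, algebraMap (𝓞 K) (PowerSeries K) a = PowerSeries.C (algebraMap (𝓞 K) K a) :=
      fun a ↦ rfl
    refine ⟨?_, ?_, ?_⟩ <;> simp only [hs, e, ← map_pow, ← map_sub]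
    · rw [hσ.h1]
    · rw [hσ.h2]
    · rw [hσ.h3]
  have cz : (fun i ↦ ccHom (zs ξ i)) = ξ := by
    funext i; rw [ccHom_apply, constantCoeff_zs]
  have cs : (fun i ↦ ccHom (s i)) = σ := by
    funext i; rw [ccHom_apply]; simp [hs]
  have c1 : ∀ U T, PowerSeries.constantCoeff (mA k l r (zs ξ) s U T) = mA k l r ξ σ U T := by
    intro U T
    have := map_mA (ccHom (K := K)) k l r (zs ξ) s U T
    rwa [cz, cs] at this
  have c2 : ∀ U T, PowerSeries.constantCoeff (mB k m r (zs ξ) s U T) = mB k m r ξ σ U T := by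
    intro U T
    have := map_mB (ccHom (K := K)) k m r (zs ξ) s U T
    rwa [cz, cs] at this
  have c3 : ∀ U, PowerSeries.constantCoeff (tauA k l m r (zs ξ) U) = tauA k l m r ξ U := by
    intro U
    have := map_tauA (ccHom (K := K)) k l m r (zs ξ) U
    rwa [cz] at this
  obtain ⟨G, hG⟩ := factor (M₁ := mA k l r (zs ξ) s) (M₂ := mB k m r (zs ξ) s) (hz.wedge hω)
    (sdm_rank_one' (hz.liftA r) hsp.h1 hsp.h2) (sdm_rank_one' (hz.liftB r) hsp.h1 hsp.h3)
    (fun T T' ↦ key_relation (hz.liftA r) (hz.liftB r) hsp.h1 hsp.h2 hsp.h3 T T')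
    (U₁ := U₁) (U₂ := U₂) (V₀ := V₀) (T₁ := T₁) (T₂ := T₂) (by rwa [c1]) (by rwa [c2]) (by rwa [c3])
  have hG0 : G ≠ 0 := by
    rintro rfl
    exact hX (by rw [auxX, hG, mul_zero])
  obtain ⟨G', hG'⟩ := PowerSeries.X_pow_order_dvd (φ := G)
  refine ⟨G.order.toNat, ?_, PowerSeries.coeff G.order.toNat G, PowerSeries.coeff_order hG0,
    fun V T T' ↦ ?_⟩
  · rw [auxX, hG]
    exact Dvd.dvd.mul_left PowerSeries.X_pow_order_dvd _
  · rw [auxX, hG]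
    generalize G.order.toNat = n at *
    have h0 : ∀ F : PowerSeries K, PowerSeries.coeff n (F * G) =
        PowerSeries.constantCoeff F * PowerSeries.coeff n G := by
      intro F
      rw [hG', mul_left_comm, PowerSeries.coeff_X_pow_mul', if_pos le_rfl,
        PowerSeries.coeff_X_pow_mul', if_pos le_rfl, Nat.sub_self]
      simp
    rw [h0, map_mul, map_mul, c1, c2, c3]; ring

/-- The main inequality, in terms of the order of vanishing `n`. -/
theorem main_ineq_aux (k l m : 𝓞 K) : ∃ C : ℝ, 0 ≤ C ∧ ∀ C₁ : ℝ, 1 ≤ C₁ → ∀ (r d : ℕ)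
    (ω : Fin 4 → Fin 4 → (𝓞 K)[X]), Wedge ω (tauP k l m r) → (∀ U V, (ω U V).natDegree ≤ d) →
    d ≤ 4 ^ (r + 1) → (∀ U V, pn (ω U V) ≤ C₁ ^ 4 ^ (r + 1)) →
    ∀ ξ σ : Fin 4 → K, IsPt k l m ξ → IsPt k l m σ → ∀ U₁ U₂ V T T',
    mA k l r ξ σ U₁ ≠ 0 → mB k m r ξ σ U₂ ≠ 0 → tauA k l m r ξ ≠ 0 →
    auxX k l m r ω (zs ξ) (fun i ↦ PowerSeries.C (σ i)) V T T' ≠ 0 →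
    ∃ n : ℕ, PowerSeries.X ^ n ∣ auxX k l m r ω (zs ξ) (fun i ↦ PowerSeries.C (σ i)) V T T' ∧
      logHeight (tauA k l m r ξ) + logHeight (mA k l r ξ σ U₁) + logHeight (mB k m r ξ σ U₂) ≤
      (totalWeight K * Real.log C₁ + C) * 4 ^ (r + 1) + C * n +
      (4 + 2 * d + 4 * 4 ^ (r + 1) + 6 * n) * logHeight₁ (ξ 0) + 4 * logHeight₁ (σ 0) := by
  obtain ⟨M₁, hM₁, hlp₁⟩ := lp_bound k l
  obtain ⟨M₂, hM₂, hlp₂⟩ := lp_bound k m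
  have hN := one_le_nk k l m
  set N := nk k l m with hNdef
  set M := max M₁ M₂
  have hM : 1 ≤ M := hM₁.trans (le_max_left _ _)
  set E := (256 * N ^ 12) * (2 * N) ^ 2 * (M * (2 * N)) ^ 4 with hE
  have hN12 : 1 ≤ N ^ 12 := one_le_pow₀ hN
  have hN6 : 1 ≤ N ^ 6 := one_le_pow₀ hN
  have hE1 : 1 ≤ E := by
    refine one_le_mul_of_one_le_of_one_le (one_le_mul_of_one_le_of_one_le (by linarith)
      (one_le_pow₀ (by linarith))) (one_le_pow₀ ?_)
    exact one_le_mul_of_one_le_of_one_le hM (by linarith)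
  have hF1 : 1 ≤ 8 * N ^ 6 := by linarith
  have hlE := Real.log_nonneg hE1
  have hlF := Real.log_nonneg hF1
  refine ⟨totalWeight K * (Real.log E + Real.log (8 * N ^ 6)), by positivity, ?_⟩
  intro C₁ hC₁ r d ω hω hd hdD hpn ξ σ hξ hσ U₁ U₂ V T T' h1 h2 h3 hX
  obtain ⟨T₁, hT₁⟩ := Function.ne_iff.1 h1
  obtain ⟨T₂, hT₂⟩ := Function.ne_iff.1 h2
  obtain ⟨V₀, hV₀⟩ := Function.ne_iff.1 h3
  obtain ⟨n, hn, g, hg, hcoef⟩ := exists_leading hω hξ hσ hT₁ hT₂ hV₀ hX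
  refine ⟨n, hn, ?_⟩
  have e : (fun p : Fin 4 × Fin 2 × Fin 2 ↦ PowerSeries.coeff n
      (auxX k l m r ω (zs ξ) (fun i ↦ PowerSeries.C (σ i)) p.1 p.2.1 p.2.2)) =
      g • fun p : Fin 4 × Fin 2 × Fin 2 ↦ tauA k l m r ξ p.1 *
        (fun q : Fin 2 × Fin 2 ↦ mA k l r ξ σ U₁ q.1 * mB k m r ξ σ U₂ q.2) p.2 := by
    funext p
    rw [hcoef]; rfl
  have hne2 : (fun q : Fin 2 × Fin 2 ↦ mA k l r ξ σ U₁ q.1 * mB k m r ξ σ U₂ q.2) ≠ 0 :=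
    Function.ne_iff.2 ⟨(T₁, T₂), mul_ne_zero hT₁ hT₂⟩
  have hh := height_auxX (d := d) (M := M) hM
    (fun i ↦ (hlp₁ r i).trans (pow_le_pow_left₀ (by linarith) (le_max_left _ _) _))
    (fun i ↦ (hlp₂ r i).trans (pow_le_pow_left₀ (by linarith) (le_max_right _ _) _))
    hd hdD hC₁ hpn hξ hσ n (by
      rw [e]
      exact Function.ne_iff.2 ⟨(V₀, T₁, T₂), mul_ne_zero hg (mul_ne_zero hV₀ (mul_ne_zero hT₁ hT₂))⟩)
  rw [e, logHeight_smul_eq_logHeight _ hg, logHeight_fun_mul_eq h3 hne2,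
    logHeight_fun_mul_eq h1 h2, ← add_assoc] at hh
  refine hh.trans ?_
  have hlog : Real.log (((256 * N ^ 12) * C₁ * (2 * N) ^ 2 * (M * (2 * N)) ^ 4) ^ 4 ^ (r + 1) *
      (8 * N ^ 6) ^ n) = 4 ^ (r + 1) * (Real.log C₁ + Real.log E) + n * Real.log (8 * N ^ 6) := by
    rw [show (256 * N ^ 12) * C₁ * (2 * N) ^ 2 * (M * (2 * N)) ^ 4 = C₁ * E by rw [hE]; ring,
      Real.log_mul (by positivity) (by positivity), Real.log_pow, Real.log_pow,
      Real.log_mul (by positivity) (by positivity)]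
    push_cast; ring
  rw [← hNdef, hlog]
  push_cast
  have hw : (0 : ℝ) ≤ totalWeight K := by positivity
  have p1 : 0 ≤ (totalWeight K : ℝ) * (4 ^ (r + 1) * Real.log (8 * N ^ 6)) := by positivity
  have p2 : 0 ≤ (totalWeight K : ℝ) * (n * Real.log E) := by positivity
  nlinarith

end G
end HE

/-! ### Height of a multiple root -/

namespace HE
set_option linter.unusedSectionVars false
open Polynomial NumberField Height AdmissibleAbsValues

section G
variable {K : Type*} [Field K] [NumberField K]

theorem aeval_X_ps (p : (𝓞 K)[X]) :
    aeval (PowerSeries.X : PowerSeries K) p = (p.map (algebraMap (𝓞 K) K) : PowerSeries K) := by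
  induction p using Polynomial.induction_on' with
  | add p q hp hq => rw [map_add, Polynomial.map_add, Polynomial.coe_add, hp, hq]
  | monomial n a =>
    rw [aeval_monomial, map_monomial, Polynomial.coe_monomial, algMap_ps]
    ext i
    rw [PowerSeries.coeff_C_mul, PowerSeries.coeff_X_pow, PowerSeries.coeff_monomial]
    split_ifs <;> simp

theorem archGauge_X {v : AbsoluteValue K ℝ} (hv : v ∈ archAbsVal (K := K)) (k : ℕ) :
    (archGauge hv (ρ := 1 / 2) (by norm_num) k).P 1 1 PowerSeries.X := by
  change trn v (1 / 2) k PowerSeries.X ≤ 1 * 1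
  calc trn v (1 / 2) k PowerSeries.X
      ≤ ∑ l ∈ Finset.range (k + 1), if l = 1 then (1 : ℝ) else 0 := by
        refine Finset.sum_le_sum fun l _ ↦ ?_
        rw [PowerSeries.coeff_X]
        split_ifs with h
        · rw [h]; norm_num
        · simp
    _ ≤ 1 * 1 := by
      rw [Finset.sum_ite_eq']; split_ifs <;> norm_num

theorem archGauge_geom {v : AbsoluteValue K ℝ} (hv : v ∈ archAbsVal (K := K)) (k : ℕ) {β : K}
    (hβ : v β ≤ 1) :
    (archGauge hv (ρ := 1 / 2) (by norm_num) k).P 2 1 (PowerSeries.mk fun n ↦ β ^ n) := by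
  change trn v (1 / 2) k _ ≤ 2 * 1
  rw [mul_one]
  refine le_trans (Finset.sum_le_sum fun l _ ↦ ?_) (sum_geometric_two_le (k + 1))
  rw [PowerSeries.coeff_mk, map_pow]
  exact mul_le_of_le_one_left (by positivity) (pow_le_one₀ (v.nonneg _) hβ)

theorem gauge_aux (G : Gauge K) {c : ℝ} (hX : G.P 1 1 (PowerSeries.X : PowerSeries K)) {β : K}
    {b : ℝ} (hβ : G.P 1 b (PowerSeries.C (-β)))
    (hg : G.P c 1 (PowerSeries.mk fun n ↦ β ^ n)) (hβ0 : β ≠ 0) (p : (𝓞 K)[X])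
    (q : K[X]) (e : ℕ) (h : p.map (algebraMap (𝓞 K) K) = (X - C β⁻¹) ^ e * q) :
    G.P (pn p * c ^ e) (b ^ e) (q : PowerSeries K) := by
  set g : PowerSeries K := PowerSeries.mk fun n ↦ β ^ n with hgdef
  have hg1 : g * (1 - PowerSeries.C β * PowerSeries.X) = 1 := by
    ext n
    cases n with
    | zero => simp [hgdef]
    | succ n =>
      rw [mul_sub, mul_one, map_sub, ← mul_assoc, PowerSeries.coeff_succ_mul_X,
        PowerSeries.coeff_mul_C]
      simp [hgdef, pow_succ]
  have h2 : (q : PowerSeries K) = (p.map (algebraMap (𝓞 K) K) : PowerSeries K) * g ^ e *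
      PowerSeries.C (-β) ^ e := by
    have h3 : ((X - C β⁻¹ : K[X]) : PowerSeries K) * (g * PowerSeries.C (-β)) = 1 := by
      rw [← hg1, Polynomial.coe_sub, Polynomial.coe_X, Polynomial.coe_C]
      have : PowerSeries.C β⁻¹ * PowerSeries.C β = (1 : PowerSeries K) := by
        rw [← map_mul, inv_mul_cancel₀ hβ0, map_one]
      rw [map_neg]
      linear_combination g * this
    rw [h, Polynomial.coe_mul, Polynomial.coe_pow]
    calc (q : PowerSeries K) = q * (((X - C β⁻¹ : K[X]) : PowerSeries K) *
        (g * PowerSeries.C (-β))) ^ e := by rw [h3, one_pow, mul_one]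
      _ = _ := by ring
  rw [h2]
  have hp : G.P (pn p * 1 ^ p.natDegree) (1 ^ p.natDegree) (aeval PowerSeries.X p) :=
    G.aeval le_rfl le_rfl hX p le_rfl
  rw [aeval_X_ps] at hp
  have := G.mul (G.mul hp (G.pow hg e)) (G.pow hβ e)
  simpa using this

/-- A root of multiplicity `e` of an integral polynomial has height at most `1/e` times the
height of the polynomial. -/
theorem root_height {p : (𝓞 K)[X]} (hp : p ≠ 0) {α : K} {e : ℕ}
    (h : (X - C α) ^ e ∣ p.map (algebraMap (𝓞 K) K)) {E : ℝ} (hE : pn p ≤ E) (hE1 : 1 ≤ E) :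
    e * logHeight₁ α ≤ totalWeight K * (Real.log E + p.natDegree * Real.log 4) := by
  obtain ⟨q, hq⟩ := h
  set d := p.natDegree with hd
  have hinj : Function.Injective (algebraMap (𝓞 K) K) := RingOfIntegers.coe_injective
  have hp' : p.map (algebraMap (𝓞 K) K) ≠ 0 := (Polynomial.map_ne_zero_iff hinj).2 hp
  have hd' : (p.map (algebraMap (𝓞 K) K)).natDegree = d := natDegree_map_eq_of_injective hinj p
  have hq0 : q ≠ 0 := by rintro rfl; exact hp' (by rw [hq, mul_zero])
  have hdeg : e + q.natDegree = d := by
    rw [← hd', hq, natDegree_mul (pow_ne_zero _ (X_sub_C_ne_zero α)) hq0, natDegree_pow]; simp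
  set a : 𝓞 K := p.leadingCoeff with ha
  have ha0 : (a : K) ≠ 0 := by simpa [ha] using hp
  have haq : (a : K) = q.leadingCoeff := by
    have := congrArg leadingCoeff hq
    rw [leadingCoeff_mul, leadingCoeff_pow, leadingCoeff_X_sub_C, one_pow, one_mul,
      leadingCoeff_map_of_injective hinj] at this
    exact this
  have hE0 : 0 ≤ E := by linarith
  have h4 : (1 : ℝ) ≤ 4 ^ d := one_le_pow₀ (by norm_num)
  have harch : ∀ v ∈ archAbsVal (K := K), v (a : K) ≤ E * 4 ^ d := fun v hv ↦ by
    calc v (a : K) ≤ nrm a := arch_le_nrm hv a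
      _ ≤ pn p := nrm_coeff_le p _
      _ ≤ E * 4 ^ d := hE.trans (le_mul_of_one_le_right hE0 h4)
  have hmain : logHeight ![(a : K) * α ^ e, (a : K)] ≤ totalWeight K * Real.log (E * 4 ^ d) := by
    have := logHeight_le_of_local (x := ![(a : K) * α ^ e, (a : K)]) (fun h ↦ ha0 (congrFun h 1))
      0 0 0 0 (C := E * 4 ^ d) (one_le_mul_of_one_le_of_one_le hE1 h4) ?_ ?_
    · simpa using this
    · intro v hv i
      simp only [pow_zero, mul_one]
      fin_cases i
      · change v ((a : K) * α ^ e) ≤ _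
        rw [map_mul, map_pow]
        rcases le_or_gt (v α) 1 with h1 | h1
        · exact (mul_le_of_le_one_right (v.nonneg _) (pow_le_one₀ (v.nonneg _) h1)).trans (harch v hv)
        · have hα : α ≠ 0 := fun h ↦ by rw [h, map_zero] at h1; linarith
          have hρ : (0 : ℝ) ≤ 1 / 2 := by norm_num
          have hvβ : v α⁻¹ ≤ 1 := by rw [map_inv₀]; exact inv_le_one_of_one_le₀ h1.le
          have := gauge_aux (archGauge hv hρ q.natDegree) (c := 2) (β := α⁻¹) (b := v α⁻¹)
            (archGauge_X hv _) (archGauge_C hv hρ _ (by rw [map_neg_eq_map, one_mul])) (archGauge_geom hv _ hvβ)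
            (inv_ne_zero hα) p q e (by rw [inv_inv]; exact hq)
          have := archGauge_coeff hv hρ _ this
          rw [Polynomial.coeff_coe, coeff_natDegree, ← haq, map_inv₀] at this
          have hα0 : 0 < v α := by linarith
          calc v (a : K) * v α ^ e = (v (a : K) * (1 / 2) ^ q.natDegree) * (2 ^ q.natDegree * v α ^ e) := by
                rw [show v (a : K) * (1 / 2) ^ q.natDegree * (2 ^ q.natDegree * v α ^ e) =
                  v (a : K) * ((1 / 2) * 2) ^ q.natDegree * v α ^ e by rw [mul_pow]; ring]
                norm_num
            _ ≤ (pn p * 2 ^ e * (v α)⁻¹ ^ e) * (2 ^ q.natDegree * v α ^ e) := by gcongr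
            _ = pn p * 2 ^ d * ((v α)⁻¹ * v α) ^ e := by rw [← hdeg, pow_add, mul_pow]; ring
            _ = pn p * 2 ^ d := by rw [inv_mul_cancel₀ hα0.ne', one_pow, mul_one]
            _ ≤ E * 4 ^ d := by gcongr; norm_num
      · exact harch v hv
    · intro v hv i
      simp only [pow_zero, mul_one]
      fin_cases i
      · change v ((a : K) * α ^ e) ≤ _
        rw [map_mul, map_pow]
        have ha1 := nonarch_int_le hv a
        rcases le_or_gt (v α) 1 with h1 | h1
        · exact (mul_le_of_le_one_right (v.nonneg _) (pow_le_one₀ (v.nonneg _) h1)).trans ha1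
        · have hα : α ≠ 0 := fun h ↦ by rw [h, map_zero] at h1; linarith
          have hρ : (0 : ℝ) ≤ 1 := zero_le_one
          have hvβ : v α⁻¹ ≤ 1 := by rw [map_inv₀]; exact inv_le_one_of_one_le₀ h1.le
          have := gauge_aux (nonarchGauge hv hρ) (c := 2) (β := α⁻¹) (b := v α⁻¹)
            (fun l ↦ by rw [PowerSeries.coeff_X]; split_ifs <;> simp)
            (nonarchGauge_C hv hρ (by rw [map_neg_eq_map]))
            (fun l ↦ by
              rw [PowerSeries.coeff_mk, map_pow, one_pow, mul_one]
              exact pow_le_one₀ (v.nonneg _) hvβ)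
            (inv_ne_zero hα) p q e (by rw [inv_inv]; exact hq)
          have := this q.natDegree
          rw [Polynomial.coeff_coe, coeff_natDegree, ← haq, map_inv₀, one_pow, mul_one] at this
          have hα0 : 0 < v α := by linarith
          calc v (a : K) * v α ^ e ≤ (v α)⁻¹ ^ e * v α ^ e := by gcongr
            _ = 1 := by rw [← mul_pow, inv_mul_cancel₀ hα0.ne', one_pow]
      · exact nonarch_int_le hv a
  have e2 : logHeight ![(a : K) * α ^ e, (a : K)] = e * logHeight₁ α := by
    rw [← logHeight₁_pow, logHeight₁_eq_logHeight,
      ← logHeight_smul_eq_logHeight ![α ^ e, 1] ha0]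
    congr 1
    ext i; fin_cases i <;> simp
  rw [e2] at hmain
  rwa [Real.log_mul (by positivity) (by positivity), Real.log_pow] at hmain

end G
end HE

/-! ### Wronskians -/

namespace HE
set_option linter.unusedSectionVars false

section Wr
variable {K : Type*} [Field K] [CharZero K]

theorem ps_eq_smul_of_deriv {a b : PowerSeries K} (hb : b ≠ 0)
    (h : PowerSeries.derivative K a * b = a * PowerSeries.derivative K b) : ∃ t : K, a = t • b := by
  set n := b.order.toNat with hn
  have hbn : PowerSeries.coeff n b ≠ 0 := PowerSeries.coeff_order hb
  refine ⟨PowerSeries.coeff n a / PowerSeries.coeff n b, ?_⟩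
  set t := PowerSeries.coeff n a / PowerSeries.coeff n b with ht
  by_contra hne
  set c := a - t • b with hc
  have hc0 : c ≠ 0 := sub_ne_zero.2 hne
  have hcn : PowerSeries.coeff n c = 0 := by
    rw [hc, map_sub, map_smul, smul_eq_mul, ht, div_mul_cancel₀ _ hbn, sub_self]
  have hcb : PowerSeries.derivative K c * b = c * PowerSeries.derivative K b := by
    rw [hc, map_sub, Derivation.map_smul, sub_mul, sub_mul, h, smul_mul_assoc, smul_mul_assoc, mul_comm b]
  obtain ⟨c1, hc1⟩ := PowerSeries.X_pow_order_dvd (φ := c)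
  obtain ⟨b1, hb1⟩ := PowerSeries.X_pow_order_dvd (φ := b)
  have hcN := PowerSeries.coeff_order hc0
  generalize c.order.toNat = N at *
  rw [← hn] at hb1
  have hNn : N ≠ n := by rintro rfl; exact hcN hcn
  have hc10 : PowerSeries.constantCoeff c1 ≠ 0 := by
    rw [hc1, PowerSeries.coeff_X_pow_mul', if_pos le_rfl, Nat.sub_self] at hcN
    simpa using hcN
  have hb10 : PowerSeries.constantCoeff b1 ≠ 0 := by
    rw [hb1, PowerSeries.coeff_X_pow_mul', if_pos le_rfl, Nat.sub_self] at hbn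
    simpa using hbn
  have hX : ∀ (N : ℕ) (f : PowerSeries K), PowerSeries.X * PowerSeries.derivative K (PowerSeries.X ^ N * f) =
      PowerSeries.X ^ N * ((N : PowerSeries K) * f + PowerSeries.X * PowerSeries.derivative K f) := by
    intro N f
    rw [Derivation.leibniz, Derivation.leibniz_pow, PowerSeries.derivative_X]
    cases N with
    | zero => simp
    | succ N => simp only [smul_eq_mul, nsmul_eq_mul, Nat.add_sub_cancel]; push_cast; ring
  have e1 := congrArg (PowerSeries.X * ·) hcb
  rw [← mul_assoc, mul_left_comm, hc1, hb1, hX, hX] at e1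
  have e2 : (PowerSeries.X : PowerSeries K) ^ (N + n) *
      (((N : PowerSeries K) * c1 + PowerSeries.X * PowerSeries.derivative K c1) * b1) =
      PowerSeries.X ^ (N + n) *
      (c1 * ((n : PowerSeries K) * b1 + PowerSeries.X * PowerSeries.derivative K b1)) := by
    rw [pow_add]; linear_combination e1
  have e3 := congrArg PowerSeries.constantCoeff
    (mul_left_cancel₀ (pow_ne_zero _ PowerSeries.X_ne_zero) e2)
  simp only [map_mul, map_add, map_natCast, PowerSeries.constantCoeff_X, zero_mul, add_zero] at e3
  have e4 : (N : K) = n := by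
    have : (N : K) * (PowerSeries.constantCoeff c1 * PowerSeries.constantCoeff b1) =
      n * (PowerSeries.constantCoeff c1 * PowerSeries.constantCoeff b1) := by linear_combination e3
    exact mul_right_cancel₀ (mul_ne_zero hc10 hb10) this
  exact hNn (Nat.cast_injective e4)

end Wr

section Wr2
variable {K A : Type*} [Field K] [CommRing A] [IsDomain A] [Algebra K A]

/-- Nonvanishing of the Wronskian of linearly independent elements. -/
theorem wronskian_ne_zero (δ : Derivation K A A)
    (H : ∀ a b : A, b ≠ 0 → δ a * b = a * δ b → ∃ t : K, a = t • b) (n : ℕ) (v : Fin n → A)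
    (hv : LinearIndependent K v) :
    (Matrix.of fun i j : Fin n ↦ δ^[i] (v j)).det ≠ 0 := by
  induction n with
  | zero => simp
  | succ n ih =>
    intro hdet
    obtain ⟨c, hc0, hc⟩ := Matrix.exists_mulVec_eq_zero_iff.2 hdet
    have hrel : ∀ i : Fin (n + 1), ∑ j, δ^[i] (v j) * c j = 0 := fun i ↦ congrFun hc i
    have hv' : LinearIndependent K (fun j : Fin n ↦ v j.castSucc) :=
      hv.comp _ (Fin.castSucc_injective n)
    have hW := ih _ hv'
    have hker : ∀ u : Fin n → A, (∀ i : Fin n, ∑ j : Fin n, δ^[i] (v j.castSucc) * u j = 0) → u = 0 := by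
      intro u hu
      by_contra hu0
      exact hW (Matrix.exists_mulVec_eq_zero_iff.1 ⟨u, hu0, funext hu⟩)
    set e := c (Fin.last n) with he
    have he0 : e ≠ 0 := by
      intro h0
      apply hc0
      have := hker (fun j ↦ c j.castSucc) fun i ↦ by
        have := hrel i.castSucc
        rw [Fin.sum_univ_castSucc, ← he, h0, mul_zero, add_zero] at this
        exact this
      funext j
      refine Fin.lastCases h0 (fun j ↦ congrFun this j) j
    have hder := hker (fun j ↦ δ (c j.castSucc) * e - c j.castSucc * δ e) fun i ↦ by
      have h1 := hrel i.castSucc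
      have h2 := hrel i.succ
      have h3 := congrArg δ h1
      rw [map_zero, map_sum] at h3
      simp only [Derivation.leibniz, smul_eq_mul, Finset.sum_add_distrib, Fin.val_castSucc,
        Fin.val_succ, Function.iterate_succ_apply'] at h1 h2 h3
      have h4 : ∑ j, δ^[(i : ℕ)] (v j) * δ (c j) = 0 := by
        have h5 : ∑ j, c j * δ (δ^[(i : ℕ)] (v j)) = 0 := by
          rw [← h2]; exact Finset.sum_congr rfl fun j _ ↦ mul_comm _ _
        rw [h5, add_zero] at h3; exact h3
      rw [Fin.sum_univ_castSucc] at h1 h4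
      have h6 : ∑ j : Fin n, δ^[(i : ℕ)] (v j.castSucc) * (δ (c j.castSucc) * e - c j.castSucc * δ e) =
          (∑ j : Fin n, δ^[(i : ℕ)] (v j.castSucc) * δ (c j.castSucc)) * e -
          (∑ j : Fin n, δ^[(i : ℕ)] (v j.castSucc) * c j.castSucc) * δ e := by
        rw [Finset.sum_mul, Finset.sum_mul, ← Finset.sum_sub_distrib]
        exact Finset.sum_congr rfl fun j _ ↦ by ring
      rw [h6]
      linear_combination e * h4 - δ e * h1
    have hconst : ∀ j : Fin n, ∃ t : K, c j.castSucc = t • e := fun j ↦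
      H _ _ he0 (sub_eq_zero.1 (congrFun hder j))
    choose t ht using hconst
    have h0 := hrel 0
    rw [Fin.sum_univ_castSucc] at h0
    simp only [Fin.val_zero, Function.iterate_zero, id_eq, ht, ← he] at h0
    have h1 : (∑ j : Fin n, t j • v j.castSucc + v (Fin.last n)) * e = 0 := by
      rw [add_mul, Finset.sum_mul, ← h0]
      congr 1
      exact Finset.sum_congr rfl fun j _ ↦ by rw [mul_smul_comm, smul_mul_assoc]
    have h2 := (mul_eq_zero.1 h1).resolve_right he0
    rw [Fintype.linearIndependent_iff] at hv
    have := hv (Fin.snoc t 1) (by rw [Fin.sum_univ_castSucc]; simpa using h2) (Fin.last n)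
    simp at this

/-- If a nontrivial combination of the columns vanishes to order `N`, so does the Wronskian,
up to the number of derivatives. -/
theorem dvd_wronskian (δ : Derivation K A A) (π : A) (n N : ℕ) (v : Fin n → A) (c : Fin n → K)
    (hc : c ≠ 0) (hdvd : π ^ N ∣ ∑ j, c j • v j) :
    π ^ (N - (n - 1)) ∣ (Matrix.of fun i j : Fin n ↦ δ^[i] (v j)).det := by
  obtain ⟨j₀, hj₀⟩ := Function.ne_iff.1 hc
  have hδ : ∀ (i : ℕ) (M : ℕ) (F : A), π ^ M ∣ F → π ^ (M - i) ∣ δ^[i] F := by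
    intro i
    induction i with
    | zero => intro M F h; exact h
    | succ i ih =>
      intro M F h
      rw [Function.iterate_succ_apply, add_comm i 1, ← Nat.sub_sub]
      refine ih (M - 1) (δ F) ?_
      obtain ⟨g, rfl⟩ := h
      rw [Derivation.leibniz, Derivation.leibniz_pow]
      refine dvd_add ?_ ?_
      · exact Dvd.dvd.mul_right (pow_dvd_pow π (by omega)) _
      · simp only [smul_eq_mul, nsmul_eq_mul]
        exact ⟨g * ((M : A) * δ π), by ring⟩
  have hlin : ∀ i : ℕ, δ^[i] (∑ j, c j • v j) = ∑ j, c j • δ^[i] (v j) := by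
    intro i
    induction i with
    | zero => rfl
    | succ i ih => rw [Function.iterate_succ_apply', ih, map_sum]
                   simp only [Derivation.map_smul, Function.iterate_succ_apply']
  set Mx : Matrix (Fin n) (Fin n) A := Matrix.of fun i j : Fin n ↦ δ^[i] (v j) with hM
  have h1 : (Mx.updateCol j₀ (fun i ↦ ∑ j, algebraMap K A (c j) • Mx i j)).det =
      algebraMap K A (c j₀) • Mx.det := by
    have := Matrix.det_updateCol_sum Mx j₀ (fun j ↦ algebraMap K A (c j))
    convert this using 3
  have h2 : π ^ (N - (n - 1)) ∣
      (Mx.updateCol j₀ (fun i ↦ ∑ j, algebraMap K A (c j) • Mx i j)).det := by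
    rw [Matrix.det_apply]
    refine Finset.dvd_sum fun σ _ ↦ ?_
    rw [Units.smul_def, zsmul_eq_mul]
    refine Dvd.dvd.mul_left ?_ _
    rw [← Finset.mul_prod_erase _ _ (Finset.mem_univ j₀)]
    refine Dvd.dvd.mul_right ?_ _
    rw [Matrix.updateCol_self]
    have : ∑ j, algebraMap K A (c j) • Mx (σ j₀) j = δ^[(σ j₀ : ℕ)] (∑ j, c j • v j) := by
      rw [hlin]
      exact Finset.sum_congr rfl fun j _ ↦ by rw [hM, Matrix.of_apply, algebraMap_smul]
    rw [this]
    exact (pow_dvd_pow π (by have := (σ j₀).2; omega)).trans (hδ _ _ _ hdvd)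
  rw [h1] at h2
  have hu : IsUnit (algebraMap K A (c j₀)) := (Ne.isUnit hj₀).map _
  rw [smul_eq_mul] at h2
  exact (hu.dvd_mul_left).1 h2

end Wr2
end HE

/-! ### Independence of the radicals -/

namespace HE
set_option linter.unusedSectionVars false
open Polynomial

section
variable {K : Type*} [Field K] {k l m : K}

/-- Infinite descent at `x = 0`: both relations are preserved when all polynomials are divided by
`X`. -/
theorem descent_aux (hk : k ≠ 0) (hl : l ≠ 0) (hm : m ≠ 0) (n : ℕ) : ∀ p0 p1 p2 p3 : K[X],
    p0 ^ 2 + p3 ^ 2 * ((X - C l) * (X - C m)) =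
      X * (X - C k) * (p1 ^ 2 * (X - C l) + p2 ^ 2 * (X - C m)) →
    p0 * p3 = p1 * p2 * (X * (X - C k)) → X ^ n ∣ p0 := by
  induction n with
  | zero => intro p0 p1 p2 p3 _ _; simp
  | succ n ih =>
    intro p0 p1 p2 p3 h1 h2
    have hX : (X : K[X]) ≠ 0 := X_ne_zero
    have a1 := congrArg (eval 0) h1
    have a2 := congrArg (eval 0) h2
    simp at a1 a2
    have b : eval 0 p0 = 0 ∧ eval 0 p3 = 0 := by
      rcases a2 with h | h
      · rw [h] at a1; simp [hl, hm] at a1; exact ⟨h, a1⟩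
      · rw [h] at a1; simp at a1; exact ⟨a1, h⟩
    obtain ⟨q0, rfl⟩ := (X_dvd_iff (f := p0)).2 (by rw [coeff_zero_eq_eval_zero]; exact b.1)
    obtain ⟨q3, rfl⟩ := (X_dvd_iff (f := p3)).2 (by rw [coeff_zero_eq_eval_zero]; exact b.2)
    have h1' : X * (q0 ^ 2 + q3 ^ 2 * ((X - C l) * (X - C m))) =
      (X - C k) * (p1 ^ 2 * (X - C l) + p2 ^ 2 * (X - C m)) :=
      mul_left_cancel₀ hX (by linear_combination h1)
    have h2' : X * (q0 * q3) = p1 * p2 * (X - C k) :=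
      mul_left_cancel₀ hX (by linear_combination h2)
    have a1 := congrArg (eval 0) h1'
    have a2 := congrArg (eval 0) h2'
    simp [hk] at a1 a2
    have b : eval 0 p1 = 0 ∧ eval 0 p2 = 0 := by
      rcases a2 with h | h
      · rw [h] at a1; simp [hl, hm] at a1; exact ⟨h, a1⟩
      · rw [h] at a1; simp [hl, hm] at a1; exact ⟨a1, h⟩
    obtain ⟨q1, rfl⟩ := (X_dvd_iff (f := p1)).2 (by rw [coeff_zero_eq_eval_zero]; exact b.1)
    obtain ⟨q2, rfl⟩ := (X_dvd_iff (f := p2)).2 (by rw [coeff_zero_eq_eval_zero]; exact b.2)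
    rw [pow_succ']
    refine mul_dvd_mul_left X (ih q0 q1 q2 q3 ?_ ?_)
    · exact mul_left_cancel₀ hX (by linear_combination h1')
    · exact mul_left_cancel₀ hX (by linear_combination h2')

theorem sq_aux (hlm : l ≠ m) {q0 q3 : K[X]} (h : q0 ^ 2 = q3 ^ 2 * ((X - C l) * (X - C m))) :
    q0 = 0 ∧ q3 = 0 := by
  classical
  have key : q3 = 0 := by
    by_contra h3
    have hl : (X - C l) ≠ 0 := X_sub_C_ne_zero l
    have hm : (X - C m) ≠ 0 := X_sub_C_ne_zero m
    have hr : q3 ^ 2 * ((X - C l) * (X - C m)) ≠ 0 := mul_ne_zero (pow_ne_zero _ h3) (mul_ne_zero hl hm)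
    have hq0 : q0 ^ 2 ≠ 0 := by rw [h]; exact hr
    have := congrArg (rootMultiplicity l) h
    rw [rootMultiplicity_mul hr, rootMultiplicity_mul (mul_ne_zero hl hm), pow_two, pow_two,
      rootMultiplicity_mul (by rwa [← pow_two]), rootMultiplicity_mul (mul_ne_zero h3 h3),
      rootMultiplicity_X_sub_C_self, rootMultiplicity_X_sub_C, if_neg hlm] at this
    omega
  refine ⟨?_, key⟩
  rw [key] at h
  simpa using h

variable [CharZero K] {S : Type*} [CommRing S] [IsDomain S] [Algebra K S]

/-- Independence of `1, y₁, y₂, y₃` over the polynomials in `x`. -/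
theorem indep_y (hk : k ≠ 0) (hl : l ≠ 0) (hm : m ≠ 0) (hlm : l ≠ m) {z : Fin 4 → S}
    (h1 : z 1 ^ 2 = z 0 ^ 2 - algebraMap K S k) (h2 : z 2 ^ 2 = z 0 ^ 2 - algebraMap K S l)
    (h3 : z 3 ^ 2 = z 0 ^ 2 - algebraMap K S m)
    (hinj : Function.Injective (aeval (R := K) (z 0 ^ 2))) (p0 p1 p2 p3 : K[X])
    (h : aeval (z 0 ^ 2) p0 + aeval (z 0 ^ 2) p1 * (z 0 * z 1 * z 2) +
      aeval (z 0 ^ 2) p2 * (z 0 * z 1 * z 3) + aeval (z 0 ^ 2) p3 * (z 2 * z 3) = 0) : p0 = 0 := by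
  have irr : ∀ q0 q3 : K[X], aeval (z 0 ^ 2) q0 + aeval (z 0 ^ 2) q3 * (z 2 * z 3) = 0 →
      q0 = 0 ∧ q3 = 0 := by
    intro q0 q3 hq
    refine sq_aux hlm (hinj ?_)
    simp only [map_mul, map_pow, map_sub, aeval_X, aeval_C]
    rw [← h2, ← h3]
    linear_combination (aeval (z 0 ^ 2) q0 - aeval (z 0 ^ 2) q3 * (z 2 * z 3)) * hq
  have := irr (p0 ^ 2 + p3 ^ 2 * ((X - C l) * (X - C m)) -
      X * (X - C k) * (p1 ^ 2 * (X - C l) + p2 ^ 2 * (X - C m)))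
      (2 * (p0 * p3 - p1 * p2 * (X * (X - C k)))) (by
    simp only [map_mul, map_pow, map_sub, map_add, aeval_X, aeval_C, map_ofNat]
    rw [← h1, ← h2, ← h3]
    linear_combination (aeval (z 0 ^ 2) p0 + aeval (z 0 ^ 2) p3 * (z 2 * z 3) -
      aeval (z 0 ^ 2) p1 * (z 0 * z 1 * z 2) - aeval (z 0 ^ 2) p2 * (z 0 * z 1 * z 3)) * h)
  have e2 := (mul_eq_zero.1 this.2).resolve_left (by norm_num)
  by_contra hp
  have hd := descent_aux hk hl hm (p0.natDegree + 1) p0 p1 p2 p3 (sub_eq_zero.1 this.1)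
    (sub_eq_zero.1 e2)
  have := natDegree_le_of_dvd hd hp
  simp at this

end
end HE

/-! ### Expansion of one auxiliary section in the second point -/

namespace HE
set_option linter.unusedSectionVars false
open Polynomial

section Gen
variable {R S : Type*} [CommRing R] [CommRing S] [Algebra R S]

/-- The polynomials `f_j` in the expansion of `auxX 0 0 0`. -/
noncomputable def fz (k l m : R) (r : ℕ) (ω : Fin 4 → Fin 4 → R[X]) : Fin 7 → R[X] :=
  let a := lp k l r
  let b := lp k m r
  let H := X * (X - C k) * (X - C l) * (X - C m) * (a 1 * b 1 * a 3 * b 3)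
  ![-(C (k * l * m) * (ω 2 0 * H)),
    -(C k * (ω 1 0 * (a 0 * a 1 * b 0 * b 1))) + C (l * m) * (ω 2 0 * H) +
      ω 3 0 * (a 1 * a 2 * b 1 * b 2),
    ω 1 0 * (a 0 * a 1 * b 0 * b 1),
    C (k ^ 2) * (ω 1 0 * (X * (X - C k) * (a 2 * b 2 * a 3 * b 3))) -
      C k * (ω 3 0 * (X * (X - C k) * (a 0 * b 0 * a 3 * b 3))),
    ω 2 0 * (a 2 * a 0 * b 2 * b 0) + ω 3 0 * (X * (X - C k) * (a 0 * b 0 * a 3 * b 3)),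
    -(C k * (ω 1 0 * (a 3 * a 2 * b 1 * b 0))) -
      C m * ((X - C m) * (ω 2 0 * (a 2 * a 0 * b 3 * b 1))) + ω 3 0 * (a 3 * a 0 * b 1 * b 2),
    -(C k * (ω 1 0 * (a 1 * a 0 * b 3 * b 2))) -
      C l * ((X - C l) * (ω 2 0 * (a 3 * a 1 * b 2 * b 0))) + ω 3 0 * (a 1 * a 2 * b 3 * b 0)]

/-- The functions of `σ` multiplying the `f_j`. -/
def gz (s : Fin 4 → S) : Fin 7 → S :=
  ![1, s 0 ^ 2, (s 0 ^ 2) ^ 2, s 2 * s 3, s 0 ^ 2 * (s 2 * s 3), s 0 * s 1 * s 2, s 0 * s 1 * s 3]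

/-- The monomials `1, y₁, y₂, y₃` as sets of indices. -/
def chi : Fin 7 → Finset (Fin 4) := ![∅, ∅, ∅, {2, 3}, {2, 3}, {0, 1, 2}, {0, 1, 3}]

theorem auxX_eq {k l m : R} {z s : Fin 4 → S} (hz : IsPt k l m z) (hs : IsPt k l m s)
    {r : ℕ} {ω : Fin 4 → Fin 4 → R[X]} (h0 : ω 0 0 = 0) :
    auxX k l m r ω z s 0 0 0 =
      ∑ j, gz s j * ((∏ i ∈ chi j, z i) * aeval (z 0 ^ 2) (fz k l m r ω j)) := by
  simp only [auxX, Fin.sum_univ_four, Fin.sum_univ_seven, mA, mB, sdm, omA, h0, fz, gz, chi, tw,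
    liftA, liftB, liftPt, Matrix.cons_val, map_mul, map_add, map_neg, map_sub, aeval_X, aeval_C,
    ← hz.h1, ← hz.h2, ← hz.h3, map_zero, map_pow]
  have e1 : ∏ i ∈ ({2, 3} : Finset (Fin 4)), z i = z 2 * z 3 := by simp
  have e2 : ∏ i ∈ ({0, 1, 2} : Finset (Fin 4)), z i = z 0 * z 1 * z 2 := by
    simp [mul_assoc]
  have e3 : ∏ i ∈ ({0, 1, 3} : Finset (Fin 4)), z i = z 0 * z 1 * z 3 := by
    simp [mul_assoc]
  rw [e1, e2, e3, Finset.prod_empty]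
  have hs1 := hs.h1
  generalize aeval (z 0 ^ 2) (lp k l r 0) = a0
  generalize aeval (z 0 ^ 2) (lp k l r 1) = a1
  generalize aeval (z 0 ^ 2) (lp k l r 2) = a2
  generalize aeval (z 0 ^ 2) (lp k l r 3) = a3
  generalize aeval (z 0 ^ 2) (lp k m r 0) = b0
  generalize aeval (z 0 ^ 2) (lp k m r 1) = b1
  generalize aeval (z 0 ^ 2) (lp k m r 2) = b2
  generalize aeval (z 0 ^ 2) (lp k m r 3) = b3
  generalize aeval (z 0 ^ 2) (ω 1 0) = w1
  generalize aeval (z 0 ^ 2) (ω 2 0) = w2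
  generalize aeval (z 0 ^ 2) (ω 3 0) = w3
  generalize algebraMap R S k = k' at *
  generalize algebraMap R S l = l'
  generalize algebraMap R S m = m'
  linear_combination (a1 * a0 * b1 * b0 * w1 * s 0 ^ 2 +
    l' * m' * (z 0 * z 1 * z 2 * a3) * a1 * (z 0 * z 1 * z 3 * b3) * b1 * (z 2 * z 3) * w2 +
    (z 0 * z 1 * z 2 * a3) * a0 * (z 0 * z 1 * z 3 * b3) * b0 * w3 * s 2 * s 3) * hs1

end Gen

section Dom
variable {R : Type*} [CommRing R] [IsDomain R] [CharZero R] {k l m : R}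

theorem lp_ne_zero (k l : R) (r : ℕ) (i : Fin 4) : lp k l r i ≠ 0 := by
  have h012 : ∀ r, ∀ i : Fin 4, i ≠ 3 → lp k l r i ≠ 0 := fun r i hi ↦ ((lp_deg k l r).1 i hi).1.ne_zero
  by_cases hi : i = 3
  · subst hi
    induction r with
    | zero => simp [lp]
    | succ r ih =>
      have := h012 r 0 (by decide)
      have := h012 r 1 (by decide)
      have := h012 r 2 (by decide)
      simp [lp, *]
  · exact h012 r i hi

/-- The three coefficients free of radicals already determine the alternating form. -/
theorem omega_eq_zero (hk : k ≠ 0) (hl : l ≠ 0) (hm : m ≠ 0) {r : ℕ} {ω : Fin 4 → Fin 4 → R[X]}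
    (hω : Wedge ω (tauP k l m r)) (h0 : fz k l m r ω 0 = 0) (h1 : fz k l m r ω 1 = 0)
    (h2 : fz k l m r ω 2 = 0) (U V : Fin 4) : ω U V = 0 := by
  have hX : (X : R[X]) ≠ 0 := X_ne_zero
  have hc : ∀ c : R, (X - C c) ≠ 0 := X_sub_C_ne_zero
  have w1 : ω 1 0 = 0 := by
    simpa [fz, lp_ne_zero] using h2
  have w2 : ω 2 0 = 0 := by
    simpa [fz, lp_ne_zero, hX, hc, hk, hl, hm] using h0
  have w3 : ω 3 0 = 0 := by
    simpa [fz, lp_ne_zero, w1, w2] using h1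
  have w : ∀ U, ω U 0 = 0 := by
    intro U
    fin_cases U
    · exact hω.diag 0
    · exact w1
    · exact w2
    · exact w3
  have hτ : tauP k l m r 0 ≠ 0 := by
    simp [tauP, lp_ne_zero]
  have := hω.rel U V 0
  rw [w V, hω.anti 0 U, w U] at this
  simpa [hτ] using this

end Dom
end HE

/-! ### Polynomial families of uniformly bounded size -/

namespace HE
set_option linter.unusedSectionVars false
open Polynomial NumberField

section
variable {K : Type*} [Field K] [NumberField K] {ι : Type*}

/-- A family of polynomials over `𝓞 K` whose degrees are `O(D)` and whose norms are
`exp (O(D))`, uniformly in the index. -/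
def Unif (D : ι → ℕ) (p : ι → (𝓞 K)[X]) : Prop :=
  ∃ C : ℕ, 1 ≤ C ∧ ∀ i, (p i).natDegree ≤ C * D i ∧ pn (p i) ≤ (C : ℝ) ^ D i

variable {D : ι → ℕ} {p q : ι → (𝓞 K)[X]}

theorem Unif.add (hD : ∀ i, D i ≠ 0) (hp : Unif D p) (hq : Unif D q) :
    Unif D fun i ↦ p i + q i := by
  obtain ⟨A, hA, hp⟩ := hp
  obtain ⟨B, hB, hq⟩ := hq
  refine ⟨A + B, by omega, fun i ↦ ⟨?_, ?_⟩⟩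
  · refine (natDegree_add_le _ _).trans (max_le ?_ ?_)
    · exact (hp i).1.trans (by gcongr; omega)
    · exact (hq i).1.trans (by gcongr; omega)
  · refine (pn_add_le _ _).trans ((add_le_add (hp i).2 (hq i).2).trans ?_)
    push_cast
    exact pow_add_pow_le (by positivity) (by positivity) (hD i)

theorem Unif.mul (hp : Unif D p) (hq : Unif D q) : Unif D fun i ↦ p i * q i := by
  obtain ⟨A, hA, hp⟩ := hp
  obtain ⟨B, hB, hq⟩ := hq
  have : 1 ≤ A * B := Nat.mul_pos hA hB
  refine ⟨A + B + A * B, by omega, fun i ↦ ⟨?_, ?_⟩⟩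
  · refine natDegree_mul_le.trans ((add_le_add (hp i).1 (hq i).1).trans ?_)
    rw [← add_mul]
    exact Nat.mul_le_mul_right _ (by omega)
  · refine (pn_mul_le_of (hp i).2 (hq i).2).trans ?_
    rw [← mul_pow]
    gcongr
    push_cast
    have : (0 : ℝ) ≤ A + B := by positivity
    linarith

theorem Unif.neg (hp : Unif D p) : Unif D fun i ↦ -p i := by
  obtain ⟨A, hA, hp⟩ := hp
  exact ⟨A, hA, fun i ↦ by simpa using hp i⟩

theorem Unif.sub (hD : ∀ i, D i ≠ 0) (hp : Unif D p) (hq : Unif D q) :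
    Unif D fun i ↦ p i - q i := by
  simpa [sub_eq_add_neg] using hp.add hD hq.neg

theorem Unif.const (hD : ∀ i, D i ≠ 0) (p : (𝓞 K)[X]) : Unif D fun _ ↦ p := by
  obtain ⟨n, hn⟩ := exists_nat_ge (pn p)
  refine ⟨p.natDegree + n + 1, by omega, fun i ↦ ⟨?_, hn.trans ?_⟩⟩
  · have := hD i
    calc p.natDegree ≤ (p.natDegree + n + 1) * 1 := by omega
      _ ≤ _ := by gcongr; omega
  · have h1 : (1 : ℝ) ≤ ((p.natDegree + n + 1 : ℕ) : ℝ) := by exact_mod_cast (by omega)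
    refine le_trans ?_ (le_self_pow₀ h1 (hD i))
    exact_mod_cast (by omega)

theorem Unif.derivative (hD : ∀ i, D i ≠ 0) (hp : Unif D p) :
    Unif D fun i ↦ derivative (p i) := by
  obtain ⟨A, hA, hp⟩ := hp
  refine ⟨2 * A * A, by nlinarith, fun i ↦ ⟨?_, ?_⟩⟩
  · refine (natDegree_derivative_le _).trans ((Nat.sub_le _ _).trans ((hp i).1.trans ?_))
    gcongr; nlinarith
  · refine (pn_derivative_le _ (hp i).1).trans ?_
    have h1 : (1 : ℝ) ≤ A := by exact_mod_cast hA
    have h2 : ((A * D i : ℕ) : ℝ) ≤ (2 * A : ℝ) ^ D i := by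
      push_cast
      rw [mul_pow, mul_comm]
      have : (D i : ℝ) ≤ 2 ^ D i := by exact_mod_cast (Nat.lt_two_pow_self).le
      gcongr
      exact le_self_pow₀ h1 (hD i)
    calc ((A * D i : ℕ) : ℝ) * pn (p i) ≤ (2 * A : ℝ) ^ D i * (A : ℝ) ^ D i := by
          gcongr
          · exact pn_nonneg _
          · exact (hp i).2
      _ = _ := by rw [← mul_pow]; push_cast; rfl

theorem Unif.sum {J : Type*} (hD : ∀ i, D i ≠ 0) (s : Finset J) {P : J → ι → (𝓞 K)[X]}
    (h : ∀ j ∈ s, Unif D (P j)) : Unif D fun i ↦ ∑ j ∈ s, P j i := by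
  classical
  induction s using Finset.induction_on with
  | empty => simpa using Unif.const hD (0 : (𝓞 K)[X])
  | insert a s ha ih =>
    simp only [Finset.sum_insert ha]
    exact (h a (by simp)).add hD (ih fun j hj ↦ h j (by simp [hj]))

theorem Unif.prod {J : Type*} (hD : ∀ i, D i ≠ 0) (s : Finset J) {P : J → ι → (𝓞 K)[X]}
    (h : ∀ j ∈ s, Unif D (P j)) : Unif D fun i ↦ ∏ j ∈ s, P j i := by
  classical
  induction s using Finset.induction_on with
  | empty => simpa using Unif.const hD (1 : (𝓞 K)[X])
  | insert a s ha ih =>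
    simp only [Finset.prod_insert ha]
    exact (h a (by simp)).mul (ih fun j hj ↦ h j (by simp [hj]))

theorem Unif.det {n : ℕ} (hD : ∀ i, D i ≠ 0) {P : Fin n → Fin n → ι → (𝓞 K)[X]}
    (h : ∀ a b, Unif D (P a b)) : Unif D fun i ↦ (Matrix.of fun a b ↦ P a b i).det := by
  simp only [Matrix.det_apply']
  refine Unif.sum hD _ fun σ _ ↦ Unif.mul ?_ (Unif.prod hD _ fun j _ ↦ by simpa using h _ _)
  exact Unif.const hD _

/-- Uniformity over finitely many families at once. -/
theorem Unif.finite {J : Type*} [Finite J] {P : J → ι → (𝓞 K)[X]} (h : ∀ j, Unif D (P j)) :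
    ∃ C : ℕ, 1 ≤ C ∧ ∀ j i, (P j i).natDegree ≤ C * D i ∧ pn (P j i) ≤ (C : ℝ) ^ D i := by
  have := Fintype.ofFinite J
  choose A hA hP using h
  refine ⟨1 + ∑ j, A j, by omega, fun j i ↦ ?_⟩
  have : A j ≤ 1 + ∑ j, A j := (Finset.single_le_sum (f := A) (fun _ _ ↦ Nat.zero_le _)
    (Finset.mem_univ j)).trans (by omega)
  exact ⟨(hP j i).1.trans (by gcongr), (hP j i).2.trans (by gcongr)⟩

/-- The index set of pairs `(r, ω)` with `ω` of controlled size. -/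
abbrev Dat (K : Type*) [Field K] [NumberField K] (C₁ : ℝ) : Type _ :=
  {d : ℕ × (Fin 4 → Fin 4 → (𝓞 K)[X]) // (∀ U V, (d.2 U V).natDegree ≤ 4 ^ (d.1 + 1)) ∧
    ∀ U V, pn (d.2 U V) ≤ C₁ ^ 4 ^ (d.1 + 1)}

theorem Unif.lp (k l : 𝓞 K) (C₁ : ℝ) (i : Fin 4) :
    Unif (fun d : Dat K C₁ ↦ 4 ^ (d.1.1 + 1)) fun d ↦ lp k l d.1.1 i := by
  obtain ⟨M, hM, h⟩ := lp_bound k l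
  obtain ⟨n, hn⟩ := exists_nat_ge M
  have hn1 : (1 : ℝ) ≤ n := hM.trans hn
  have hn1' : 1 ≤ n := by exact_mod_cast hn1
  refine ⟨n, hn1', fun d ↦ ⟨?_, ?_⟩⟩
  · have h1 : (HE.lp k l d.1.1 i).natDegree ≤ 2 * 4 ^ d.1.1 := by
      by_cases hi : i = 3
      · subst hi; exact (lp_deg k l _).2.trans (Nat.sub_le _ _)
      · exact ((lp_deg k l _).1 i hi).2.le
    have h2 : 1 * (4 ^ d.1.1 * 4) ≤ n * (4 ^ d.1.1 * 4) := Nat.mul_le_mul_right _ hn1'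
    show _ ≤ n * 4 ^ (d.1.1 + 1)
    rw [pow_succ]
    show (HE.lp k l d.1.1 i).natDegree ≤ _
    omega
  · refine (h _ _).trans ((pow_le_pow_left₀ (by linarith) hn _).trans ?_)
    exact pow_le_pow_right₀ hn1 (Nat.pow_le_pow_right (by norm_num) (by omega))

theorem Unif.omega (C₁ : ℝ) (U V : Fin 4) :
    Unif (fun d : Dat K C₁ ↦ 4 ^ (d.1.1 + 1)) fun d ↦ d.1.2 U V := by
  obtain ⟨n, hn⟩ := exists_nat_ge |C₁|
  refine ⟨n + 1, by omega, fun d ↦ ⟨(d.2.1 U V).trans (Nat.le_mul_of_pos_left _ (by omega)), ?_⟩⟩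
  refine (d.2.2 U V).trans ((le_abs_self _).trans ?_)
  rw [abs_pow]
  gcongr
  push_cast
  linarith

theorem Unif.fz (k l m : 𝓞 K) (C₁ : ℝ) (j : Fin 7) :
    Unif (fun d : Dat K C₁ ↦ 4 ^ (d.1.1 + 1)) fun d ↦ fz k l m d.1.1 d.1.2 j := by
  have hD : ∀ d : Dat K C₁, 4 ^ (d.1.1 + 1) ≠ 0 := fun d ↦ by positivity
  have a := Unif.lp k l C₁
  have b := Unif.lp k m C₁
  have w := Unif.omega (K := K) C₁
  have c := fun p : (𝓞 K)[X] ↦ Unif.const (D := fun d : Dat K C₁ ↦ 4 ^ (d.1.1 + 1)) hD p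
  have m4 : ∀ {p q r s : Dat K C₁ → (𝓞 K)[X]}, Unif (fun d : Dat K C₁ ↦ 4 ^ (d.1.1 + 1)) p →
      Unif (fun d : Dat K C₁ ↦ 4 ^ (d.1.1 + 1)) q → Unif (fun d : Dat K C₁ ↦ 4 ^ (d.1.1 + 1)) r →
      Unif (fun d : Dat K C₁ ↦ 4 ^ (d.1.1 + 1)) s →
      Unif (fun d : Dat K C₁ ↦ 4 ^ (d.1.1 + 1)) fun d ↦ p d * q d * r d * s d :=
    fun h1 h2 h3 h4 ↦ ((h1.mul h2).mul h3).mul h4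
  have H := (c (X * (X - C k) * (X - C l) * (X - C m))).mul (m4 (a 1) (b 1) (a 3) (b 3))
  fin_cases j
  · exact ((c _).mul ((w 2 0).mul H)).neg
  · exact ((((c _).mul ((w 1 0).mul (m4 (a 0) (a 1) (b 0) (b 1)))).neg).add hD
      ((c _).mul ((w 2 0).mul H))).add hD ((w 3 0).mul (m4 (a 1) (a 2) (b 1) (b 2)))
  · exact (w 1 0).mul (m4 (a 0) (a 1) (b 0) (b 1))
  · exact ((c _).mul ((w 1 0).mul ((c (X * (X - C k))).mul (m4 (a 2) (b 2) (a 3) (b 3))))).sub hD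
      ((c _).mul ((w 3 0).mul ((c (X * (X - C k))).mul (m4 (a 0) (b 0) (a 3) (b 3)))))
  · exact ((w 2 0).mul (m4 (a 2) (a 0) (b 2) (b 0))).add hD
      ((w 3 0).mul ((c (X * (X - C k))).mul (m4 (a 0) (b 0) (a 3) (b 3))))
  · exact (((c _).mul ((w 1 0).mul (m4 (a 3) (a 2) (b 1) (b 0)))).neg.sub hD
      ((c _).mul ((c (X - C m)).mul ((w 2 0).mul (m4 (a 2) (a 0) (b 3) (b 1)))))).add hD
      ((w 3 0).mul (m4 (a 3) (a 0) (b 1) (b 2)))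
  · exact (((c _).mul ((w 1 0).mul (m4 (a 1) (a 0) (b 3) (b 2)))).neg.sub hD
      ((c _).mul ((c (X - C l)).mul ((w 2 0).mul (m4 (a 3) (a 1) (b 2) (b 0)))))).add hD
      ((w 3 0).mul (m4 (a 1) (a 2) (b 3) (b 0)))

end
end HE

/-! ### The derivation `2 B d/dx` -/

namespace HE
set_option linter.unusedSectionVars false
open Polynomial NumberField

section
variable {K : Type*} [Field K]

theorem aeval_lin_ps (a c : K) (p : K[X]) :
    aeval (PowerSeries.C a - PowerSeries.C c * PowerSeries.X : PowerSeries K) p =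
      ((p.comp (C a - C c * X) : K[X]) : PowerSeries K) := by
  have h : (PowerSeries.C a - PowerSeries.C c * PowerSeries.X : PowerSeries K) =
      Polynomial.coeToPowerSeries.algHom K (C a - C c * X) := by
    simp [Polynomial.coeToPowerSeries.algHom_apply]
  rw [h, aeval_algHom_apply]
  simp [Polynomial.coeToPowerSeries.algHom_apply, comp_eq_aeval]

theorem comp_lin_back {a c : K} (hc : c ≠ 0) (p : K[X]) :
    (p.comp (C a - C c * X)).comp (C c⁻¹ * (C a - X)) = p := by
  rw [comp_assoc]
  have : (C a - C c * X).comp (C c⁻¹ * (C a - X)) = (X : K[X]) := by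
    simp only [sub_comp, C_comp, mul_comp, X_comp]
    rw [← mul_assoc, ← C_mul, mul_inv_cancel₀ hc]
    simp
  rw [this, comp_X]

theorem aeval_lin_inj {a c : K} (hc : c ≠ 0) : Function.Injective
    (aeval (R := K) (PowerSeries.C a - PowerSeries.C c * PowerSeries.X : PowerSeries K)) := by
  intro p q h
  rw [aeval_lin_ps, aeval_lin_ps] at h
  rw [← comp_lin_back (a := a) hc p, ← comp_lin_back (a := a) hc q, Polynomial.coe_injective K h]

theorem dvd_of_X_dvd {a c : K} (hc : c ≠ 0) {p : K[X]} {e : ℕ}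
    (h : PowerSeries.X ^ e ∣
      aeval (PowerSeries.C a - PowerSeries.C c * PowerSeries.X : PowerSeries K) p) :
    (X - C a) ^ e ∣ p := by
  rw [aeval_lin_ps, PowerSeries.X_pow_dvd_iff] at h
  have h1 : X ^ e ∣ p.comp (C a - C c * X) := by
    rw [Polynomial.X_pow_dvd_iff]
    intro d hd
    simpa using h d hd
  obtain ⟨q, hq⟩ := h1
  refine ⟨C (-c⁻¹) ^ e * q.comp (C c⁻¹ * (C a - X)), ?_⟩
  rw [← comp_lin_back (a := a) hc p, hq]
  simp only [mul_comp, pow_comp, X_comp]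
  rw [← mul_assoc, ← mul_pow]
  congr 2
  simp only [C_neg]
  ring

end

section
variable {R : Type*} [CommRing R]

/-- The branch points `0, k, l, m`. -/
def ee (k l m : R) : Fin 4 → R := ![0, k, l, m]

/-- The operator `2 B d/dx + ∑_{i ∈ χ} B / (x - e_i)`, i.e. the action of the derivation
`2 B d/dx` on `p ↦ y_χ p`. -/
noncomputable def Dop (k l m : R) (χ : Finset (Fin 4)) (p : R[X]) : R[X] :=
  2 * (∏ j, (X - C (ee k l m j))) * derivative p +
    (∑ i ∈ χ, ∏ j ∈ Finset.univ.erase i, (X - C (ee k l m j))) * p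

end

section
variable {K : Type*} [Field K] [NumberField K] {k l m : 𝓞 K} {ξ : Fin 4 → K}

theorem aeval_ps_map (y : PowerSeries K) (p : (𝓞 K)[X]) :
    aeval y p = aeval y (p.map (algebraMap (𝓞 K) K)) := by
  rw [aeval_def, aeval_def, eval₂_map]
  rfl

theorem aeval_ee (h : IsPt k l m ξ) (i : Fin 4) :
    aeval (zs ξ 0 ^ 2) (X - C (ee k l m i)) = zs ξ i ^ 2 := by
  have hz := zs_isPt' h
  rw [map_sub, aeval_X, aeval_C]
  fin_cases i
  · simp [ee]
  · exact hz.h1.symm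
  · exact hz.h2.symm
  · exact hz.h3.symm

/-- The derivation `2 B d/dx`, in terms of the parameter `w`. -/
noncomputable def dlt (ξ : Fin 4 → K) : Derivation K (PowerSeries K) (PowerSeries K) :=
  (PowerSeries.C (-(2 * ∏ j, ξ j ^ 2)⁻¹) * ∏ j, zs ξ j ^ 2) • PowerSeries.derivative K

theorem dlt_apply (f : PowerSeries K) : dlt ξ f =
    (PowerSeries.C (-(2 * ∏ j, ξ j ^ 2)⁻¹) * ∏ j, zs ξ j ^ 2) * PowerSeries.derivative K f := rfl

theorem zs_ne_zero {i : Fin 4} (h : ξ i ≠ 0) : zs ξ i ≠ 0 := fun h0 ↦ h <| by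
  rw [← constantCoeff_zs ξ i, h0, map_zero]

theorem dlt_sq (h : ∀ i, ξ i ≠ 0) (i : Fin 4) : dlt ξ (zs ξ i ^ 2) = 2 * ∏ j, zs ξ j ^ 2 := by
  have h0 : ∏ j, ξ j ^ 2 ≠ 0 := Finset.prod_ne_zero_iff.2 fun i _ ↦ pow_ne_zero _ (h i)
  have hd : PowerSeries.derivative K (zs ξ i ^ 2) = - PowerSeries.C (4 * ∏ j, ξ j ^ 2) := by
    rw [zs_sq, map_sub, PowerSeries.derivative_C, Derivation.leibniz, PowerSeries.derivative_C,
      PowerSeries.derivative_X]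
    simp
  rw [dlt_apply, hd]
  have e : (PowerSeries.C (-(2 * ∏ j, ξ j ^ 2)⁻¹) * -PowerSeries.C (4 * ∏ j, ξ j ^ 2) :
      PowerSeries K) = 2 := by
    rw [← map_neg, ← map_mul]
    have : -(2 * ∏ j, ξ j ^ 2)⁻¹ * -(4 * ∏ j, ξ j ^ 2) = 2 := by field_simp; norm_num
    rw [this, map_ofNat]
  linear_combination (∏ j, zs ξ j ^ 2) * e

theorem dlt_zs (h : ∀ i, ξ i ≠ 0) (i : Fin 4) :
    dlt ξ (zs ξ i) = zs ξ i * ∏ j ∈ Finset.univ.erase i, zs ξ j ^ 2 := by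
  have h1 := dlt_sq h i
  rw [pow_two, Derivation.leibniz, ← Finset.mul_prod_erase _ _ (Finset.mem_univ i)] at h1
  simp only [smul_eq_mul] at h1
  have h2 : (2 * zs ξ i : PowerSeries K) ≠ 0 := by
    refine mul_ne_zero ?_ (zs_ne_zero (h i))
    have : (PowerSeries.C (2 : K)) ≠ 0 := by
      rw [Ne, ← map_zero PowerSeries.C, PowerSeries.C_injective.eq_iff]; norm_num
    rwa [map_ofNat] at this
  refine mul_left_cancel₀ h2 ?_
  linear_combination h1

theorem dlt_prod (h : ∀ i, ξ i ≠ 0) (χ : Finset (Fin 4)) :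
    dlt ξ (∏ i ∈ χ, zs ξ i) =
      (∏ i ∈ χ, zs ξ i) * ∑ i ∈ χ, ∏ j ∈ Finset.univ.erase i, zs ξ j ^ 2 := by
  induction χ using Finset.induction_on with
  | empty => simp
  | insert a s ha ih =>
    rw [Finset.prod_insert ha, Finset.sum_insert ha, Derivation.leibniz, ih, dlt_zs h]
    simp only [smul_eq_mul]
    ring

theorem dlt_Dop (h : IsPt k l m ξ) (h0 : ∀ i, ξ i ≠ 0) (χ : Finset (Fin 4)) (p : (𝓞 K)[X]) :
    dlt ξ ((∏ i ∈ χ, zs ξ i) * aeval (zs ξ 0 ^ 2) p) =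
      (∏ i ∈ χ, zs ξ i) * aeval (zs ξ 0 ^ 2) (Dop k l m χ p) := by
  have e : dlt ξ (aeval (zs ξ 0 ^ 2) p) =
      aeval (zs ξ 0 ^ 2) (derivative p) * (2 * ∏ j, zs ξ j ^ 2) := by
    rw [aeval_ps_map, Derivation.map_aeval, dlt_sq h0, aeval_ps_map _ (derivative p),
      Polynomial.derivative_map]
    rfl
  rw [Derivation.leibniz, e, dlt_prod h0, Dop]
  simp only [smul_eq_mul, map_add, map_mul, map_sum, map_prod, aeval_ee h, map_ofNat]
  ring

theorem dlt_iter (h : IsPt k l m ξ) (h0 : ∀ i, ξ i ≠ 0) (χ : Finset (Fin 4)) (p : (𝓞 K)[X])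
    (n : ℕ) : (dlt ξ)^[n] ((∏ i ∈ χ, zs ξ i) * aeval (zs ξ 0 ^ 2) p) =
      (∏ i ∈ χ, zs ξ i) * aeval (zs ξ 0 ^ 2) ((Dop k l m χ)^[n] p) := by
  induction n generalizing p with
  | zero => rfl
  | succ n ih => rw [Function.iterate_succ_apply, Function.iterate_succ_apply, dlt_Dop h h0, ih]

theorem dlt_const (h0 : ∀ i, ξ i ≠ 0) (a b : PowerSeries K) (hb : b ≠ 0)
    (h : dlt ξ a * b = a * dlt ξ b) : ∃ t : K, a = t • b := by
  refine ps_eq_smul_of_deriv hb ?_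
  have hp : ∏ j, ξ j ^ 2 ≠ 0 := Finset.prod_ne_zero_iff.2 fun i _ ↦ pow_ne_zero _ (h0 i)
  have hU : (PowerSeries.C (-(2 * ∏ j, ξ j ^ 2)⁻¹) * ∏ j, zs ξ j ^ 2 : PowerSeries K) ≠ 0 := by
    refine mul_ne_zero ?_ (Finset.prod_ne_zero_iff.2 fun i _ ↦ pow_ne_zero _ (zs_ne_zero (h0 i)))
    rw [Ne, ← map_zero PowerSeries.C, PowerSeries.C_injective.eq_iff]
    simp [hp]
  rw [dlt_apply, dlt_apply] at h
  exact mul_left_cancel₀ hU (by linear_combination h)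

end
end HE

/-! ### The zero estimate -/

namespace HE
set_option linter.unusedSectionVars false
open Polynomial NumberField Height AdmissibleAbsValues

section
variable {K : Type*} [Field K] [NumberField K] {k l m : 𝓞 K}

theorem isPt_C {σ : Fin 4 → K} (hσ : IsPt k l m σ) :
    IsPt k l m (fun i ↦ PowerSeries.C (σ i) : Fin 4 → PowerSeries K) := by
  have e : ∀ a : 𝓞 K, algebraMap (𝓞 K) (PowerSeries K) a = PowerSeries.C (algebraMap (𝓞 K) K a) :=
    fun a ↦ rfl
  refine ⟨?_, ?_, ?_⟩ <;> simp only [e, ← map_pow, ← map_sub]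
  · rw [hσ.h1]
  · rw [hσ.h2]
  · rw [hσ.h3]

theorem zs_aeval_inj {ξ : Fin 4 → K} (h0 : ∀ i, ξ i ≠ 0) :
    Function.Injective (aeval (R := K) (zs ξ 0 ^ 2)) := by
  have hp : ∏ j, ξ j ^ 2 ≠ 0 := Finset.prod_ne_zero_iff.2 fun i _ ↦ pow_ne_zero _ (h0 i)
  rw [zs_sq]
  exact aeval_lin_inj (mul_ne_zero (by norm_num) hp)

theorem gz_C (σ : Fin 4 → K) (j : Fin 7) :
    gz (fun i ↦ PowerSeries.C (σ i) : Fin 4 → PowerSeries K) j = PowerSeries.C (gz σ j) := by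
  fin_cases j <;> simp [gz]

/-- If `auxX 0 0 0` vanishes identically, then so does its part without `y₁, y₂, y₃`. -/
theorem quad_of_auxX_eq_zero (hk : k ≠ 0) (hl : l ≠ 0) (hm : m ≠ 0) (hlm : l ≠ m) {r : ℕ}
    {ω : Fin 4 → Fin 4 → (𝓞 K)[X]} (h00 : ω 0 0 = 0) {ξ σ : Fin 4 → K} (hξ : IsPt k l m ξ)
    (hσ : IsPt k l m σ) (h0 : ∀ i, ξ i ≠ 0)
    (hX : auxX k l m r ω (zs ξ) (fun i ↦ PowerSeries.C (σ i)) 0 0 0 = 0) (e : ℕ) :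
    ((fz k l m r ω 0).coeff e : K) + (fz k l m r ω 1).coeff e * σ 0 ^ 2 +
      (fz k l m r ω 2).coeff e * (σ 0 ^ 2) ^ 2 = 0 := by
  have hz := zs_isPt' hξ
  have hinj : Function.Injective (algebraMap (𝓞 K) K) := RingOfIntegers.coe_injective
  have hi : ∀ {a : 𝓞 K}, a ≠ 0 → (algebraMap (𝓞 K) K a) ≠ 0 := fun h ↦ by simpa using h
  rw [auxX_eq hz (isPt_C hσ) h00] at hX
  let q : Fin 7 → K[X] := fun j ↦ C (gz σ j) * (fz k l m r ω j).map (algebraMap (𝓞 K) K)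
  have hq : ∀ j, aeval (zs ξ 0 ^ 2) (q j) =
      gz (fun i ↦ PowerSeries.C (σ i) : Fin 4 → PowerSeries K) j *
        aeval (zs ξ 0 ^ 2) (fz k l m r ω j) := by
    intro j
    simp only [q]
    rw [map_mul, aeval_C, gz_C, aeval_ps_map]
    rfl
  have key := indep_y (S := PowerSeries K) (hi hk) (hi hl) (hi hm) (hinj.ne hlm) (z := zs ξ)
    hz.h1 hz.h2 hz.h3 (zs_aeval_inj h0) (q 0 + q 1 + q 2) (q 5) (q 6) (q 3 + q 4) (by
      rw [← hX]
      simp only [map_add, hq, Fin.sum_univ_seven]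
      have e0 : ∏ i ∈ chi 0, zs ξ i = 1 := by simp [chi]
      have e1 : ∏ i ∈ chi 1, zs ξ i = 1 := by simp [chi]
      have e2 : ∏ i ∈ chi 2, zs ξ i = 1 := by simp [chi]
      have e3 : ∏ i ∈ chi 3, zs ξ i = zs ξ 2 * zs ξ 3 := by simp [chi]
      have e4 : ∏ i ∈ chi 4, zs ξ i = zs ξ 2 * zs ξ 3 := by simp [chi]
      have e5 : ∏ i ∈ chi 5, zs ξ i = zs ξ 0 * zs ξ 1 * zs ξ 2 := by simp [chi, mul_assoc]
      have e6 : ∏ i ∈ chi 6, zs ξ i = zs ξ 0 * zs ξ 1 * zs ξ 3 := by simp [chi, mul_assoc]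
      rw [e0, e1, e2, e3, e4, e5, e6]
      ring)
  have := congrArg (fun p ↦ coeff p e) key
  simp only [q, coeff_add, coeff_C_mul, coeff_map, coeff_zero] at this
  simp only [gz, Matrix.cons_val] at this
  linear_combination this

/-- The auxiliary section does not vanish when the height of `σ` is large. -/
theorem auxX_ne_zero (hk : k ≠ 0) (hl : l ≠ 0) (hm : m ≠ 0) (hlm : l ≠ m) (C₁ : ℝ) :
    ∃ B : ℝ, 0 ≤ B ∧ ∀ r : ℕ, ∀ ω : Fin 4 → Fin 4 → (𝓞 K)[X], Wedge ω (tauP k l m r) →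
      (∃ U V, ω U V ≠ 0) → (∀ U V, (ω U V).natDegree ≤ 4 ^ (r + 1)) →
      (∀ U V, pn (ω U V) ≤ C₁ ^ 4 ^ (r + 1)) → ∀ ξ σ : Fin 4 → K, IsPt k l m ξ → IsPt k l m σ →
      (∀ i, ξ i ≠ 0) → B * 4 ^ (r + 1) < logHeight₁ (σ 0 ^ 2) →
      auxX k l m r ω (zs ξ) (fun i ↦ PowerSeries.C (σ i)) 0 0 0 ≠ 0 := by
  obtain ⟨A, hA, hf⟩ := Unif.finite fun j ↦ Unif.fz k l m C₁ j
  have hA1 : (1 : ℝ) ≤ A := by exact_mod_cast hA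
  have hlogA : 0 ≤ Real.log A := Real.log_nonneg hA1
  have hw : (0 : ℝ) ≤ totalWeight K := by positivity
  have hl4 : 0 ≤ Real.log 4 := Real.log_nonneg (by norm_num)
  refine ⟨totalWeight K * (Real.log (3 * A) + 2 * Real.log 4), ?_, ?_⟩
  · have : 0 ≤ Real.log (3 * A) := Real.log_nonneg (by linarith)
    positivity
  intro r ω hω hne hdeg hpn ξ σ hξ hσ h0 hh hX
  have hco := quad_of_auxX_eq_zero hk hl hm hlm (hω.diag 0) hξ hσ h0 hX
  refine hh.not_ge ?_
  obtain ⟨e, he⟩ : ∃ e, ¬ ((fz k l m r ω 0).coeff e = 0 ∧ (fz k l m r ω 1).coeff e = 0 ∧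
      (fz k l m r ω 2).coeff e = 0) := by
    by_contra! hall
    obtain ⟨U, V, hUV⟩ := hne
    refine hUV (omega_eq_zero hk hl hm hω ?_ ?_ ?_ U V) <;> ext1 e
    · exact (hall e).1
    · exact (hall e).2.1
    · exact (hall e).2.2
  set p : (𝓞 K)[X] := C ((fz k l m r ω 0).coeff e) + monomial 1 ((fz k l m r ω 1).coeff e) +
    monomial 2 ((fz k l m r ω 2).coeff e) with hp
  have hp0 : p ≠ 0 := by
    intro h
    refine he ⟨?_, ?_, ?_⟩
    · have := congrArg (fun p ↦ coeff p 0) h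
      simpa [hp, coeff_monomial, coeff_C] using this
    · have := congrArg (fun p ↦ coeff p 1) h
      simpa [hp, coeff_monomial, coeff_C] using this
    · have := congrArg (fun p ↦ coeff p 2) h
      simpa [hp, coeff_monomial, coeff_C] using this
  have hdvd : (X - C (σ 0 ^ 2)) ^ 1 ∣ p.map (algebraMap (𝓞 K) K) := by
    rw [pow_one, dvd_iff_isRoot, IsRoot.def, ← hco e]
    simp [hp, eval_monomial]
  have hd2 : p.natDegree ≤ 2 := by
    rw [hp]; compute_degree
  have hpj : ∀ j, nrm ((fz k l m r ω j).coeff e) ≤ (A : ℝ) ^ 4 ^ (r + 1) := fun j ↦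
    (nrm_coeff_le _ e).trans (hf j ⟨(r, ω), hdeg, hpn⟩).2
  have hE : pn p ≤ (3 * A : ℝ) ^ 4 ^ (r + 1) := by
    calc pn p ≤ nrm ((fz k l m r ω 0).coeff e) + nrm ((fz k l m r ω 1).coeff e) +
          nrm ((fz k l m r ω 2).coeff e) := by
          refine (pn_add_le _ _).trans (add_le_add ((pn_add_le _ _).trans ?_) ?_) <;> simp
      _ ≤ 3 * (A : ℝ) ^ 4 ^ (r + 1) := by linarith [hpj 0, hpj 1, hpj 2]
      _ ≤ 3 ^ 4 ^ (r + 1) * (A : ℝ) ^ 4 ^ (r + 1) := by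
          gcongr
          exact le_self_pow₀ (by norm_num) (by positivity)
      _ = _ := (mul_pow _ _ _).symm
  have := root_height hp0 hdvd hE (one_le_pow₀ (by linarith))
  rw [Real.log_pow] at this
  push_cast at this
  rw [one_mul] at this
  refine this.trans ?_
  rw [mul_assoc]
  gcongr
  have h1 : (1 : ℝ) ≤ 4 ^ (r + 1) := one_le_pow₀ (by norm_num)
  have h2 : (p.natDegree : ℝ) ≤ 2 := by exact_mod_cast hd2
  nlinarith [mul_nonneg (sub_nonneg.2 h1) hl4, mul_le_mul_of_nonneg_right h2 hl4]

theorem Unif.Dop {ι : Type*} {D : ι → ℕ} {p : ι → (𝓞 K)[X]} (hD : ∀ i, D i ≠ 0) (hp : Unif D p)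
    (χ : Finset (Fin 4)) : Unif D fun i ↦ Dop k l m χ (p i) :=
  ((Unif.const hD _).mul (hp.derivative hD)).add hD ((Unif.const hD _).mul hp)

theorem Unif.Dop_iter {ι : Type*} {D : ι → ℕ} {p : ι → (𝓞 K)[X]} (hD : ∀ i, D i ≠ 0)
    (hp : Unif D p) (χ : Finset (Fin 4)) (n : ℕ) : Unif D fun i ↦ (HE.Dop k l m χ)^[n] (p i) := by
  induction n with
  | zero => exact hp
  | succ n ih =>
    simp only [Function.iterate_succ_apply']
    exact ih.Dop hD χ

/-- The zero estimate: the order of vanishing of the auxiliary section is at most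
`O(D / h(x₀)) + O(1)`. -/
theorem order_bound (k l m : 𝓞 K) (C₁ : ℝ) :
    ∃ B : ℝ, 0 ≤ B ∧ ∀ r : ℕ, ∀ ω : Fin 4 → Fin 4 → (𝓞 K)[X], ω 0 0 = 0 →
      (∀ U V, (ω U V).natDegree ≤ 4 ^ (r + 1)) →
      (∀ U V, pn (ω U V) ≤ C₁ ^ 4 ^ (r + 1)) → ∀ ξ σ : Fin 4 → K, IsPt k l m ξ → IsPt k l m σ →
      (∀ i, ξ i ≠ 0) → auxX k l m r ω (zs ξ) (fun i ↦ PowerSeries.C (σ i)) 0 0 0 ≠ 0 →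
      ∀ n : ℕ, PowerSeries.X ^ n ∣ auxX k l m r ω (zs ξ) (fun i ↦ PowerSeries.C (σ i)) 0 0 0 →
      n * logHeight₁ (ξ 0 ^ 2) ≤ 6 * logHeight₁ (ξ 0 ^ 2) + B * 4 ^ (r + 1) := by
  have hD : ∀ d : Dat K C₁, 4 ^ (d.1.1 + 1) ≠ 0 := fun d ↦ by positivity
  let W (e : Σ N : Fin 8, Fin N → Fin 7) (d : Dat K C₁) : (𝓞 K)[X] :=
    (Matrix.of fun a b : Fin e.1 ↦
      (Dop k l m (chi (e.2 b)))^[a] (fz k l m d.1.1 d.1.2 (e.2 b))).det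
  obtain ⟨A, hA, hW⟩ := Unif.finite (P := W) fun e ↦ Unif.det hD fun a b ↦
    (Unif.fz k l m C₁ (e.2 b)).Dop_iter hD (chi (e.2 b)) a
  have hA1 : (1 : ℝ) ≤ A := by exact_mod_cast hA
  have hlogA : 0 ≤ Real.log A := Real.log_nonneg hA1
  have hw : (0 : ℝ) ≤ totalWeight K := by positivity
  have hl4 : 0 ≤ Real.log 4 := Real.log_nonneg (by norm_num)
  refine ⟨totalWeight K * (Real.log A + A * Real.log 4), by positivity, ?_⟩
  intro r ω h00 hdeg hpn ξ σ hξ hσ h0 hX n hn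
  rw [auxX_eq (zs_isPt' hξ) (isPt_C hσ) h00] at hX hn
  set v : Fin 7 → PowerSeries K := fun j ↦
    (∏ i ∈ chi j, zs ξ i) * aeval (zs ξ 0 ^ 2) (fz k l m r ω j) with hv
  have hF : ∑ j, gz (fun i ↦ PowerSeries.C (σ i) : Fin 4 → PowerSeries K) j * v j =
      ∑ j, gz σ j • v j := by
    refine Finset.sum_congr rfl fun j _ ↦ ?_
    rw [gz_C, PowerSeries.smul_eq_C_mul]
  change ∑ j, gz (fun i ↦ PowerSeries.C (σ i) : Fin 4 → PowerSeries K) j * v j ≠ 0 at hX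
  change _ ∣ ∑ j, gz (fun i ↦ PowerSeries.C (σ i) : Fin 4 → PowerSeries K) j * v j at hn
  rw [hF] at hX hn
  obtain ⟨κ, a, hinj, hspan, hli⟩ := exists_linearIndependent' K v
  have : Finite κ := Finite.of_injective a hinj
  have := Fintype.ofFinite κ
  have hcard : Fintype.card κ ≤ 7 := by simpa using Fintype.card_le_of_injective a hinj
  let eqv := Fintype.equivFin κ
  have hmem : ∑ j, gz σ j • v j ∈ Submodule.span K (Set.range (v ∘ a)) := by
    rw [hspan]
    exact Submodule.sum_mem _ fun j _ ↦ Submodule.smul_mem _ _ (Submodule.subset_span ⟨j, rfl⟩)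
  obtain ⟨c, hc⟩ := (Submodule.mem_span_range_iff_exists_fun K).1 hmem
  set N := Fintype.card κ with hN
  let b : Fin N → Fin 7 := fun i ↦ a (eqv.symm i)
  have hli' : LinearIndependent K fun i ↦ v (b i) := hli.comp _ eqv.symm.injective
  have hsum : ∑ i, c (eqv.symm i) • v (b i) = ∑ j, gz σ j • v j := by
    rw [← hc]
    exact Equiv.sum_comp eqv.symm fun i ↦ c i • (v ∘ a) i
  have hc0 : (fun i ↦ c (eqv.symm i)) ≠ 0 := by
    intro h
    refine hX ?_
    rw [← hsum]
    exact Finset.sum_eq_zero fun i _ ↦ by rw [show c (eqv.symm i) = 0 from congrFun h i, zero_smul]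
  rw [← hsum] at hn
  have hne := wronskian_ne_zero (dlt ξ) (dlt_const h0) N (fun i ↦ v (b i)) hli'
  have hdvd := dvd_wronskian (dlt ξ) PowerSeries.X N n (fun i ↦ v (b i)) _ hc0 hn
  let w := W ⟨⟨N, by omega⟩, b⟩ ⟨(r, ω), hdeg, hpn⟩
  have hdet : (Matrix.of fun i j : Fin N ↦ (dlt ξ)^[i] (v (b j))).det =
      (∏ j, ∏ i ∈ chi (b j), zs ξ i) * aeval (zs ξ 0 ^ 2) w := by
    simp only [hv, dlt_iter hξ h0]
    rw [show aeval (zs ξ 0 ^ 2) w = _ from AlgHom.map_det (aeval (zs ξ 0 ^ 2)) _,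
      ← Matrix.det_mul_row]
    rfl
  rw [hdet] at hne hdvd
  have hunit : IsUnit (∏ j : Fin N, ∏ i ∈ chi (b j), zs ξ i) := by
    refine isUnit_of_const ?_
    rw [map_prod]
    refine Finset.prod_ne_zero_iff.2 fun j _ ↦ ?_
    rw [map_prod]
    refine Finset.prod_ne_zero_iff.2 fun i _ ↦ ?_
    rw [constantCoeff_zs]
    exact h0 i
  have hdvd' : PowerSeries.X ^ (n - (N - 1)) ∣ aeval (zs ξ 0 ^ 2) w := (hunit.dvd_mul_left).1 hdvd
  have hw0 : w ≠ 0 := by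
    intro h
    rw [h, map_zero, mul_zero] at hne
    exact hne rfl
  have hp : ∏ j, ξ j ^ 2 ≠ 0 := Finset.prod_ne_zero_iff.2 fun i _ ↦ pow_ne_zero _ (h0 i)
  rw [aeval_ps_map, zs_sq] at hdvd'
  have hroot := dvd_of_X_dvd (mul_ne_zero (by norm_num) hp) hdvd'
  have hwb := hW ⟨⟨N, by omega⟩, b⟩ ⟨(r, ω), hdeg, hpn⟩
  have hh := root_height hw0 hroot hwb.2 (one_le_pow₀ hA1)
  have hx : 0 ≤ logHeight₁ (ξ 0 ^ 2) := zero_le_logHeight₁ _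
  have h1 : (n : ℝ) ≤ ((n - (N - 1) : ℕ) : ℝ) + 6 := by
    have : n ≤ n - (N - 1) + 6 := by omega
    exact_mod_cast this
  have h2 : (w.natDegree : ℝ) ≤ A * 4 ^ (r + 1) := by exact_mod_cast hwb.1
  rw [Real.log_pow] at hh
  push_cast at hh
  have h3 : totalWeight K * (4 ^ (r + 1) * Real.log A + w.natDegree * Real.log 4) ≤
      totalWeight K * (4 ^ (r + 1) * Real.log A + A * 4 ^ (r + 1) * Real.log 4) := by gcongr
  nlinarith [mul_le_mul_of_nonneg_right h1 hx]

end
end HE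

/-! ### The main inequality -/

namespace HE
set_option linter.unusedSectionVars false
open Polynomial NumberField Height AdmissibleAbsValues

section
variable {K : Type*} [Field K] [NumberField K] {k l m : 𝓞 K}

theorem tauP_deg (hk : k ≠ 0) (r : ℕ) : tauP k l m r 3 ≠ 0 ∧
    (tauP k l m r 3).natDegree = 4 ^ (r + 1) ∧ ∀ i, (tauP k l m r i).natDegree ≤ 4 ^ (r + 1) := by
  have a := lp_deg k l r
  have b := lp_deg k m r
  have h4 : 4 ^ (r + 1) = 4 * 4 ^ r := pow_succ' _ _
  have h1 : 1 ≤ 4 ^ r := Nat.one_le_pow _ _ (by norm_num)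
  have e3 : (tauP k l m r 3).natDegree = 4 ^ (r + 1) := by
    simp only [tauP, Matrix.cons_val, natDegree_neg]
    rw [natDegree_C_mul hk, (a.1 2 (by decide)).1.natDegree_mul (b.1 2 (by decide)).1,
      (a.1 2 (by decide)).2, (b.1 2 (by decide)).2]
    omega
  refine ⟨?_, e3, fun i ↦ ?_⟩
  · simp [tauP, lp_ne_zero, hk]
  · fin_cases i
    · have := natDegree_mul_le_of_le (a.1 1 (by decide)).2.le (b.1 1 (by decide)).2.le
      simp only [tauP, Fin.zero_eta, Matrix.cons_val]
      omega
    · have := natDegree_mul_le_of_le (a.1 0 (by decide)).2.le (b.1 0 (by decide)).2.le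
      simp only [tauP, Fin.mk_one, Matrix.cons_val, natDegree_neg]
      omega
    · have h2 := natDegree_mul_le_of_le a.2 b.2
      have h3 : (X * (X - C k) : (𝓞 K)[X]).natDegree ≤ 2 := by compute_degree
      have h5 := natDegree_mul_le_of_le h3 h2
      have h6 := (natDegree_C_mul_le k (X * (X - C k) * (lp k l r 3 * lp k m r 3))).trans h5
      simp only [tauP, Fin.reduceFinMk, Matrix.cons_val]
      omega
    · exact e3.le

theorem tauP_bound (k l m : 𝓞 K) :
    ∃ M : ℝ, 1 ≤ M ∧ ∀ r i, pn (tauP k l m r i) ≤ M ^ 4 ^ (r + 1) := by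
  have hD : ∀ d : Dat K 1, 4 ^ (d.1.1 + 1) ≠ 0 := fun d ↦ by positivity
  have a := Unif.lp k l 1
  have b := Unif.lp k m 1
  have h : ∀ i, Unif (fun d : Dat K 1 ↦ 4 ^ (d.1.1 + 1)) fun d ↦ tauP k l m d.1.1 i := by
    intro i
    fin_cases i
    · exact (a 1).mul (b 1)
    · exact ((a 0).mul (b 0)).neg
    · exact (Unif.const hD _).mul ((Unif.const hD _).mul ((a 3).mul (b 3)))
    · exact ((Unif.const hD _).mul ((a 2).mul (b 2))).neg
  obtain ⟨A, hA, hf⟩ := Unif.finite h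
  refine ⟨A, by exact_mod_cast hA, fun r i ↦ ?_⟩
  exact (hf i ⟨(r, 0), by simp, by simp⟩).2

/-- The main inequality: the heights of `τ` and of the two differences are bounded by the height of
the auxiliary sections. The coefficient `17 / 6 = 5 / 6 + 2` collects the degree of `ω` and the
degrees of the two sum-difference matrices in the first point. -/
theorem main_ineq (hk : k ≠ 0) (hl : l ≠ 0) (hm : m ≠ 0) (hlm : l ≠ m) :
    ∃ B : ℝ, 0 ≤ B ∧ ∀ r : ℕ, ∀ ξ σ : Fin 4 → K, IsPt k l m ξ → IsPt k l m σ →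
      (∀ i, ξ i ≠ 0) → 1 ≤ logHeight₁ (ξ 0 ^ 2) → B * 4 ^ (r + 1) < logHeight₁ (σ 0 ^ 2) →
      ∀ U₁ U₂, mA k l r ξ σ U₁ ≠ 0 → mB k m r ξ σ U₂ ≠ 0 → tauA k l m r ξ ≠ 0 →
      logHeight (tauA k l m r ξ) + logHeight (mA k l r ξ σ U₁) + logHeight (mB k m r ξ σ U₂) ≤
        17 / 6 * 4 ^ (r + 1) * logHeight₁ (ξ 0 ^ 2) + 2 * logHeight₁ (σ 0 ^ 2) +
          B * 4 ^ (r + 1) + B * logHeight₁ (ξ 0 ^ 2) := by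
  obtain ⟨M, hM, hτ⟩ := tauP_bound k l m
  obtain ⟨C₁, hC₁, hω⟩ := exists_omega K hM
  obtain ⟨B₁, hB₁, h1⟩ := auxX_ne_zero hk hl hm hlm C₁
  obtain ⟨B₂, hB₂, h2⟩ := order_bound k l m C₁
  obtain ⟨C, hC, h3⟩ := main_ineq_aux k l m
  have hw : (0 : ℝ) ≤ totalWeight K := by positivity
  have hlog : 0 ≤ Real.log C₁ := Real.log_nonneg hC₁
  have hwl : 0 ≤ totalWeight K * Real.log C₁ := mul_nonneg hw hlog
  refine ⟨B₁ + (totalWeight K * Real.log C₁ + C) + (C + 3) * B₂ + 6 * C + 20, by positivity, ?_⟩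
  intro r ξ σ hξ hσ h0 hx hs U₁ U₂ hU₁ hU₂ ht
  have h4 : (0 : ℝ) < 4 ^ (r + 1) := by positivity
  obtain ⟨d, hd⟩ : ∃ d, 6 * d = 5 * 4 ^ (r + 1) + 4 := by
    have h6 : ∀ n : ℕ, 4 ^ (n + 1) % 6 = 4 := fun n ↦ by
      induction n with
      | zero => rfl
      | succ n ih => rw [pow_succ]; omega
    have := h6 r
    exact ⟨(5 * 4 ^ (r + 1) + 4) / 6, by omega⟩
  obtain ⟨t1, t2, t3⟩ := tauP_deg (l := l) (m := m) hk r
  obtain ⟨ω, w1, w2, w3, w4⟩ := hω (4 ^ (r + 1)) d (tauP k l m r) (by positivity) hd t1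
    (fun i ↦ (t3 i).trans t2.ge) t2.le (hτ r)
  have hd' : d - 1 ≤ 4 ^ (r + 1) := by
    have : 4 ≤ 4 ^ (r + 1) := Nat.le_self_pow (by omega) 4
    omega
  have w3' := fun U V ↦ (w3 U V).trans hd'
  have hne := h1 r ω w1 w2 w3' w4 ξ σ hξ hσ h0 (lt_of_le_of_lt (by
    gcongr
    have : 0 ≤ (C + 3) * B₂ := by positivity
    linarith) hs)
  obtain ⟨n, hn, hmain⟩ := h3 C₁ hC₁ r (d - 1) ω w1 w3 hd' w4 ξ σ hξ hσ U₁ U₂ 0 0 0 hU₁ hU₂ ht hne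
  have hord := h2 r ω (w1.diag 0) w3' w4 ξ σ hξ hσ h0 hne n hn
  refine hmain.trans ?_
  have e1 : logHeight₁ (ξ 0 ^ 2) = 2 * logHeight₁ (ξ 0) := by rw [logHeight₁_pow]; norm_num
  have e2 : logHeight₁ (σ 0 ^ 2) = 2 * logHeight₁ (σ 0) := by rw [logHeight₁_pow]; norm_num
  have hdR : ((d - 1 : ℕ) : ℝ) ≤ 5 / 6 * 4 ^ (r + 1) := by
    have : 6 * (d - 1) ≤ 5 * 4 ^ (r + 1) := by omega
    have : (6 : ℝ) * ((d - 1 : ℕ) : ℝ) ≤ 5 * 4 ^ (r + 1) := by exact_mod_cast this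
    linarith
  rw [e1] at hx hord ⊢
  rw [e2]
  have hn0 : (0 : ℝ) ≤ n := Nat.cast_nonneg n
  set D : ℝ := 4 ^ (r + 1) with hDD
  set h := logHeight₁ (ξ 0) with hh
  set s := logHeight₁ (σ 0)
  set c := totalWeight K * Real.log C₁
  set δ : ℝ := ((d - 1 : ℕ) : ℝ)
  have hh0 : 0 ≤ h := by linarith
  have i1 : δ * h ≤ 5 / 6 * D * h := by gcongr
  have i2 : C * n ≤ C * (n * (2 * h)) := by
    gcongr
    exact le_mul_of_one_le_right hn0 hx
  have i3 : C * (n * (2 * h)) ≤ C * (6 * (2 * h) + B₂ * D) := by gcongr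
  have i4 : 0 ≤ B₁ * D := by positivity
  have i5 : 0 ≤ B₁ * h := by positivity
  have i6 : 0 ≤ (C + 3) * B₂ * h := by positivity
  have i7 : 0 ≤ c * h := by positivity
  have i8 : 0 ≤ C * h := by positivity
  have i9 : 0 ≤ C * D := by positivity
  push_cast
  nlinarith

end
end HE

/-! ### The elliptic curves `y² = x (x - k) (x - l)` -/

namespace HE
set_option linter.unusedSectionVars false
open WeierstrassCurve

/-- Nondegeneracy of the cubic `x (x - k) (x - l)`. -/
class Nondeg {F : Type*} [Field F] (k l : F) : Prop where
  hk : k ≠ 0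
  hl : l ≠ 0
  hkl : k ≠ l

section
variable {F : Type*} [Field F] (k l : F)

/-- The curve `y² = x (x - k) (x - l)`. -/
def ec : WeierstrassCurve.Affine F := ⟨0, -(k + l), 0, k * l, 0⟩

lemma ec_equation (x y : F) : (ec k l).Equation x y ↔ y ^ 2 = x * (x - k) * (x - l) := by
  rw [Affine.equation_iff]
  simp only [ec]
  constructor <;> intro h <;> linear_combination h

variable [CharZero F] [Nondeg k l]

instance ec_isElliptic : (ec k l).IsElliptic := by
  constructor
  have h1 := Nondeg.hk (k := k) (l := l)
  have h2 := Nondeg.hl (k := k) (l := l)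
  have h3 := sub_ne_zero.2 (Nondeg.hkl (k := k) (l := l))
  have : (ec k l).Δ = 16 * k ^ 2 * l ^ 2 * (k - l) ^ 2 := by
    simp only [ec, WeierstrassCurve.Δ, WeierstrassCurve.b₂, WeierstrassCurve.b₄,
      WeierstrassCurve.b₆, WeierstrassCurve.b₈]
    ring
  rw [this, isUnit_iff_ne_zero]
  exact mul_ne_zero (mul_ne_zero (mul_ne_zero (by norm_num) (pow_ne_zero _ h1))
    (pow_ne_zero _ h2)) (pow_ne_zero _ h3)

/-- The group of rational points of `y² = x (x - k) (x - l)`. -/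
abbrev EP := (ec k l).Point

variable {k l}

/-- The affine point with coordinates `(x, y)`. -/
def pt (x y : F) (h : y ^ 2 = x * (x - k) * (x - l)) : EP k l :=
  .some x y (((ec k l).equation_iff_nonsingular).1 ((ec_equation k l x y).2 h))

lemma pt_ne_zero {x y : F} (h : y ^ 2 = x * (x - k) * (x - l)) : (pt x y h : EP k l) ≠ 0 :=
  Affine.Point.some_ne_zero _

lemma EP_cases (P : EP k l) : P = 0 ∨ ∃ x y h, P = pt x y h := by
  rcases P with _ | ⟨x, y, h⟩
  · exact Or.inl rfl
  · exact Or.inr ⟨x, y, (ec_equation k l x y).1 h.1, rfl⟩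

lemma pt_congr {x y x' y' : F} {h : y ^ 2 = x * (x - k) * (x - l)} (hx : x = x') (hy : y = y') :
    (pt x y h : EP k l) = pt x' y' (by subst hx hy; exact h) := by
  subst hx hy; rfl

lemma pt_inj {x y x' y' : F} {h : y ^ 2 = x * (x - k) * (x - l)}
    {h' : y' ^ 2 = x' * (x' - k) * (x' - l)} :
    (pt x y h : EP k l) = pt x' y' h' ↔ x = x' ∧ y = y' := by
  simp [pt]

lemma neg_pt {x y : F} (h : y ^ 2 = x * (x - k) * (x - l)) :
    -(pt x y h : EP k l) = pt x (-y) (by rw [neg_sq, h]) := by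
  rw [pt, Affine.Point.neg_some]
  have hn : (ec k l).negY x y = -y := by simp [Affine.negY, ec]
  simp only [pt, hn]

lemma xRep_pt {x y : F} (h : y ^ 2 = x * (x - k) * (x - l)) :
    (pt x y h : EP k l).xRep = ![x, 1] := rfl

variable [DecidableEq F]

lemma add_pt {x y x' y' : F} (h : y ^ 2 = x * (x - k) * (x - l))
    (h' : y' ^ 2 = x' * (x' - k) * (x' - l)) (hx : x ≠ x') {s X Y : F}
    (hs : s * (x - x') = y - y') (hX : X = s ^ 2 + (k + l) - x - x')
    (hY : Y = - (s * (X - x) + y)) :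
    ∃ H, (pt x y h : EP k l) + pt x' y' h' = pt X Y H := by
  have hs' : s = (y - y') / (x - x') := by
    rw [eq_div_iff (sub_ne_zero.2 hx), hs]
  have key := Affine.Point.add_of_X_ne (W := ec k l)
    (h₁ := ((ec k l).equation_iff_nonsingular).1 ((ec_equation k l x y).2 h))
    (h₂ := ((ec k l).equation_iff_nonsingular).1 ((ec_equation k l x' y').2 h')) hx
  have e1 : (ec k l).addX x x' ((ec k l).slope x x' y y') = X := by
    rw [Affine.slope_of_X_ne hx, ← hs', hX]
    simp only [Affine.addX, ec]; ring
  have e2 : (ec k l).addY x x' y ((ec k l).slope x x' y y') = Y := by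
    rw [hY, Affine.addY, Affine.negAddY, e1, Affine.slope_of_X_ne hx, ← hs']
    simp only [Affine.negY, ec]; ring
  have hns := Affine.nonsingular_add (W := ec k l)
    (((ec k l).equation_iff_nonsingular).1 ((ec_equation k l x y).2 h))
    (((ec k l).equation_iff_nonsingular).1 ((ec_equation k l x' y').2 h')) (fun hh => hx hh.1)
  rw [e1, e2] at hns
  refine ⟨(ec_equation k l X Y).1 hns.1, ?_⟩
  rw [pt, pt, key, pt]
  simp only [e1, e2]

lemma double_pt {x y : F} (h : y ^ 2 = x * (x - k) * (x - l)) (hy : y ≠ 0) {s X Y : F}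
    (hs : s * (2 * y) = 3 * x ^ 2 - 2 * (k + l) * x + k * l) (hX : X = s ^ 2 + (k + l) - 2 * x)
    (hY : Y = - (s * (X - x) + y)) :
    ∃ H, (pt x y h : EP k l) + pt x y h = pt X Y H := by
  have hn : (ec k l).negY x y = -y := by simp [Affine.negY, ec]
  have hy2 : y ≠ (ec k l).negY x y := by
    rw [hn]; intro h1
    exact hy (self_eq_neg.1 h1)
  have h2y : (2 * y) ≠ 0 := mul_ne_zero two_ne_zero hy
  have hs' : (ec k l).slope x x y y = s := by
    rw [Affine.slope_of_Y_ne rfl hy2, hn, div_eq_iff (by rwa [sub_neg_eq_add, ← two_mul])]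
    simp only [ec]
    linear_combination -hs
  have key := Affine.Point.add_self_of_Y_ne (W := ec k l)
    (h₁ := ((ec k l).equation_iff_nonsingular).1 ((ec_equation k l x y).2 h)) hy2
  have e1 : (ec k l).addX x x ((ec k l).slope x x y y) = X := by
    rw [hs', hX]
    simp only [Affine.addX, ec]; ring
  have e2 : (ec k l).addY x x y ((ec k l).slope x x y y) = Y := by
    rw [hY, Affine.addY, Affine.negAddY, e1, hs']
    simp only [Affine.negY, ec]; ring
  have hns := Affine.nonsingular_add (W := ec k l)
    (((ec k l).equation_iff_nonsingular).1 ((ec_equation k l x y).2 h))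
    (((ec k l).equation_iff_nonsingular).1 ((ec_equation k l x y).2 h)) (fun hh => hy2 hh.2)
  rw [e1, e2] at hns
  refine ⟨(ec_equation k l X Y).1 hns.1, ?_⟩
  rw [pt, key, pt]
  simp only [e1, e2]

lemma pt_eq_or_neg {x y y' : F} (h : y ^ 2 = x * (x - k) * (x - l))
    (h' : y' ^ 2 = x * (x - k) * (x - l)) :
    (pt x y' h' : EP k l) = pt x y h ∨ (pt x y' h' : EP k l) = - pt x y h := by
  rcases sq_eq_sq_iff_eq_or_eq_neg.1 (h'.trans h.symm) with e | e
  · subst e; exact Or.inl rfl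
  · subst e; rw [neg_pt]; exact Or.inr rfl

lemma add_self_pt_zero {x : F} (h : (0 : F) ^ 2 = x * (x - k) * (x - l)) :
    (pt x 0 h : EP k l) + pt x 0 h = 0 := by
  have : (pt x 0 h : EP k l) = - pt x 0 h := by
    rw [neg_pt, pt_inj]; simp
  nth_rewrite 2 [this]
  exact add_neg_cancel _

end

section link
variable {F : Type*} [Field F] [CharZero F] {k l : F} [Nondeg k l] [DecidableEq F]

/-- `addSubMap` for the curve `ec k l`, with the coefficients evaluated. -/
lemma addSub_eval (v : Fin 3 → F) : (fun i => MvPolynomial.eval v (addSubMap (ec k l) i)) =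
    ![v 0 ^ 2 - 2 * (k * l) * v 0 * v 2 + (k * l) ^ 2 * v 2 ^ 2,
      2 * v 1 * v 0 - 4 * (k + l) * v 0 * v 2 + 2 * (k * l) * v 1 * v 2,
      v 1 ^ 2 - 4 * v 0 * v 2] := by
  ext i
  fin_cases i <;> simp [addSubMap, ec, WeierstrassCurve.b₂, WeierstrassCurve.b₄,
      WeierstrassCurve.b₆, WeierstrassCurve.b₈] <;> ring

/-- The morphism `addSubMap` sends the symmetric pair `{x(P), x(Q)}` to
`{x(P+Q), x(P-Q)}` projectively. -/
lemma addSub_link (P Q : EP k l) : ∃ c : F, c ≠ 0 ∧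
    (fun i => MvPolynomial.eval (P.sym2x Q) (addSubMap (ec k l) i)) =
      c • (P + Q).sym2x (P - Q) := by
  rw [addSub_eval]
  rcases EP_cases P with rfl | ⟨x, y, h, rfl⟩
  · rcases EP_cases Q with rfl | ⟨x, y, h, rfl⟩
    · refine ⟨1, one_ne_zero, ?_⟩
      ext i
      fin_cases i <;> simp
    · refine ⟨1, one_ne_zero, ?_⟩
      rw [zero_add, zero_sub, Affine.Point.sym2x_neg_right, pt, Affine.Point.sym2x_some_some,
        Affine.Point.sym2x_zero_some]
      ext i
      fin_cases i <;> simp <;> ring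
  · rcases EP_cases Q with rfl | ⟨x', y', h', rfl⟩
    · refine ⟨1, one_ne_zero, ?_⟩
      rw [add_zero, sub_zero, pt, Affine.Point.sym2x_some_some, Affine.Point.sym2x_some_zero]
      ext i
      fin_cases i <;> simp <;> ring
    · by_cases hx : x = x'
      · subst hx
        have main : ∃ c : F, c ≠ 0 ∧ ![(x * x) ^ 2 - 2 * (k * l) * (x * x) * 1 + (k * l) ^ 2 * 1 ^ 2,
            2 * (x + x) * (x * x) - 4 * (k + l) * (x * x) * 1 + 2 * (k * l) * (x + x) * 1,
            (x + x) ^ 2 - 4 * (x * x) * 1] =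
            c • ((pt x y h : EP k l) + pt x y h).sym2x 0 := by
          by_cases hy : y = 0
          · subst hy
            rw [add_self_pt_zero, Affine.Point.sym2x_zero_zero]
            refine ⟨(x ^ 2 - k * l) ^ 2, ?_, ?_⟩
            · have h1 := Nondeg.hk (k := k) (l := l)
              have h2 := Nondeg.hl (k := k) (l := l)
              have h3 := sub_ne_zero.2 (Nondeg.hkl (k := k) (l := l))
              have h0 : x = 0 ∨ x = k ∨ x = l := by
                have := h.symm
                simp only [ne_eq, OfNat.ofNat_ne_zero, not_false_eq_true, zero_pow, mul_eq_zero,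
                  sub_eq_zero] at this
                tauto
              refine pow_ne_zero _ ?_
              rcases h0 with rfl | rfl | rfl
              · simp [h1, h2]
              · have : x ^ 2 - x * l = x * (x - l) := by ring
                rw [this]; exact mul_ne_zero h1 h3
              · have : x ^ 2 - k * x = - (x * (k - x)) := by ring
                rw [this]; exact neg_ne_zero.2 (mul_ne_zero h2 h3)
            · ext i
              fin_cases i
              · simp; ring
              · simp; linear_combination -4 * h
              · simp; ring
          · have h2y : (2 * y) ≠ 0 := mul_ne_zero two_ne_zero hy
            obtain ⟨H, e⟩ := double_pt h hy
              (div_mul_cancel₀ (3 * x ^ 2 - 2 * (k + l) * x + k * l) h2y) rfl rfl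
            rw [e, pt, Affine.Point.sym2x_some_zero]
            refine ⟨4 * y ^ 2, mul_ne_zero (by norm_num) (pow_ne_zero _ hy), ?_⟩
            ext i
            fin_cases i
            · simp
              field_simp
              linear_combination (-16 * (k + l) + 32 * x) * h
            · simp; linear_combination -4 * h
            · simp; ring
        obtain ⟨c, hc, e⟩ := main
        refine ⟨c, hc, ?_⟩
        rw [pt, pt, Affine.Point.sym2x_some_some]
        refine Eq.trans (by simp) (e.trans ?_)
        congr 1
        change _ = (pt x y h + pt x y' h' : EP k l).sym2x (pt x y h - pt x y' h')
        rcases pt_eq_or_neg h h' with e | e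
        · rw [e, sub_self]
        · rw [e, sub_neg_eq_add, add_neg_cancel, Affine.Point.sym2x_comm]
      · have hx' := sub_ne_zero.2 hx
        obtain ⟨H1, e1⟩ := add_pt h h' hx (div_mul_cancel₀ (y - y') hx') rfl rfl
        have h'' : (-y') ^ 2 = x' * (x' - k) * (x' - l) := by rw [neg_sq, h']
        obtain ⟨H2, e2⟩ := add_pt h h'' hx (div_mul_cancel₀ (y - (-y')) hx') rfl rfl
        rw [sub_eq_add_neg (pt x y h) (pt x' y' h'), neg_pt, e1, e2, pt, pt, pt, pt, Affine.Point.sym2x_some_some,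
          Affine.Point.sym2x_some_some]
        refine ⟨(x - x') ^ 2, pow_ne_zero _ hx', ?_⟩
        ext i
        fin_cases i
        · simp
          field_simp
          have e4 : (y - y') ^ 2 * (y + y') ^ 2 =
            (x * (x - k) * (x - l) - x' * (x' - k) * (x' - l)) ^ 2 := by rw [← h, ← h']; ring
          have e5 : (y - y') ^ 2 + (y + y') ^ 2 =
            2 * (x * (x - k) * (x - l) + x' * (x' - k) * (x' - l)) := by rw [← h, ← h']; ring
          linear_combination -e4 - ((x - x') ^ 2 * (k + l - x - x')) * e5
        · simp
          field_simp
          linear_combination -2 * h - 2 * h'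
        · simp; ring
end link
end HE

/-! ### The naive height on these curves -/

namespace HE
set_option linter.unusedSectionVars false
open WeierstrassCurve Height NumberField

section
variable {K : Type*} [Field K] [NumberField K] {k l : K} [Nondeg k l] [DecidableEq K]

/-- The naive logarithmic height of the `x`-coordinate of a point. -/
noncomputable def hX (P : EP k l) : ℝ := logHeight P.xRep

lemma hX_nonneg (P : EP k l) : 0 ≤ hX P := logHeight_nonneg P.xRep

lemma hX_pt {x y : K} (h : y ^ 2 = x * (x - k) * (x - l)) :
    hX (pt x y h : EP k l) = logHeight₁ x := by
  rw [hX, xRep_pt, logHeight₁_eq_logHeight]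

lemma hX_neg (P : EP k l) : hX (-P) = hX P := by
  rw [hX, hX, Affine.Point.xRep_neg]

lemma hX_parallelogram : ∃ C, ∀ P Q : EP k l,
    |hX (P + Q) + hX (P - Q) - 2 * (hX P + hX Q)| ≤ C := by
  obtain ⟨C1, h1⟩ := abs_logHeight_addSubMap_sub_two_mul_logHeight_le (ec k l)
  obtain ⟨C2, h2⟩ := abs_logHeight_sym2_sub_le K
  have h3 : ∀ P Q : EP k l, |logHeight (P.sym2x Q) - (hX P + hX Q)| ≤ C2 := by
    intro P Q
    have e : ∀ P : EP k l, P.xRep = ![P.xRep 0, P.xRep 1] := fun P => by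
      ext i; fin_cases i <;> rfl
    have := h2 (a := P.xRep 0) (b := P.xRep 1) (c := Q.xRep 0) (d := Q.xRep 1)
      (by rw [← e]; exact Affine.Point.xRep_ne_zero P)
      (by rw [← e]; exact Affine.Point.xRep_ne_zero Q)
    rw [← e P, ← e Q] at this
    exact this
  refine ⟨C1 + 3 * C2, fun P Q => ?_⟩
  obtain ⟨c, hc, e⟩ := addSub_link P Q
  have a1 := h1 (P.sym2x Q)
  rw [e, logHeight_smul_eq_logHeight _ hc] at a1
  have a2 := h3 P Q
  have a3 := h3 (P + Q) (P - Q)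
  rw [abs_le] at *
  constructor <;> linarith

instance hX_northcott : Northcott (hX (k := k) (l := l)) where
  finite_le b := by
    have hf := finite_setOfPred_logHeight₁_le K b
    have : {P : EP k l | hX P ≤ b} ⊆
        {0} ∪ ⋃ x ∈ {x : K | logHeight₁ x ≤ b}, {P : EP k l | P.xRep = ![x, 1]} := by
      intro P hP
      rcases EP_cases P with rfl | ⟨x, y, h, rfl⟩
      · exact Or.inl rfl
      · right
        rw [Set.mem_ofPred_eq, hX_pt] at hP
        exact Set.mem_biUnion hP rfl
    refine Set.Finite.subset ((Set.finite_singleton _).union (hf.biUnion fun x _ => ?_)) this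
    by_cases hne : ∃ P0 : EP k l, P0.xRep = ![x, 1]
    · obtain ⟨P0, h0⟩ := hne
      refine (Set.toFinite {P0, -P0}).subset fun P hP => ?_
      exact Affine.Point.eq_or_eq_neg_of_xRep_eq_xRep (Eq.trans hP h0.symm)
    · convert Set.finite_empty
      ext P
      simp only [Set.mem_ofPred_eq, Set.mem_empty_iff_false, iff_false]
      exact fun hP => hne ⟨P, hP⟩
end
end HE

/-! ### Canonical heights and quadratic forms on finitely generated groups -/

namespace HE
set_option linter.unusedSectionVars false
open Filter Topology
open scoped MatrixOrder Matrix.Norms.L2Operator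

section canonical
variable {G : Type*} [AddCommGroup G]

/-- A function on an abelian group satisfying the parallelogram law up to a bounded error is at
bounded distance from one satisfying it exactly (Tate's limit `h (2ⁿ x) / 4ⁿ`). -/
lemma exists_canonical {h : G → ℝ} {C : ℝ}
    (H : ∀ x y, |h (x + y) + h (x - y) - 2 * (h x + h y)| ≤ C) :
    ∃ q : G → ℝ, (∃ C0, 0 ≤ C0 ∧ ∀ x, |q x - h x| ≤ C0) ∧
      ∀ x y, q (x + y) + q (x - y) = 2 * (q x + q y) := by
  have hC : 0 ≤ C := (abs_nonneg _).trans (H 0 0)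
  have hd : ∀ x, |h (x + x) - 4 * h x| ≤ C + |h 0| := by
    intro x
    have h1 := H x x
    rw [sub_self] at h1
    have : h (x + x) - 4 * h x = (h (x + x) + h 0 - 2 * (h x + h x)) - h 0 := by ring
    rw [this]
    exact (abs_sub _ _).trans (by linarith)
  set D := C + |h 0| with hD
  have hD0 : 0 ≤ D := (abs_nonneg _).trans (hd 0)
  set u : G → ℕ → ℝ := fun x n => h (2 ^ n • x) / 4 ^ n with hu
  have hstep : ∀ x n, dist (u x n) (u x (n + 1)) ≤ D / 4 * (1 / 4) ^ n := by
    intro x n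
    have h1 := hd (2 ^ n • x)
    have e : (2 ^ n • x + 2 ^ n • x) = 2 ^ (n + 1) • x := by
      rw [← add_nsmul]; congr 1; ring
    rw [e] at h1
    rw [dist_comm, Real.dist_eq, hu]
    have e2 : h (2 ^ (n + 1) • x) / 4 ^ (n + 1) - h (2 ^ n • x) / 4 ^ n =
      (h (2 ^ (n + 1) • x) - 4 * h (2 ^ n • x)) * ((1 / 4) * (1 / 4) ^ n) := by
      rw [one_div_pow, pow_succ (4 : ℝ) n]
      field_simp
    simp only
    rw [e2, abs_mul, abs_of_pos (show (0 : ℝ) < (1 / 4) * (1 / 4) ^ n by positivity)]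
    calc _ ≤ D * ((1 / 4) * (1 / 4) ^ n) := by gcongr
      _ = _ := by ring
  have hcs : ∀ x, CauchySeq (u x) := fun x =>
    cauchySeq_of_le_geometric (1 / 4) (D / 4) (by norm_num) (hstep x)
  choose q hq using fun x => cauchySeq_tendsto_of_complete (hcs x)
  refine ⟨q, ⟨D / 4 / (1 - 1 / 4), by positivity, fun x => ?_⟩, fun x y => ?_⟩
  · have := dist_le_of_le_geometric_of_tendsto₀ (1 / 4) (D / 4) (by norm_num) (hstep x) (hq x)
    rw [dist_comm, Real.dist_eq] at this
    simpa [hu] using this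
  · have h1 : Tendsto (fun n => u (x + y) n + u (x - y) n - 2 * (u x n + u y n)) atTop
        (𝓝 (q (x + y) + q (x - y) - 2 * (q x + q y))) :=
      ((hq _).add (hq _)).sub (((hq _).add (hq _)).const_mul 2)
    have h2 : Tendsto (fun n => u (x + y) n + u (x - y) n - 2 * (u x n + u y n)) atTop (𝓝 0) := by
      refine squeeze_zero_norm (a := fun n => C * (1 / 4) ^ n) (fun n => ?_) ?_
      · rw [Real.norm_eq_abs]
        have h3 := H (2 ^ n • x) (2 ^ n • y)
        rw [← nsmul_add, ← nsmul_sub] at h3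
        have e : u (x + y) n + u (x - y) n - 2 * (u x n + u y n) =
          (h (2 ^ n • (x + y)) + h (2 ^ n • (x - y)) - 2 * (h (2 ^ n • x) + h (2 ^ n • y))) *
            (1 / 4) ^ n := by
          simp only [hu]; rw [one_div_pow]; field_simp
        rw [e, abs_mul, abs_of_pos (show (0 : ℝ) < (1 / 4) ^ n by positivity)]
        gcongr
      · have := (tendsto_pow_atTop_nhds_zero_of_lt_one (r := (1 / 4 : ℝ)) (by norm_num)
          (by norm_num)).const_mul C
        simpa using this
    have := tendsto_nhds_unique h1 h2
    linarith

variable {q : G → ℝ}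

lemma q_zero (hq : ∀ x y, q (x + y) + q (x - y) = 2 * (q x + q y)) :
    q 0 = 0 := by
  have := hq 0 0
  simp only [add_zero, sub_zero] at this
  linarith

lemma q_neg (hq : ∀ x y, q (x + y) + q (x - y) = 2 * (q x + q y)) (x : G) :
    q (-x) = q x := by
  have h1 := hq 0 x
  have h2 := q_zero hq
  simp only [zero_add, zero_sub] at h1
  linarith

lemma q_sub_comm (hq : ∀ x y, q (x + y) + q (x - y) = 2 * (q x + q y)) (x y : G) :
    q (x - y) = q (y - x) := by
  rw [← q_neg hq, neg_sub]

lemma q_three (hq : ∀ x y, q (x + y) + q (x - y) = 2 * (q x + q y)) (x y z : G) :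
    q (x + y + z) = q (x + y) + q (x + z) + q (y + z) - q x - q y - q z := by
  have h1 := hq (x + z) y
  have h2 := hq (x + y) z
  have h3 := hq x (z - y)
  have h4 := hq z y
  rw [show x + z + y = x + y + z by abel, show x + z - y = x + (z - y) by abel] at h1
  rw [show x + y - z = x - (z - y) by abel] at h2
  rw [add_comm z y] at h4
  linarith

/-- The bilinear form attached to `q`, as an additive map in the second argument. -/
noncomputable def polarHom (hq : ∀ x y, q (x + y) + q (x - y) = 2 * (q x + q y))
    (x : G) : G →+ ℝ where
  toFun y := (q (x + y) - q x - q y) / 2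
  map_zero' := by rw [add_zero, q_zero hq]; ring
  map_add' y z := by rw [← add_assoc, q_three hq]; ring

lemma polarHom_apply (hq : ∀ x y, q (x + y) + q (x - y) = 2 * (q x + q y)) (x y : G) :
    polarHom hq x y = (q (x + y) - q x - q y) / 2 := rfl

/-- The bilinear form attached to `q`. -/
noncomputable def polar2 (hq : ∀ x y, q (x + y) + q (x - y) = 2 * (q x + q y)) :
    G →+ G →+ ℝ where
  toFun := polarHom hq
  map_zero' := by
    ext y; rw [polarHom_apply, zero_add, q_zero hq]; simp
  map_add' x z := by
    ext y
    rw [AddMonoidHom.add_apply, polarHom_apply, polarHom_apply, polarHom_apply, q_three hq,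
      add_comm z y, add_comm x y]
    rw [add_comm y x, add_comm y z]; ring

lemma polar2_apply (hq : ∀ x y, q (x + y) + q (x - y) = 2 * (q x + q y)) (x y : G) :
    polar2 hq x y = (q (x + y) - q x - q y) / 2 := rfl

lemma q_two (hq : ∀ x y, q (x + y) + q (x - y) = 2 * (q x + q y)) (x : G) :
    q (x + x) = 4 * q x := by
  have := hq x x
  rw [sub_self, q_zero hq] at this
  linarith

lemma polar2_self (hq : ∀ x y, q (x + y) + q (x - y) = 2 * (q x + q y)) (x : G) :
    polar2 hq x x = q x := by
  rw [polar2_apply, q_two hq]; ring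

lemma q_two_pow (hq : ∀ x y, q (x + y) + q (x - y) = 2 * (q x + q y)) (n : ℕ) (x : G) :
    q (2 ^ n • x) = 4 ^ n * q x := by
  induction n with
  | zero => simp
  | succ n ih =>
    rw [pow_succ, mul_two, add_nsmul, q_two hq, ih]; ring

/-- A finitely generated group with a nonnegative quadratic form maps to a Euclidean space
compatibly with the forms. The map is a choice of coordinates followed by a square root of the Gram
matrix; it is not claimed to be additive. -/
lemma exists_euclid [AddGroup.FG G] (hq : ∀ x y, q (x + y) + q (x - y) = 2 * (q x + q y))
    (h0 : ∀ x, 0 ≤ q x) :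
    ∃ (n : ℕ) (φ : G → EuclideanSpace ℝ (Fin n)),
    ∀ (a : ℤ) (x y : G), q (a • x - y) = ‖(a : ℝ) • φ x - φ y‖ ^ 2 := by
  obtain ⟨S, hS⟩ := (AddGroup.fg_iff' (G := G)).1 inferInstance
  obtain ⟨S, -, hS⟩ := hS
  obtain ⟨n, g, hg⟩ : ∃ (n : ℕ) (g : Fin n → G), Set.range g = (S : Set G) := by
    refine ⟨S.card, fun i => (S.equivFin.symm i : G), ?_⟩
    ext x
    constructor
    · rintro ⟨i, rfl⟩; exact (S.equivFin.symm i).2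
    · intro hx; exact ⟨S.equivFin ⟨x, hx⟩, by simp⟩
  have hspan : ∀ x : G, ∃ c : Fin n → ℤ, ∑ i, c i • g i = x := by
    intro x
    have : x ∈ Submodule.span ℤ (Set.range g) := by
      have h1 : x ∈ (AddSubgroup.closure (Set.range g)) := by
        rw [hg, hS]; trivial
      rw [← Submodule.span_int_eq_addSubgroupClosure] at h1
      exact h1
    exact (Submodule.mem_span_range_iff_exists_fun ℤ).1 this
  choose c hc using hspan
  set M : Matrix (Fin n) (Fin n) ℝ := Matrix.of fun i j => polar2 hq (g i) (g j) with hM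
  have hval : ∀ v : Fin n → ℤ, q (∑ i, v i • g i) =
      (fun i => (v i : ℝ)) ⬝ᵥ (M.mulVec fun i => (v i : ℝ)) := by
    intro v
    rw [← polar2_self hq, map_sum]
    simp only [map_sum, map_zsmul, AddMonoidHom.finsetSum_apply, AddMonoidHom.smul_apply,
      zsmul_eq_mul, dotProduct, Matrix.mulVec, hM, Matrix.of_apply, Finset.mul_sum]
    refine Finset.sum_congr rfl fun i _ => Finset.sum_congr rfl fun j _ => ?_
    rw [polar2_apply, polar2_apply, add_comm (g j)]
    ring
  have hcont : Continuous fun v : Fin n → ℝ => v ⬝ᵥ (M.mulVec v) := by fun_prop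
  have hrat : ∀ v : Fin n → ℚ, 0 ≤ (fun i => (v i : ℝ)) ⬝ᵥ (M.mulVec fun i => (v i : ℝ)) := by
    intro v
    obtain ⟨b, hb⟩ := IsLocalization.exist_integer_multiples_of_finset (nonZeroDivisors ℤ)
      (Finset.univ.image v)
    have hb' : ∀ i, ∃ w : ℤ, (w : ℚ) = (b : ℤ) * v i := by
      intro i
      obtain ⟨w, hw⟩ := hb (v i) (by simp)
      exact ⟨w, by simpa using hw⟩
    choose w hw using hb'
    have hb0 : ((b : ℤ) : ℝ) ≠ 0 := by
      exact_mod_cast nonZeroDivisors.coe_ne_zero b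
    have e : (fun i => (w i : ℝ)) = ((b : ℤ) : ℝ) • (fun i => (v i : ℝ)) := by
      ext i
      simp only [Pi.smul_apply, smul_eq_mul]
      exact_mod_cast congrArg (fun z : ℚ => (z : ℝ)) (hw i)
    have h1 := (h0 _).trans_eq (hval w)
    rw [e, Matrix.mulVec_smul, smul_dotProduct, dotProduct_smul, smul_eq_mul, smul_eq_mul,
      ← mul_assoc] at h1
    exact nonneg_of_mul_nonneg_right h1 (mul_self_pos.2 hb0)
  have hreal : ∀ v : Fin n → ℝ, 0 ≤ v ⬝ᵥ (M.mulVec v) := by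
    intro v
    have hd : DenseRange (Pi.map fun _ : Fin n => ((↑) : ℚ → ℝ)) :=
      DenseRange.piMap fun _ => Rat.denseRange_cast
    exact hd.induction_on (p := fun v => 0 ≤ v ⬝ᵥ (M.mulVec v)) v
      (isClosed_le continuous_const hcont) hrat
  have hpsd : M.PosSemidef := by
    refine Matrix.PosSemidef.of_dotProduct_mulVec_nonneg ?_ ?_
    · ext i j
      simp only [Matrix.conjTranspose_apply, hM, Matrix.of_apply, star_trivial, polar2_apply]
      rw [add_comm (g j)]; ring
    · intro v; simpa using hreal v
  obtain ⟨A, hA⟩ := CStarAlgebra.nonneg_iff_eq_star_mul_self.mp hpsd.nonneg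
  rw [Matrix.star_eq_conjTranspose] at hA
  refine ⟨n, fun x => WithLp.toLp 2 (A.mulVec fun i => (c x i : ℝ)), fun a x y => ?_⟩
  have e1 : a • x - y = ∑ i, (a * c x i - c y i) • g i := by
    simp only [sub_smul, mul_smul, Finset.sum_sub_distrib, ← Finset.smul_sum, hc]
  rw [e1, hval, hA]
  have e2 : (a : ℝ) • (WithLp.toLp 2 (A.mulVec fun i => (c x i : ℝ))) -
      WithLp.toLp 2 (A.mulVec fun i => (c y i : ℝ)) =
      WithLp.toLp 2 (A.mulVec fun i => ((a * c x i - c y i : ℤ) : ℝ)) := by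
    rw [← WithLp.toLp_smul, ← WithLp.toLp_sub, ← Matrix.mulVec_smul, ← Matrix.mulVec_sub]
    congr 2
    ext i; simp
  rw [e2, ← Matrix.mulVec_mulVec, Matrix.dotProduct_mulVec, EuclideanSpace.norm_sq_eq]
  simp [dotProduct, Matrix.vecMul_transpose, pow_two]

/-- Among infinitely many points of a finitely generated group, two are nearly proportional by a
power of two. -/
lemma cluster [AddGroup.FG G] (hq : ∀ x y, q (x + y) + q (x - y) = 2 * (q x + q y))
    (h0 : ∀ x, 0 ≤ q x) {ι : Type*} [Infinite ι] (P : ι → G)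
    (hfin : ∀ B : ℝ, {i | q (P i) ≤ B}.Finite) {ε : ℝ} (hε : 0 < ε) (B : ℝ) (N : ℕ) :
    ∃ (i j : ι) (r : ℕ), N ≤ r ∧ B < q (P i) ∧
      q (2 ^ (r + 1) • P i - P j) ≤ ε * 4 ^ (r + 1) * q (P i) := by
  obtain ⟨n, φ, hφ⟩ := exists_euclid hq h0
  have hnorm : ∀ x, q x = ‖φ x‖ ^ 2 := by
    intro x
    have := hφ 0 x x
    simpa [q_neg hq] using this
  -- Points of large height, normalised into the annulus `1 ≤ ‖u‖ ≤ 2`.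
  have hbig : ∀ m : ℕ, ∃ i, max (max B 1) (4 ^ m) < q (P i) := by
    intro m
    by_contra! hcon
    exact Set.infinite_univ ((hfin (max (max B 1) (4 ^ m))).subset fun i _ => hcon i)
  have hexp : ∀ i, 1 < q (P i) → ∃ e : ℕ, 2 ^ e ≤ ‖φ (P i)‖ ∧ ‖φ (P i)‖ < 2 ^ (e + 1) := by
    intro i hi
    rw [hnorm] at hi
    exact exists_nat_pow_near (by nlinarith [norm_nonneg (φ (P i))]) one_lt_two
  have hstep : ∀ m : ℕ, ∃ i e, B < q (P i) ∧ m ≤ e ∧ 2 ^ e ≤ ‖φ (P i)‖ ∧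
      ‖φ (P i)‖ < 2 ^ (e + 1) := by
    intro m
    obtain ⟨i, hi⟩ := hbig (m + 1)
    obtain ⟨⟨h1, h2⟩, h3⟩ := max_lt_iff.1 hi |>.imp_left max_lt_iff.1
    obtain ⟨e, he1, he2⟩ := hexp i h2
    refine ⟨i, e, h1, ?_, he1, he2⟩
    rw [hnorm, show (4 : ℝ) = 2 ^ 2 by norm_num, ← pow_mul, mul_comm, pow_mul] at h3
    have h4 := lt_of_pow_lt_pow_left₀ 2 (norm_nonneg _) h3
    have h5 := h4.trans he2
    have := (pow_lt_pow_iff_right₀ (one_lt_two (α := ℝ))).1 h5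
    omega
  choose I e hI1 hI2 hI3 hI4 using hstep
  -- indices with well separated exponents
  let s : ℕ → ℕ := fun t => Nat.rec 0 (fun _ m => e m + N + 1) t
  have hs : ∀ t, s (t + 1) = e (s t) + N + 1 := fun t => rfl
  have hmono : ∀ t t', t < t' → e (s t) + N + 1 ≤ e (s t') := by
    intro t t' h
    induction t', h using Nat.le_induction with
    | base => rw [← hs]; exact hI2 _
    | succ t' h ih =>
      have := hI2 (s (t' + 1))
      rw [hs] at this
      rw [hs]; omega
  set u : ℕ → EuclideanSpace ℝ (Fin n) := fun t => ((2 : ℝ) ^ e (s t))⁻¹ • φ (P (I (s t))) with hu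
  have hub : ∀ t, u t ∈ Metric.closedBall (0 : EuclideanSpace ℝ (Fin n)) 2 := by
    intro t
    rw [mem_closedBall_zero_iff, hu]
    simp only [norm_smul, norm_inv, norm_pow, Real.norm_ofNat]
    rw [inv_mul_le_iff₀ (by positivity), ← pow_succ]
    exact (hI4 _).le
  obtain ⟨a, -, ψ, hψ, hlim⟩ := (isCompact_closedBall (0 : EuclideanSpace ℝ (Fin n)) 2).tendsto_subseq hub
  have hcs := hlim.cauchySeq
  obtain ⟨T, hT⟩ := Metric.cauchySeq_iff.1 hcs (Real.sqrt ε) (Real.sqrt_pos.2 hε)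
  have hd := hT T le_rfl (T + 1) (by omega)
  set t := ψ T
  set t' := ψ (T + 1)
  have htt : t < t' := hψ (by omega)
  have hm := hmono t t' htt
  obtain ⟨r, hr⟩ : ∃ r, e (s t') = e (s t) + (r + 1) := ⟨e (s t') - e (s t) - 1, by omega⟩
  refine ⟨I (s t), I (s t'), r, by omega, hI1 _, ?_⟩
  have e1 : ‖((2 : ℝ) ^ (r + 1)) • φ (P (I (s t))) - φ (P (I (s t')))‖ ≤
      2 ^ (e (s t')) * Real.sqrt ε := by
    have e2 : ((2 : ℝ) ^ (r + 1)) • φ (P (I (s t))) - φ (P (I (s t'))) =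
      (2 : ℝ) ^ (e (s t')) • (u t - u t') := by
      simp only [hu]
      rw [smul_sub, smul_smul, smul_smul, mul_inv_cancel₀ (by positivity), one_smul, hr,
        pow_add 2 (e (s t)), mul_comm ((2 : ℝ) ^ e (s t)), mul_assoc, mul_inv_cancel₀ (by positivity), mul_one]
    rw [e2, norm_smul, norm_pow, Real.norm_ofNat]
    gcongr
    rw [dist_eq_norm] at hd
    exact hd.le
  have e3 := hφ (2 ^ (r + 1)) (P (I (s t))) (P (I (s t')))
  rw [show ((2 : ℤ) ^ (r + 1)) • P (I (s t)) = (2 ^ (r + 1) : ℕ) • P (I (s t)) by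
    rw [← natCast_zsmul]; push_cast; rfl] at e3
  push_cast at e3
  rw [e3]
  calc _ ≤ (2 ^ (e (s t')) * Real.sqrt ε) ^ 2 := by gcongr
    _ = ε * (4 ^ (r + 1) * (2 ^ (e (s t))) ^ 2) := by
      rw [mul_pow, Real.sq_sqrt hε.le, hr, pow_add, show (4 : ℝ) = 2 ^ 2 by norm_num, ← pow_mul 2 2]
      ring
    _ ≤ ε * (4 ^ (r + 1) * q (P (I (s t)))) := by
      rw [hnorm]; gcongr; exact hI3 _
    _ = _ := by ring
end canonical
end HE

/-! ### Finiteness of classes modulo squares -/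

namespace HE
set_option linter.unusedSectionVars false
open IsDedekindDomain NumberField WithZero

section
variable {K : Type*} [Field K] [NumberField K]

/-- `A` meets only finitely many classes of nonzero elements modulo squares. -/
def SqFin (A : Set K) : Prop :=
  ∃ T : Set K, T.Finite ∧ (∀ t ∈ T, t ≠ 0) ∧ ∀ a ∈ A, ∃ t ∈ T, ∃ b, b ≠ 0 ∧ a = t * b ^ 2

lemma SqFin.mono {A B : Set K} (h : SqFin B) (hAB : A ⊆ B) : SqFin A := by
  obtain ⟨T, h1, h2, h3⟩ := h
  exact ⟨T, h1, h2, fun a ha => h3 a (hAB ha)⟩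

/-- Classes modulo squares may be counted on the fibres of a map to a finite set, provided ratios
in a fibre are controlled. -/
lemma SqFin.of_map {A H : Set K} (hA : ∀ a ∈ A, a ≠ 0) {B : Type*} [Finite B] (f : K → B)
    (hf : ∀ a ∈ A, ∀ a' ∈ A, f a = f a' → a / a' ∈ H) (hH : SqFin H) : SqFin A := by
  classical
  obtain ⟨T, h1, h2, h3⟩ := hH
  let g : B → K := fun β => if h : ∃ a ∈ A, f a = β then h.choose else 1
  have hg : ∀ β, g β ≠ 0 := by
    intro β
    by_cases h : ∃ a ∈ A, f a = β
    · simp only [g, dif_pos h]; exact hA _ h.choose_spec.1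
    · simp [g, dif_neg h]
  refine ⟨Set.image2 (fun β t => g β * t) Set.univ T, Set.finite_univ.image2 _ h1, ?_, ?_⟩
  · rintro _ ⟨β, -, t, ht, rfl⟩
    exact mul_ne_zero (hg β) (h2 t ht)
  · intro a ha
    have h : ∃ a' ∈ A, f a' = f a := ⟨a, ha, rfl⟩
    have hga : g (f a) ∈ A ∧ f (g (f a)) = f a := by
      simp only [g, dif_pos h]; exact h.choose_spec
    obtain ⟨t, ht, b, hb, e⟩ := h3 _ (hf a ha _ hga.1 hga.2.symm)
    refine ⟨g (f a) * t, ⟨f a, trivial, t, ht, rfl⟩, b, hb, ?_⟩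
    rw [div_eq_iff (hg _)] at e
    exact e.trans (by ring)

lemma SqFin.units : SqFin (Set.range fun u : (𝓞 K)ˣ => algebraMap (𝓞 K) K u) := by
  have hfi : (powMonoidHom (α := (𝓞 K)ˣ) 2).range.FiniteIndex := by
    have : Group.FG (𝓞 K)ˣ := Group.fg_iff_monoid_fg.2 inferInstance
    exact Subgroup.finiteIndex_range_powMonoidHom_of_fg _ two_ne_zero
  refine ⟨Set.range fun c : (𝓞 K)ˣ ⧸ (powMonoidHom (α := (𝓞 K)ˣ) 2).range =>
    algebraMap (𝓞 K) K (c.out : (𝓞 K)ˣ), Set.finite_range _, ?_, ?_⟩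
  · rintro _ ⟨c, rfl⟩; simp
  · rintro _ ⟨u, rfl⟩
    refine ⟨_, ⟨QuotientGroup.mk u, rfl⟩, ?_⟩
    obtain ⟨⟨_, w, rfl⟩, hw⟩ := QuotientGroup.mk_out_eq_mul (powMonoidHom (α := (𝓞 K)ˣ) 2).range u
    refine ⟨algebraMap (𝓞 K) K (w⁻¹ : (𝓞 K)ˣ), by simp, ?_⟩
    simp only
    rw [hw]
    simp only [powMonoidHom_apply, Units.val_mul, Units.val_pow_eq_pow_val, map_mul, map_pow]
    rw [mul_assoc, ← mul_pow, ← map_mul, Units.mul_inv]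
    simp

lemma isSquare_exp {n : ℤ} : IsSquare (exp n : WithZero (Multiplicative ℤ)) ↔ Even n := by
  constructor
  · rintro ⟨r, hr⟩
    have hr0 : r ≠ 0 := by rintro rfl; simp at hr
    obtain ⟨m, rfl⟩ : ∃ m, r = exp m := ⟨log r, (exp_log hr0).symm⟩
    rw [← exp_add, exp_inj] at hr
    exact ⟨m, hr⟩
  · rintro ⟨m, rfl⟩
    exact ⟨exp m, exp_add m m⟩

lemma exists_exp (v : HeightOneSpectrum (𝓞 K)) {a : K} (ha : a ≠ 0) :
    ∃ n : ℤ, v.valuation K a = exp n :=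
  ⟨log (v.valuation K a), (exp_log ((v.valuation K).ne_zero_iff.2 ha)).symm⟩

/-- An integer all of whose valuations are even generates the square of an ideal. -/
lemma exists_ideal_sq {a : 𝓞 K} (ha : a ≠ 0)
    (h : ∀ v : HeightOneSpectrum (𝓞 K), IsSquare (v.valuation K (algebraMap (𝓞 K) K a))) :
    ∃ J : Ideal (𝓞 K), J ≠ 0 ∧ J ^ 2 = Ideal.span {a} := by
  have hI : Ideal.span {a} ≠ 0 := by simpa using ha
  have hev : ∀ v : HeightOneSpectrum (𝓞 K), ∃ c : ℕ,
      (Associates.mk v.asIdeal).count (Associates.mk (Ideal.span {a})).factors = c * 2 := by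
    intro v
    have h1 := h v
    rw [HeightOneSpectrum.valuation_of_algebraMap, HeightOneSpectrum.intValuation_if_neg v ha,
      isSquare_exp, even_neg, Int.even_coe_nat] at h1
    obtain ⟨c, hc⟩ := h1
    exact ⟨c, by omega⟩
  choose c hc using hev
  have e1 : ∀ v, v.maxPowDividing (Ideal.span {a}) = (v.asIdeal ^ c v) ^ 2 := by
    intro v
    rw [HeightOneSpectrum.maxPowDividing, hc, pow_mul]
  have hfin : Function.HasFiniteMulSupport fun v : HeightOneSpectrum (𝓞 K) => v.asIdeal ^ c v := by
    refine (Ideal.hasFiniteMulSupport hI).subset ?_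
    intro v hv h1
    apply hv
    simp only at h1
    rw [e1, sq] at h1
    exact (mul_eq_one.1 h1).1
  refine ⟨∏ᶠ v : HeightOneSpectrum (𝓞 K), v.asIdeal ^ c v, ?_, ?_⟩
  · rintro h0
    apply hI
    rw [← Ideal.finprod_heightOneSpectrum_factorization hI]
    simp only [e1]
    rw [← finprod_pow hfin, h0]; simp
  · rw [finprod_pow hfin, ← Ideal.finprod_heightOneSpectrum_factorization hI]
    simp only [e1]

/-- Finiteness of the class group and Dirichlet's unit theorem bound the classes of elements all of
whose valuations are even. -/
lemma SqFin.all_even : SqFin {a : K | a ≠ 0 ∧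
    ∀ v : HeightOneSpectrum (𝓞 K), IsSquare (v.valuation K a)} := by
  classical
  have key : ∀ a : K, a ≠ 0 → (∀ v : HeightOneSpectrum (𝓞 K), IsSquare (v.valuation K a)) →
      ∃ (d : 𝓞 K) (n : 𝓞 K) (J : nonZeroDivisors (Ideal (𝓞 K))), d ≠ 0 ∧ algebraMap (𝓞 K) K n = a * algebraMap (𝓞 K) K d ^ 2 ∧
        (J : Ideal (𝓞 K)) ^ 2 = Ideal.span {n} := by
    intro a ha hv
    obtain ⟨n, d, hd, e⟩ := IsFractionRing.div_surjective (A := 𝓞 K) a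
    have hd0 : d ≠ 0 := nonZeroDivisors.ne_zero hd
    have hdK : algebraMap (𝓞 K) K d ≠ 0 := by simpa using hd0
    have e' : algebraMap (𝓞 K) K (n * d) = a * algebraMap (𝓞 K) K d ^ 2 := by
      rw [← e, map_mul]; field_simp
    obtain ⟨J, hJ, hJ2⟩ := exists_ideal_sq (a := n * d) (by
        intro h0
        rw [h0, map_zero] at e'
        exact mul_ne_zero ha (pow_ne_zero 2 hdK) e'.symm) (by
        intro v
        rw [e', map_mul, map_pow]
        exact (hv v).mul (IsSquare.sq _))
    exact ⟨d, n * d, ⟨J, mem_nonZeroDivisors_of_ne_zero hJ⟩, hd0, e', hJ2⟩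
  choose! d n J hd hn hJ using key
  refine SqFin.of_map (fun a ha => ha.1) (fun a => ClassGroup.mk0 (J a))
    (H := {a : K | ∃ u : (𝓞 K)ˣ, ∃ b : K, b ≠ 0 ∧ a = algebraMap (𝓞 K) K u * b ^ 2}) ?_ ?_
  · rintro a ⟨ha, hav⟩ a' ⟨ha', hav'⟩ e
    obtain ⟨x, y, hx, hy, e⟩ := ClassGroup.mk0_eq_mk0_iff.1 e
    have e2 : Ideal.span {x ^ 2 * n a} = Ideal.span {y ^ 2 * n a'} := by
      rw [← Ideal.span_singleton_mul_span_singleton, ← Ideal.span_singleton_mul_span_singleton,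
        ← hJ a ha hav, ← hJ a' ha' hav', ← Ideal.span_singleton_pow, ← Ideal.span_singleton_pow,
        ← mul_pow, ← mul_pow, e]
    obtain ⟨u, hu⟩ := Ideal.span_singleton_eq_span_singleton.1 e2.symm
    have hxK : algebraMap (𝓞 K) K x ≠ 0 := by simpa using hx
    have hyK : algebraMap (𝓞 K) K y ≠ 0 := by simpa using hy
    have hdK : algebraMap (𝓞 K) K (d a) ≠ 0 := by simpa using hd a ha hav
    have hdK' : algebraMap (𝓞 K) K (d a') ≠ 0 := by simpa using hd a' ha' hav'
    refine ⟨u, algebraMap (𝓞 K) K y * algebraMap (𝓞 K) K (d a') /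
      (algebraMap (𝓞 K) K x * algebraMap (𝓞 K) K (d a)), div_ne_zero (mul_ne_zero hyK hdK') (mul_ne_zero hxK hdK), ?_⟩
    have h3 := congrArg (algebraMap (𝓞 K) K) hu
    simp only [map_mul, map_pow] at h3
    rw [hn a ha hav, hn a' ha' hav'] at h3
    field_simp
    linear_combination -h3
  · obtain ⟨T, h1, h2, h3⟩ := SqFin.units (K := K)
    refine ⟨T, h1, h2, ?_⟩
    rintro _ ⟨u, b, hb, rfl⟩
    obtain ⟨t, ht, b', hb', e⟩ := h3 _ ⟨u, rfl⟩
    simp only at e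
    refine ⟨t, ht, b' * b, mul_ne_zero hb' hb, ?_⟩
    rw [e]; ring

lemma SqFin.even_outside {S : Set (HeightOneSpectrum (𝓞 K))} (hS : S.Finite) :
    SqFin {a : K | a ≠ 0 ∧
      ∀ v : HeightOneSpectrum (𝓞 K), v ∉ S → IsSquare (v.valuation K a)} := by
  classical
  have : Finite S := hS
  refine SqFin.of_map (fun a ha => ha.1) (B := S → Bool)
    (fun a v => decide (IsSquare (v.1.valuation K a))) ?_ SqFin.all_even
  rintro a ⟨ha, hav⟩ a' ⟨ha', hav'⟩ e
  refine ⟨div_ne_zero ha ha', fun v => ?_⟩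
  rw [map_div₀]
  by_cases hv : v ∈ S
  · have h1 := congrFun e ⟨v, hv⟩
    simp only [decide_eq_decide] at h1
    obtain ⟨n, hn⟩ := exists_exp v ha
    obtain ⟨m, hm⟩ := exists_exp v ha'
    rw [hn, hm, isSquare_exp, isSquare_exp] at h1
    rw [hn, hm, ← exp_sub, isSquare_exp, Int.even_sub]
    exact h1
  · exact (hav v hv).div (hav' v hv)

lemma finite_val_ne_one {a : K} (ha : a ≠ 0) :
    {v : HeightOneSpectrum (𝓞 K) | v.valuation K a ≠ 1}.Finite := by
  refine ((HeightOneSpectrum.Support.finite (𝓞 K) a).union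
    (HeightOneSpectrum.Support.finite (𝓞 K) a⁻¹)).subset fun v hv => ?_
  have hv' : v.valuation K a ≠ 1 := hv
  rcases lt_or_gt_of_ne hv' with h | h
  · right
    change 1 < v.valuation K a⁻¹
    rw [map_inv₀]
    exact (one_lt_inv₀ (zero_lt_iff.2 ((v.valuation K).ne_zero_iff.2 ha))).2 h
  · exact Or.inl h

/-- If `y² = c ∏ (x - αⱼ)` with distinct `αⱼ`, then the products `(x - αᵢ) (x - αⱼ)` fall into
finitely many classes modulo squares, since outside finitely many primes their valuations
are even. -/
lemma selmer_finite {ι : Type*} [Fintype ι] (α : ι → K) (hα : Function.Injective α) {c : K}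
    (hc : c ≠ 0) : SqFin {a : K | ∃ x y i j, y ≠ 0 ∧ y ^ 2 = c * ∏ t, (x - α t) ∧
      a = (x - α i) * (x - α j)} := by
  classical
  let S : Set (HeightOneSpectrum (𝓞 K)) :=
    {v | v.valuation K c ≠ 1} ∪ (⋃ i, HeightOneSpectrum.Support (𝓞 K) (α i)) ∪
      ⋃ i, ⋃ j, {v | i ≠ j ∧ v.valuation K (α i - α j) ≠ 1}
  have hS : S.Finite := by
    refine ((finite_val_ne_one hc).union (Set.finite_iUnion fun i =>
      HeightOneSpectrum.Support.finite (𝓞 K) (α i))).union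
      (Set.finite_iUnion fun i => Set.finite_iUnion fun j => ?_)
    by_cases hij : i = j
    · simp [hij]
    · exact (finite_val_ne_one (sub_ne_zero.2 (hα.ne hij))).subset fun v hv => hv.2
  refine (SqFin.even_outside hS).mono ?_
  rintro _ ⟨x, y, i, j, hy, e, rfl⟩
  have hne : ∀ i, x - α i ≠ 0 := by
    intro i h0
    apply pow_ne_zero 2 hy
    rw [e, Finset.prod_eq_zero (Finset.mem_univ i) h0, mul_zero]
  refine ⟨mul_ne_zero (hne i) (hne j), fun v hv => ?_⟩
  simp only [S, Set.mem_union, Set.mem_iUnion, not_or, not_exists, Set.mem_ofPred_eq, not_not,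
    HeightOneSpectrum.Support, not_lt, not_and] at hv
  obtain ⟨⟨hvc, hvα⟩, hvd⟩ := hv
  rw [map_mul]
  rcases lt_or_ge 1 (v.valuation K x) with hx | hx
  · rw [Valuation.map_sub_eq_of_lt_left _ ((hvα i).trans_lt hx),
      Valuation.map_sub_eq_of_lt_left _ ((hvα j).trans_lt hx)]
    exact IsSquare.mul_self _
  · have hle : ∀ i, v.valuation K (x - α i) ≤ 1 := fun i => Valuation.map_sub_le _ hx (hvα i)
    have hsq : ∀ i, IsSquare (v.valuation K (x - α i)) := by
      intro i
      rcases (hle i).lt_or_eq with hi | hi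
      · have hoth : ∀ j, j ≠ i → v.valuation K (x - α j) = 1 := by
          intro j hj
          have e1 : x - α j = (x - α i) + (α i - α j) := by ring
          have h1 := hvd i j hj.symm
          rw [e1, Valuation.map_add_eq_of_lt_right, h1]
          rw [h1]; exact hi
        have h2 := congrArg (v.valuation K) e
        rw [map_pow, map_mul, hvc, one_mul, map_prod,
          Finset.prod_eq_single i (fun j _ hj => hoth j hj) (by simp)] at h2
        rw [← h2]; exact IsSquare.sq _
      · rw [hi]; exact IsSquare.one
    exact (hsq i).mul (hsq j)
end
end HE

/-! ### The Mordell-Weil theorem with full two-torsion -/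

namespace HE
set_option linter.unusedSectionVars false

section
variable {F : Type*} [Field F] [CharZero F] {k l : F} [Nondeg k l] [DecidableEq F]

/-- A point with `y ≠ 0` whose `x - eᵢ` are all squares is divisible by `2`. -/
lemma exists_half {x y r₁ r₂ r₃ : F} (h : y ^ 2 = x * (x - k) * (x - l)) (_hy : y ≠ 0)
    (h1 : x = r₁ ^ 2) (h2 : x - k = r₂ ^ 2) (h3 : x - l = r₃ ^ 2) :
    ∃ Q : EP k l, Q + Q = pt x y h := by
  wlog hs : y = r₁ * r₂ * r₃ generalizing r₁
  · have e : y ^ 2 = (r₁ * r₂ * r₃) ^ 2 := by rw [h, h2, h3, h1]; ring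
    rcases sq_eq_sq_iff_eq_or_eq_neg.1 e with e | e
    · exact (hs e).elim
    · exact this (r₁ := -r₁) (by rw [h1]; ring) (by rw [e]; ring)
  have hk : k = r₁ ^ 2 - r₂ ^ 2 := by linear_combination h1 - h2
  have hl : l = r₁ ^ 2 - r₃ ^ 2 := by linear_combination h1 - h3
  have n1 := Nondeg.hk (k := k) (l := l)
  have n2 := Nondeg.hl (k := k) (l := l)
  have n3 := Nondeg.hkl (k := k) (l := l)
  have m1 : r₁ + r₂ ≠ 0 := fun h0 => n1 (by rw [hk]; linear_combination (r₁ - r₂) * h0)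
  have m2 : r₁ + r₃ ≠ 0 := fun h0 => n2 (by rw [hl]; linear_combination (r₁ - r₃) * h0)
  have m3 : r₂ + r₃ ≠ 0 := fun h0 => n3 (by
    rw [hl, hk]; linear_combination (r₃ - r₂) * h0)
  have hQ : ((r₁ + r₂) * (r₁ + r₃) * (r₂ + r₃)) ^ 2 =
      (x + r₁ * r₂ + r₁ * r₃ + r₂ * r₃) * ((x + r₁ * r₂ + r₁ * r₃ + r₂ * r₃) - k) *
        ((x + r₁ * r₂ + r₁ * r₃ + r₂ * r₃) - l) := by
    rw [hk, hl, h1]; ring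
  refine ⟨pt _ _ hQ, ?_⟩
  obtain ⟨H, e⟩ := double_pt hQ (mul_ne_zero (mul_ne_zero m1 m2) m3) (s := r₁ + r₂ + r₃)
    (X := x) (Y := y) (by rw [hk, hl, h1]; ring) (by rw [hk, hl, h1]; ring)
    (by rw [hs, h1]; ring)
  exact e

/-- The points of order dividing two, described by coordinates. -/
def tors2 (k l : F) [Nondeg k l] : Set (EP k l) :=
  {P | P = 0 ∨ ∃ x h, P = pt x 0 h}

lemma tors2_finite : (tors2 k l).Finite := by
  classical
  have : tors2 k l ⊆ {0} ∪ ⋃ x ∈ ({0, k, l} : Set F), {P | ∃ h, P = pt x 0 h} := by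
    rintro P (rfl | ⟨x, h, rfl⟩)
    · exact Or.inl rfl
    · right
      refine Set.mem_biUnion (x := x) ?_ ⟨h, rfl⟩
      have h' := h
      rw [zero_pow two_ne_zero, eq_comm, mul_eq_zero, mul_eq_zero, sub_eq_zero, sub_eq_zero] at h'
      rcases h' with (h' | h') | h' <;> simp [h']
  refine Set.Finite.subset ((Set.finite_singleton _).union
    ((Set.toFinite {0, k, l}).biUnion fun x _ => ?_)) this
  refine Set.Subsingleton.finite ?_
  rintro _ ⟨h, rfl⟩ _ ⟨h', rfl⟩
  rfl

/-- Two points whose `x - eᵢ` lie in equal classes modulo squares have a sum in `2 E + E[2]`. -/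
lemma add_mem_of_class {x y x' y' c₁ c₂ c₃ b₁ b₂ b₃ b₁' b₂' b₃' : F}
    (h : y ^ 2 = x * (x - k) * (x - l)) (h' : y' ^ 2 = x' * (x' - k) * (x' - l))
    (hy : y ≠ 0) (hy' : y' ≠ 0)
    (e1 : x = c₁ * b₁ ^ 2) (e2 : x - k = c₂ * b₂ ^ 2) (e3 : x - l = c₃ * b₃ ^ 2)
    (e1' : x' = c₁ * b₁' ^ 2) (e2' : x' - k = c₂ * b₂' ^ 2) (e3' : x' - l = c₃ * b₃' ^ 2) :
    (∃ Q : EP k l, Q + Q = pt x y h + pt x' y' h') ∨ (pt x y h + pt x' y' h' : EP k l) ∈ tors2 k l := by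
  by_cases hx : x = x'
  · subst hx
    rcases pt_eq_or_neg h h' with e | e
    · left; exact ⟨_, by rw [e]⟩
    · right; left; rw [e, add_neg_cancel]
  have hd : x - x' ≠ 0 := sub_ne_zero.2 hx
  have nz : ∀ {x y : F}, y ^ 2 = x * (x - k) * (x - l) → y ≠ 0 → x ≠ 0 ∧ x - k ≠ 0 ∧ x - l ≠ 0 := by
    intro x y h hy
    have := pow_ne_zero 2 hy
    rw [h, mul_ne_zero_iff, mul_ne_zero_iff] at this
    exact ⟨this.1.1, this.1.2, this.2⟩
  obtain ⟨a1, a2, a3⟩ := nz h hy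
  obtain ⟨a1', a2', a3'⟩ := nz h' hy'
  set s := (y - y') / (x - x') with hs
  have hs' : s * (x - x') = y - y' := div_mul_cancel₀ _ hd
  set t := y - s * x with ht
  obtain ⟨H, e⟩ := add_pt h h' hx hs' rfl rfl
  set X := s ^ 2 + (k + l) - x - x' with hX
  set Y := -(s * (X - x) + y) with hY
  have hyt : y = s * x + t := by rw [ht]; ring
  have hyt' : y' = s * x' + t := by rw [ht]; linear_combination hs'
  -- the line through the two points meets the cubic in `x`, `x'` and `X`
  have key : ∀ e : F, (x - e) * (x' - e) * (X - e) * (x - x') =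
      (-(e * (e - k) * (e - l)) + (s * e + t) ^ 2) * (x - x') := by
    intro e
    rw [hyt] at h
    rw [hyt'] at h'
    rw [hX]
    linear_combination (x' - e) * h - (x - e) * h'
  have key' : ∀ e : F, e * (e - k) * (e - l) = 0 →
      (x - e) * (x' - e) * (X - e) = (s * e + t) ^ 2 := by
    intro e he
    have := mul_right_cancel₀ hd (key e)
    rw [this, he]; ring
  have sq : ∀ {e c b b' : F}, e * (e - k) * (e - l) = 0 → x - e ≠ 0 → x' - e ≠ 0 →
      x - e = c * b ^ 2 → x' - e = c * b' ^ 2 → X - e = ((s * e + t) / (c * b * b')) ^ 2 := by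
    intro e c b b' he n n' h1 h2
    have := key' e he
    have hc : c * b * b' ≠ 0 := by
      rw [h1] at n; rw [h2] at n'
      refine mul_ne_zero (mul_ne_zero ?_ ?_) ?_
      · exact left_ne_zero_of_mul n
      · exact fun h0 => n (by rw [h0]; ring)
      · exact fun h0 => n' (by rw [h0]; ring)
    rw [div_pow, eq_div_iff (pow_ne_zero 2 hc), ← this, h1, h2]; ring
  rw [e]
  by_cases hY0 : Y = 0
  · right; right
    exact ⟨X, by rw [← hY0]; exact H, pt_congr rfl hY0⟩
  · left
    refine exists_half H hY0 (r₁ := (s * 0 + t) / (c₁ * b₁ * b₁')) ?_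
      (sq (e := k) (by ring) a2 a2' e2 e2') (sq (e := l) (by ring) a3 a3' e3 e3')
    have := sq (e := 0) (by ring) (by rwa [sub_zero]) (by rwa [sub_zero]) (by rwa [sub_zero]) (by rwa [sub_zero])
    rwa [sub_zero] at this
end

section
variable {K : Type*} [Field K] [NumberField K] {k l : K} [Nondeg k l] [DecidableEq K]

/-- The weak Mordell-Weil theorem for curves with full two-torsion. -/
lemma weak_mw : (nsmulAddMonoidHom (α := EP k l) 2).range.FiniteIndex := by
  classical
  have n1 := Nondeg.hk (k := k) (l := l)
  have n2 := Nondeg.hl (k := k) (l := l)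
  have n3 := Nondeg.hkl (k := k) (l := l)
  have hinj : Function.Injective ![0, k, l] := by
    intro i j hij
    fin_cases i <;> fin_cases j <;> simp_all [eq_comm]
  obtain ⟨T', hT', hT0', hTA'⟩ := selmer_finite ![0, k, l] hinj (one_ne_zero (α := K))
  obtain ⟨T, hT, hT0, hTA, hT1⟩ : ∃ T : Set K, T.Finite ∧ (∀ t ∈ T, t ≠ 0) ∧
      (∀ t ∈ T', t ∈ T) ∧ (1 : K) ∈ T :=
    ⟨insert 1 T', hT'.insert 1, by rintro t (rfl | h); exacts [one_ne_zero, hT0' t h],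
      fun t h => Or.inr h, Or.inl rfl⟩
  have : Nonempty T := ⟨⟨1, hT1⟩⟩
  have hsel : ∀ x y : K, y ^ 2 = x * (x - k) * (x - l) → y ≠ 0 → ∀ i j : Fin 3,
      ∃ t ∈ T, ∃ b, b ≠ 0 ∧ (x - ![0, k, l] i) * (x - ![0, k, l] j) = t * b ^ 2 := by
    intro x y h hy i j
    have hp : y ^ 2 = 1 * ∏ t, (x - ![0, k, l] t) := by
      rw [Fin.prod_univ_three, h]; simp
    obtain ⟨t, ht, hb⟩ := hTA' _ ⟨x, y, i, j, hy, hp, rfl⟩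
    exact ⟨t, hTA t ht, hb⟩
  have hcl : ∀ x y : K, y ^ 2 = x * (x - k) * (x - l) → y ≠ 0 → ∃ t : Fin 3 → T,
      (∃ b, x = (t 0 : K) * b ^ 2) ∧ (∃ b, x - k = (t 1 : K) * b ^ 2) ∧
      (∃ b, x - l = (t 2 : K) * b ^ 2) := by
    intro x y h hy
    obtain ⟨t0, ht0, b0, hb0, e0⟩ := hsel x y h hy 1 2
    obtain ⟨t1, ht1, b1, hb1, e1⟩ := hsel x y h hy 0 2
    obtain ⟨t2, ht2, b2, hb2, e2⟩ := hsel x y h hy 0 1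
    simp at e0 e1 e2
    have f0 := hT0 t0 ht0
    have f1 := hT0 t1 ht1
    have f2 := hT0 t2 ht2
    refine ⟨![⟨t0, ht0⟩, ⟨t1, ht1⟩, ⟨t2, ht2⟩], ⟨y / (t0 * b0), ?_⟩, ⟨y / (t1 * b1), ?_⟩,
      ⟨y / (t2 * b2), ?_⟩⟩
    · simp; field_simp; rw [h]; linear_combination -x * e0
    · simp; field_simp; rw [h]; linear_combination -(x - k) * e1
    · simp; field_simp; rw [h]; linear_combination -(x - l) * e2
  choose! t ht using hcl
  have : Finite T := hT
  -- points with prescribed classes, and one representative for every class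
  let S : (Fin 3 → T) → Set (EP k l) := fun τ =>
    {P | ∃ x y h, y ≠ 0 ∧ P = pt x y h ∧ t x y = τ}
  let g : (Fin 3 → T) → EP k l := fun τ => if h : (S τ).Nonempty then h.choose else 0
  have hfin : (tors2 k l ∪ Set.image2 (fun τ P => P - g τ) Set.univ (tors2 k l)).Finite :=
    tors2_finite.union (Set.finite_univ.image2 _ tors2_finite)
  have hcover : ∀ P : EP k l, ∃ Q ∈ (tors2 k l ∪
      Set.image2 (fun τ P => P - g τ) Set.univ (tors2 k l)), ∃ R, P = Q + (R + R) := by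
    intro P
    rcases EP_cases P with rfl | ⟨x, y, h, rfl⟩
    · exact ⟨0, Or.inl (Or.inl rfl), 0, by simp⟩
    by_cases hy : y = 0
    · subst hy
      exact ⟨_, Or.inl (Or.inr ⟨x, h, rfl⟩), 0, by simp⟩
    have hne : (S (t x y)).Nonempty := ⟨_, x, y, h, hy, rfl, rfl⟩
    obtain ⟨x', y', h', hy', hg, ht'⟩ : g (t x y) ∈ S (t x y) := by
      simp only [g, dif_pos hne]; exact hne.choose_spec
    obtain ⟨⟨b1, e1⟩, ⟨b2, e2⟩, ⟨b3, e3⟩⟩ := ht x y h hy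
    obtain ⟨⟨b1', e1'⟩, ⟨b2', e2'⟩, ⟨b3', e3'⟩⟩ := ht x' y' h' hy'
    rw [ht'] at e1' e2' e3'
    rcases add_mem_of_class h h' hy hy' e1 e2 e3 e1' e2' e3' with ⟨Q, hQ⟩ | hQ
    · refine ⟨0 - g (t x y), Or.inr ⟨t x y, trivial, 0, Or.inl rfl, rfl⟩, Q, ?_⟩
      rw [hQ, hg]; abel
    · refine ⟨_, Or.inr ⟨t x y, trivial, _, hQ, rfl⟩, 0, ?_⟩
      simp only; rw [hg]; abel
  have : Finite (EP k l ⧸ (nsmulAddMonoidHom (α := EP k l) 2).range) := by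
    refine Set.finite_univ_iff.1 ((hfin.image
      (QuotientAddGroup.mk (s := (nsmulAddMonoidHom (α := EP k l) 2).range))).subset ?_)
    intro c _
    obtain ⟨P, rfl⟩ := QuotientAddGroup.mk_surjective c
    obtain ⟨Q, hQ, R, hR⟩ := hcover P
    refine ⟨Q, hQ, ?_⟩
    rw [QuotientAddGroup.eq]
    refine ⟨R, ?_⟩
    rw [hR, nsmulAddMonoidHom_apply, two_nsmul]; abel
  exact AddSubgroup.finiteIndex_of_finite_quotient

instance ep_fg : AddGroup.FG (EP k l) := by
  obtain ⟨C, hC⟩ := hX_parallelogram (k := k) (l := l)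
  exact AddCommGroup.fg_of_descent' weak_mw hX_nonneg hC
end
end HE

/-! ### Lifts and the group law -/

namespace HE
set_option linter.unusedSectionVars false
open Polynomial NumberField Height AdmissibleAbsValues

section
variable {F : Type*} [Field F] [CharZero F] {k l : F} [Nondeg k l] [DecidableEq F]

lemma double_pt' {x y : F} (h : y ^ 2 = x * (x - k) * (x - l)) (hy : y ≠ 0) :
    ∃ H, (pt x y h : EP k l) + pt x y h = pt (((x ^ 2 - k * l) / (2 * y)) ^ 2)
      ((x ^ 2 - k * l) * (x ^ 2 - 2 * k * x + k * l) * (x ^ 2 - 2 * l * x + k * l) / (8 * y ^ 3))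
      H := by
  refine double_pt h hy (s := (3 * x ^ 2 - 2 * (k + l) * x + k * l) / (2 * y)) (by field_simp) ?_ ?_
  · field_simp
    linear_combination -4 * (k + l - 2 * x) * h
  · have h4 : y ^ 4 = (x * (x - k) * (x - l)) ^ 2 := by rw [← h]; ring
    field_simp
    rw [h4, h]
    ring

lemma lift_eq {A : Fin 4 → F} (hA : IsLift k l A) (h3 : A 3 ≠ 0) :
    (A 0 * A 1 * A 2 / A 3 ^ 3) ^ 2 =
      A 0 ^ 2 / A 3 ^ 2 * (A 0 ^ 2 / A 3 ^ 2 - k) * (A 0 ^ 2 / A 3 ^ 2 - l) := by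
  have e1 : A 0 ^ 2 / A 3 ^ 2 - k = A 1 ^ 2 / A 3 ^ 2 := by
    rw [hA.hC]; field_simp
  have e2 : A 0 ^ 2 / A 3 ^ 2 - l = A 2 ^ 2 / A 3 ^ 2 := by
    rw [hA.hD]; field_simp
  rw [e1, e2]; field_simp

lemma double_alg {a b c d : F} (ha : a ≠ 0) (hb : b ≠ 0) (hc : c ≠ 0) (hd : d ≠ 0)
    (hC : b ^ 2 = a ^ 2 - k * d ^ 2) (hD : c ^ 2 = a ^ 2 - l * d ^ 2) :
    (((a ^ 2 / d ^ 2) ^ 2 - k * l) / (2 * (a * b * c / d ^ 3))) ^ 2 =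
      (a ^ 4 - k * l * d ^ 4) ^ 2 / (2 * d * a * b * c) ^ 2 ∧
    ((a ^ 2 / d ^ 2) ^ 2 - k * l) * ((a ^ 2 / d ^ 2) ^ 2 - 2 * k * (a ^ 2 / d ^ 2) + k * l) *
        ((a ^ 2 / d ^ 2) ^ 2 - 2 * l * (a ^ 2 / d ^ 2) + k * l) / (8 * (a * b * c / d ^ 3) ^ 3) =
      (a ^ 4 - k * l * d ^ 4) * (b ^ 2 * a ^ 2 - k * d ^ 2 * c ^ 2) *
        (c ^ 2 * a ^ 2 - l * d ^ 2 * b ^ 2) / (2 * d * a * b * c) ^ 3 := by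
  constructor
  · field_simp
  · rw [hC, hD]
    field_simp
    ring

lemma diff_alg {a b c d S C D : F} (hd : d ≠ 0) (hQ : d ^ 2 * S ^ 2 - a ^ 2 ≠ 0)
    (hb : b ^ 2 = a ^ 2 - k * d ^ 2) (hc : c ^ 2 = a ^ 2 - l * d ^ 2)
    (hC : C ^ 2 = S ^ 2 - k) (hD : D ^ 2 = S ^ 2 - l) :
    ((d * a * C * D + S * b * c) / (d ^ 2 * S ^ 2 - a ^ 2)) ^ 2 =
      ((a * b * c / d ^ 3 + S * C * D) / (a ^ 2 / d ^ 2 - S ^ 2)) ^ 2 + (k + l) -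
        a ^ 2 / d ^ 2 - S ^ 2 := by
  have e1 : (a * b * c / d ^ 3 + S * C * D) / (a ^ 2 / d ^ 2 - S ^ 2) =
      -(a * b * c + S * C * D * d ^ 3) / (d * (d ^ 2 * S ^ 2 - a ^ 2)) := by
    have e2 : a ^ 2 / d ^ 2 - S ^ 2 = -(d ^ 2 * S ^ 2 - a ^ 2) / d ^ 2 := by field_simp; ring
    rw [e2]
    field_simp
  have hbc : b ^ 2 * c ^ 2 = (a ^ 2 - k * d ^ 2) * (a ^ 2 - l * d ^ 2) := by rw [hb, hc]
  have hCD : C ^ 2 * D ^ 2 = (S ^ 2 - k) * (S ^ 2 - l) := by rw [hC, hD]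
  have key : (d * a * C * D + S * b * c) ^ 2 * d ^ 2 = (a * b * c + S * C * D * d ^ 3) ^ 2 +
      ((k + l) * d ^ 2 - a ^ 2 - S ^ 2 * d ^ 2) * (d ^ 2 * S ^ 2 - a ^ 2) ^ 2 := by
    linear_combination (S ^ 2 * d ^ 2 - a ^ 2) * hbc + (d ^ 4 * a ^ 2 - S ^ 2 * d ^ 6) * hCD
  rw [e1, div_pow, div_pow, div_eq_iff (pow_ne_zero 2 hQ)]
  apply mul_right_cancel₀ (pow_ne_zero 2 hd)
  rw [key]
  generalize d ^ 2 * S ^ 2 - a ^ 2 = Q at *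
  field_simp
  ring

/-- The point of the curve with projective lift `A`. -/
def lpt {A : Fin 4 → F} (hA : IsLift k l A) (h3 : A 3 ≠ 0) : EP k l := pt _ _ (lift_eq hA h3)

lemma two_nsmul_pt_ne {x y : F} {h : y ^ 2 = x * (x - k) * (x - l)}
    (h2 : (pt x y h : EP k l) + pt x y h ≠ 0) : y ≠ 0 := by
  rintro rfl
  exact h2 (add_self_pt_zero h)

lemma lift_coord_ne {A : Fin 4 → F} (hA : IsLift k l A) (h3 : A 3 ≠ 0)
    (h2 : lpt hA h3 + lpt hA h3 ≠ 0) : ∀ i, A i ≠ 0 := by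
  have := two_nsmul_pt_ne h2
  have h4 := left_ne_zero_of_mul (by rwa [div_eq_mul_inv] at this)
  rw [mul_ne_zero_iff, mul_ne_zero_iff] at h4
  intro i
  fin_cases i
  exacts [h4.1.1, h4.1.2, h4.2, h3]
end

section
variable {R F : Type*} [CommRing R] [Field F] [Algebra R F] [CharZero F] [DecidableEq F]
  {k l : R} [Nondeg (algebraMap R F k) (algebraMap R F l)]

lemma liftPt_succ {x y : F} (h : y ^ 2 = x * (x - algebraMap R F k) * (x - algebraMap R F l))
    (r : ℕ) : liftPt k l (r + 1) x y = let A := liftPt k l r x y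
      ![A 0 ^ 4 - algebraMap R F k * algebraMap R F l * A 3 ^ 4,
        A 1 ^ 2 * A 0 ^ 2 - algebraMap R F k * A 3 ^ 2 * A 2 ^ 2,
        A 2 ^ 2 * A 0 ^ 2 - algebraMap R F l * A 3 ^ 2 * A 1 ^ 2,
        2 * A 3 * A 0 * A 1 * A 2] := by
  have e : aeval x (cubic k l) = y ^ 2 := by
    rw [h]; simp [cubic]
  have e2 : aeval x (2 : R[X]) = 2 := map_ofNat _ 2
  ext i
  fin_cases i <;> simp only [liftPt, lp, e, e2, map_sub, map_mul, map_pow, aeval_C, Fin.zero_eta,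
    Fin.mk_one, Fin.reduceFinMk, Matrix.cons_val] <;> ring

/-- The polynomials `lp` compute the multiplication by `2 ^ (r + 1)` for points no such multiple
of which vanishes. -/
lemma liftPt_spec {x y : F} (h : y ^ 2 = x * (x - algebraMap R F k) * (x - algebraMap R F l))
    (hP : ∀ n : ℕ, 2 ^ n • (pt x y h : EP (algebraMap R F k) (algebraMap R F l)) ≠ 0) (r : ℕ) :
    ∃ h3 : liftPt k l r x y 3 ≠ 0, (∀ i, liftPt k l r x y i ≠ 0) ∧
      2 ^ (r + 1) • (pt x y h : EP (algebraMap R F k) (algebraMap R F l)) =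
        lpt (liftPt_isLift h r) h3 := by
  have step : ∀ n : ℕ, 2 ^ (n + 1) • (pt x y h : EP (algebraMap R F k) (algebraMap R F l)) =
      2 ^ n • (pt x y h : EP (algebraMap R F k) (algebraMap R F l)) + 2 ^ n • pt x y h := by
    intro n; rw [pow_succ, mul_nsmul, two_nsmul, ← smul_add]
  suffices H : ∃ h3 : liftPt k l r x y 3 ≠ 0,
      2 ^ (r + 1) • (pt x y h : EP (algebraMap R F k) (algebraMap R F l)) =
        lpt (liftPt_isLift h r) h3 by
    obtain ⟨h3, e⟩ := H
    refine ⟨h3, lift_coord_ne (liftPt_isLift h r) h3 ?_, e⟩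
    rw [← e, ← step]; exact hP _
  induction r with
  | zero =>
    have hy : y ≠ 0 := two_nsmul_pt_ne (h := h) (by simpa [two_nsmul] using hP 1)
    have e0 : liftPt k l 0 x y = ![x ^ 2 - algebraMap R F k * algebraMap R F l,
        x ^ 2 - 2 * algebraMap R F k * x + algebraMap R F k * algebraMap R F l,
        x ^ 2 - 2 * algebraMap R F l * x + algebraMap R F k * algebraMap R F l, y * 2] := by
      have e2 : aeval x (2 : R[X]) = 2 := map_ofNat _ 2
      have e3 : algebraMap R F 2 = 2 := map_ofNat _ 2
      ext i; fin_cases i <;> simp [liftPt, lp, e2, e3]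
    refine ⟨by rw [e0]; simpa using hy, ?_⟩
    obtain ⟨H, e⟩ := double_pt' h hy
    rw [zero_add, pow_one, two_nsmul, e, lpt, pt_inj, e0]
    simp only [Matrix.cons_val]
    constructor
    · rw [div_pow, mul_comm y]
    · rw [mul_pow]; norm_num [mul_comm]
  | succ r ih =>
    obtain ⟨h3, e⟩ := ih
    have hne := lift_coord_ne (liftPt_isLift h r) h3 (by rw [← e, ← step]; exact hP _)
    have hA := liftPt_isLift h r
    rw [step, e]
    have es := liftPt_succ h r
    have hy := two_nsmul_pt_ne (h := lift_eq hA h3) (by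
      change lpt hA h3 + lpt hA h3 ≠ 0
      rw [← e, ← step]; exact hP _)
    have h3' : liftPt k l (r + 1) x y 3 ≠ 0 := by
      rw [es]
      simp only [Matrix.cons_val]
      exact mul_ne_zero (mul_ne_zero (mul_ne_zero (mul_ne_zero two_ne_zero (hne 3)) (hne 0))
        (hne 1)) (hne 2)
    refine ⟨h3', ?_⟩
    obtain ⟨H, e'⟩ := double_pt' (lift_eq hA h3) hy
    rw [lpt, e', lpt, pt_inj, es]
    simp only [Matrix.cons_val]
    exact double_alg (hne 0) (hne 1) (hne 2) (hne 3) hA.hC hA.hD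
end

section
variable {K : Type*} [Field K] [NumberField K] {k l : K} [Nondeg k l] [DecidableEq K]

/-- Some nonzero row of the sum-difference matrix carries the height of the difference. -/
lemma exists_row {A : Fin 4 → K} (hA : IsLift k l A) (hne : ∀ i, A i ≠ 0) {S C D : K}
    (hS : S ≠ 0) (hC0 : C ≠ 0) (hD0 : D ≠ 0)
    (hC : C ^ 2 = S ^ 2 - k) (hD : D ^ 2 = S ^ 2 - l)
    (hB : (S * C * D) ^ 2 = S ^ 2 * (S ^ 2 - k) * (S ^ 2 - l)) :
    ∃ U, sdm k l A S C D U ≠ 0 ∧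
      hX (lpt hA (hne 3) - pt _ _ hB) ≤ 2 * logHeight (sdm k l A S C D U) := by
  have hA1 := hA.hC
  have hA2 := hA.hD
  have a0 := hne 0
  have a1 := hne 1
  have a2 := hne 2
  have a3 := hne 3
  have r3 : sdm k l A S C D 3 = ![A 3 * A 0 * C * D + S * A 1 * A 2, A 3 ^ 2 * S ^ 2 - A 0 ^ 2] := rfl
  have r0 : sdm k l A S C D 0 =
    ![A 0 ^ 2 * S ^ 2 - k * l * A 3 ^ 2, A 3 * A 0 * C * D - S * A 1 * A 2] := rfl
  have hh : ∀ p q : K, logHeight₁ ((p / q) ^ 2) = 2 * logHeight ![p, q] := by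
    intro p q
    rw [logHeight₁_pow, logHeight₁_div_eq_logHeight]; norm_num
  by_cases hx : A 0 ^ 2 / A 3 ^ 2 = S ^ 2
  · have hx' : A 0 ^ 2 = S ^ 2 * A 3 ^ 2 := by rwa [div_eq_iff (pow_ne_zero 2 a3)] at hx
    have hB' : (S * C * D) ^ 2 =
        A 0 ^ 2 / A 3 ^ 2 * (A 0 ^ 2 / A 3 ^ 2 - k) * (A 0 ^ 2 / A 3 ^ 2 - l) := by
      rw [hx]; exact hB
    have hpB : (pt _ _ hB : EP k l) = pt _ _ hB' := pt_congr hx.symm rfl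
    rw [hpB]
    rcases sq_eq_sq_iff_eq_or_eq_neg.1 ((lift_eq hA a3).trans hB'.symm) with e | e
    · refine ⟨3, ?_, ?_⟩
      · intro h0
        have h1 := congrFun (r3.symm.trans h0) 0
        simp only [Matrix.cons_val_zero, Pi.zero_apply] at h1
        rw [div_eq_iff (pow_ne_zero 3 a3)] at e
        have : 2 * A 0 ^ 2 * A 3 * C * D = 0 := by
          linear_combination A 0 * h1 - S * e + A 3 * C * D * hx'
        simp_all
      · rw [lpt, pt_congr (h := lift_eq hA a3) rfl e, sub_self]
        have : hX (0 : EP k l) = 0 := by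
          have : (0 : EP k l).xRep = ![1, 0] := rfl
          rw [hX, this, ← logHeight₁_div_eq_logHeight]; simp
        rw [this]
        have := logHeight_nonneg (sdm k l A S C D 3)
        linarith
    · have e' := e
      rw [div_eq_iff (pow_ne_zero 3 a3)] at e'
      have e2 : S * A 1 * A 2 = - (A 0 * A 3 * C * D) := by
        apply mul_left_cancel₀ a0
        linear_combination S * e' + A 3 * C * D * hx'
      have hq : A 3 * A 0 * C * D - S * A 1 * A 2 = 2 * (A 0 * A 3 * C * D) := by
        rw [e2]; ring
      have hq0 : 2 * (A 0 * A 3 * C * D) ≠ 0 := by simp_all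
      refine ⟨0, ?_, ?_⟩
      · intro h0
        have h1 := congrFun (r0.symm.trans h0) 1
        simp only [Matrix.cons_val_one, Pi.zero_apply] at h1
        rw [hq] at h1
        exact hq0 h1
      · have e3 : (pt _ _ hB' : EP k l) = - lpt hA a3 := by
          rw [lpt, neg_pt, pt_inj]
          exact ⟨rfl, by rw [e]; ring⟩
        rw [e3, sub_neg_eq_add, lpt]
        have hy : A 0 * A 1 * A 2 / A 3 ^ 3 ≠ 0 := by simp [a0, a1, a2, a3]
        obtain ⟨H, e4⟩ := double_pt' (lift_eq hA a3) hy
        rw [e4, hX_pt, r0, hq, ← hh]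
        apply le_of_eq
        congr 1
        rw [e, hx, div_pow, div_pow, div_eq_div_iff (by simp_all) (by simp_all)]
        rw [hx']
        have e5 : (A 0 * A 3 * C * D) ^ 2 = A 3 ^ 4 * (S * C * D) ^ 2 := by
          rw [mul_pow, mul_pow, mul_pow, hx']; ring
        linear_combination 4 * (S ^ 4 - k * l) ^ 2 * e5
  · have hq : A 3 ^ 2 * S ^ 2 - A 0 ^ 2 ≠ 0 := by
      intro h0
      apply hx
      rw [div_eq_iff (pow_ne_zero 2 a3)]
      linear_combination -h0
    refine ⟨3, ?_, ?_⟩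
    · intro h0
      have h1 := congrFun (r3.symm.trans h0) 1
      simp only [Matrix.cons_val_one, Pi.zero_apply] at h1
      exact hq h1
    · rw [sub_eq_add_neg, neg_pt, lpt]
      have hd : A 0 ^ 2 / A 3 ^ 2 - S ^ 2 ≠ 0 := sub_ne_zero.2 hx
      obtain ⟨H, e⟩ := add_pt (lift_eq hA a3) (by rw [neg_sq]; exact hB) hx
        (s := (A 0 * A 1 * A 2 / A 3 ^ 3 + S * C * D) / (A 0 ^ 2 / A 3 ^ 2 - S ^ 2))
        (X := ((A 3 * A 0 * C * D + S * A 1 * A 2) / (A 3 ^ 2 * S ^ 2 - A 0 ^ 2)) ^ 2)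
        (by rw [div_mul_cancel₀ _ hd]; ring) (diff_alg a3 hq hA1 hA2 hC hD) rfl
      rw [e, hX_pt, r3, hh]
end
end HE

/-! ### Heights of lifts -/

namespace HE
set_option linter.unusedSectionVars false
open Polynomial NumberField Height AdmissibleAbsValues

section
variable {K : Type*} [Field K] [NumberField K]

lemma hX_lpt {k l : K} [Nondeg k l] [DecidableEq K] {A : Fin 4 → K} (hA : IsLift k l A)
    (h3 : A 3 ≠ 0) : hX (lpt hA h3) = logHeight ![A 0 ^ 2, A 3 ^ 2] := by
  rw [lpt, hX_pt, logHeight₁_div_eq_logHeight]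

/-- `τ` determines both points: the bihomogeneous coordinates of the pair of `x`-coordinates
are linear combinations of the squares of the entries of `τ`. -/
lemma tau_lower {k l m : K} (hk : k ≠ 0) (hlm : l ≠ m) : ∃ C : ℝ, ∀ A B : Fin 4 → K,
    IsLift k l A → IsLift k m B → A 3 ≠ 0 → B 3 ≠ 0 →
    logHeight ![A 0 ^ 2, A 3 ^ 2] + logHeight ![B 0 ^ 2, B 3 ^ 2] ≤
      2 * logHeight (tauv k A B) + C := by
  have hlm' : l - m ≠ 0 := sub_ne_zero.2 hlm
  let M : (Fin 2 × Fin 2) × Fin 4 → K := fun p =>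
    ![![![0, 1, 0, 0],
        ![-1 / k - m / k / (l - m), 1 / k - 1 / (l - m) + m / k / (l - m),
          1 / k - l * m / k ^ 2 / (l - m) + m / k / (l - m), 1 / k ^ 2 / (l - m)]],
      ![![m / k / (l - m), 1 / (l - m) - m / k / (l - m),
          l * m / k ^ 2 / (l - m) - m / k / (l - m), -1 / k ^ 2 / (l - m)],
        ![0, 0, 1 / k ^ 2, 0]]] p.1.1 p.1.2 p.2
  refine ⟨totalWeight K * Real.log (Nat.card (Fin 4)) + logHeight M, fun A B hA hB hA3 hB3 => ?_⟩
  have h1 := logHeight_linearMap_apply_le M (tauv k A B ^ 2)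
  rw [logHeight_pow] at h1
  have h2 : (fun j => ∑ i, M (j, i) * (tauv k A B ^ 2) i) =
      fun a : Fin 2 × Fin 2 => ![A 0 ^ 2, A 3 ^ 2] a.1 * ![B 0 ^ 2, B 3 ^ 2] a.2 := by
    have e1 : A 1 ^ 2 * B 1 ^ 2 = (A 0 ^ 2 - k * A 3 ^ 2) * (B 0 ^ 2 - k * B 3 ^ 2) := by
      rw [hA.hC, hB.hC]
    have e2 : A 2 ^ 2 * B 2 ^ 2 = (A 0 ^ 2 - l * A 3 ^ 2) * (B 0 ^ 2 - m * B 3 ^ 2) := by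
      rw [hA.hD, hB.hD]
    funext ⟨i, j⟩
    fin_cases i <;> fin_cases j <;>
      simp only [M, Fin.sum_univ_four, Fin.zero_eta, Fin.mk_one, Matrix.cons_val, Pi.pow_apply,
        tauv, neg_sq, mul_pow, e1, e2] <;> field_simp <;> ring
  have n1 : ![A 0 ^ 2, A 3 ^ 2] ≠ 0 := fun h => pow_ne_zero 2 hA3 (congrFun h 1)
  have n2 : ![B 0 ^ 2, B 3 ^ 2] ≠ 0 := fun h => pow_ne_zero 2 hB3 (congrFun h 1)
  rw [h2, logHeight_fun_mul_eq n1 n2] at h1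
  push_cast at h1 ⊢
  linarith
end
end HE

/-! ### Finiteness for four simultaneous squares -/

namespace HE
set_option linter.unusedSectionVars false
open Polynomial NumberField Height AdmissibleAbsValues

section
variable {K : Type*} [Field K] [NumberField K] [DecidableEq K] {k l m : 𝓞 K}

lemma IsPt.eqA {z : Fin 4 → K} (h : IsPt k l m z) : (z 0 * z 1 * z 2) ^ 2 =
    z 0 ^ 2 * (z 0 ^ 2 - algebraMap (𝓞 K) K k) * (z 0 ^ 2 - algebraMap (𝓞 K) K l) := by
  rw [mul_pow, mul_pow, h.h1, h.h2]

lemma IsPt.eqB {z : Fin 4 → K} (h : IsPt k l m z) : (z 0 * z 1 * z 3) ^ 2 =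
    z 0 ^ 2 * (z 0 ^ 2 - algebraMap (𝓞 K) K k) * (z 0 ^ 2 - algebraMap (𝓞 K) K m) := by
  rw [mul_pow, mul_pow, h.h1, h.h3]

/-- The main inequality in terms of heights of points on the two elliptic curves. -/
lemma pair_ineq [Nondeg (algebraMap (𝓞 K) K k) (algebraMap (𝓞 K) K l)]
    [Nondeg (algebraMap (𝓞 K) K k) (algebraMap (𝓞 K) K m)]
    (hk : k ≠ 0) (hl : l ≠ 0) (hm : m ≠ 0) (hlm : l ≠ m) :
    ∃ B : ℝ, 0 ≤ B ∧ ∀ (r : ℕ) (ξ σ : Fin 4 → K) (hξ : IsPt k l m ξ) (hσ : IsPt k l m σ),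
      (∀ i, ξ i ≠ 0) → (∀ i, σ i ≠ 0) → 1 ≤ logHeight₁ (ξ 0 ^ 2) →
      B * 4 ^ (r + 1) < logHeight₁ (σ 0 ^ 2) →
      (∀ n : ℕ, 2 ^ n • pt _ _ hξ.eqA ≠ 0) → (∀ n : ℕ, 2 ^ n • pt _ _ hξ.eqB ≠ 0) →
      hX (2 ^ (r + 1) • pt _ _ hξ.eqA) + hX (2 ^ (r + 1) • pt _ _ hξ.eqB) +
        hX (2 ^ (r + 1) • pt _ _ hξ.eqA - pt _ _ hσ.eqA) +
        hX (2 ^ (r + 1) • pt _ _ hξ.eqB - pt _ _ hσ.eqB) ≤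
      17 / 3 * 4 ^ (r + 1) * logHeight₁ (ξ 0 ^ 2) + 4 * logHeight₁ (σ 0 ^ 2) +
        2 * B * 4 ^ (r + 1) + 2 * B * logHeight₁ (ξ 0 ^ 2) + B := by
  have hk' : algebraMap (𝓞 K) K k ≠ 0 := by simpa using hk
  have hlm' : algebraMap (𝓞 K) K l ≠ algebraMap (𝓞 K) K m :=
    fun h => hlm (RingOfIntegers.coe_injective h)
  obtain ⟨B, hB, H⟩ := main_ineq hk hl hm hlm
  obtain ⟨C, hC⟩ := tau_lower hk' hlm'
  refine ⟨max B C, hB.trans (le_max_left _ _), ?_⟩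
  intro r ξ σ hξ hσ hξ0 hσ0 h1 h2 hA hB'
  have hD : (0 : ℝ) ≤ 4 ^ (r + 1) := by positivity
  obtain ⟨a3, an, ae⟩ := liftPt_spec hξ.eqA hA r
  obtain ⟨b3, bn, be⟩ := liftPt_spec hξ.eqB hB' r
  obtain ⟨U₁, u1, v1⟩ := exists_row (liftPt_isLift hξ.eqA r) an (hσ0 0) (hσ0 1) (hσ0 2) hσ.h1 hσ.h2
    hσ.eqA
  obtain ⟨U₂, u2, v2⟩ := exists_row (liftPt_isLift hξ.eqB r) bn (hσ0 0) (hσ0 1) (hσ0 3) hσ.h1 hσ.h3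
    hσ.eqB
  have t1 := hC _ _ (liftPt_isLift hξ.eqA r) (liftPt_isLift hξ.eqB r) a3 b3
  have tne : tauA k l m r ξ ≠ 0 := fun h0 => mul_ne_zero (an 1) (bn 1) (congrFun h0 0)
  have main := H r ξ σ hξ hσ hξ0 h1
    ((mul_le_mul_of_nonneg_right (le_max_left B C) hD).trans_lt h2) U₁ U₂ u1 u2 tne
  rw [← ae] at v1
  rw [← be] at v2
  rw [← hX_lpt (liftPt_isLift hξ.eqA r) a3, ← hX_lpt (liftPt_isLift hξ.eqB r) b3, ← ae, ← be] at t1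
  change _ ≤ 2 * logHeight (mA k l r ξ σ U₁) at v1
  change _ ≤ 2 * logHeight (mB k m r ξ σ U₂) at v2
  change _ ≤ 2 * logHeight (tauA k l m r ξ) + C at t1
  have m1 := mul_le_mul_of_nonneg_right (le_max_left B C) hD
  have m2 := mul_le_mul_of_nonneg_right (le_max_left B C) (zero_le_one.trans h1)
  have m3 := le_max_right B C
  linarith
end

section
variable {G : Type*} [AddCommGroup G]

lemma canonical_nonneg {h q : G → ℝ} {C0 : ℝ} (hh : ∀ x, 0 ≤ h x) (hc : ∀ x, |q x - h x| ≤ C0)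
    (hq : ∀ x y, q (x + y) + q (x - y) = 2 * (q x + q y)) (x : G) : 0 ≤ q x := by
  by_contra! hx
  obtain ⟨n, hn⟩ := pow_unbounded_of_one_lt (C0 / (-q x)) (by norm_num : (1 : ℝ) < 4)
  rw [div_lt_iff₀ (by linarith)] at hn
  have h1 := q_two_pow hq n x
  have h2 := (abs_le.1 (hc (2 ^ n • x))).1
  have h3 := hh (2 ^ n • x)
  linarith
end

section
variable {K : Type*} [Field K] [NumberField K]

set_option maxHeartbeats 1000000 in
/-- Only finitely many elements `x` of a number field are such that `x`, `x - k`, `x - l` and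
`x - m` are all squares. Infinitely many of them would give points `P`, `Q` of the product of two
elliptic curves with `Q` close to `2^(r+1) P` in the Mordell-Weil lattice; `pair_ineq` excludes
this, since `17 / 6 + 2 (q Q) / (q (2^(r+1) P)) < 3 - 1 / 12 + 2 (q Q) / (q (2^(r+1) P))`. -/
theorem four_squares_finite {k l m : 𝓞 K} (hk : k ≠ 0) (hl : l ≠ 0) (hm : m ≠ 0)
    (hkl : k ≠ l) (hkm : k ≠ m) (hlm : l ≠ m) :
    {x : K | IsSquare x ∧ IsSquare (x - algebraMap (𝓞 K) K k) ∧
      IsSquare (x - algebraMap (𝓞 K) K l) ∧ IsSquare (x - algebraMap (𝓞 K) K m)}.Finite := by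
  classical
  have inj : ∀ {a b : 𝓞 K}, a ≠ b → algebraMap (𝓞 K) K a ≠ algebraMap (𝓞 K) K b :=
    fun hab h => hab (RingOfIntegers.coe_injective h)
  have : Nondeg (algebraMap (𝓞 K) K k) (algebraMap (𝓞 K) K l) :=
    ⟨by simpa using hk, by simpa using hl, inj hkl⟩
  have : Nondeg (algebraMap (𝓞 K) K k) (algebraMap (𝓞 K) K m) :=
    ⟨by simpa using hk, by simpa using hm, inj hkm⟩
  by_contra hinf
  set S : Set K := {x : K | IsSquare x ∧ IsSquare (x - algebraMap (𝓞 K) K k) ∧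
      IsSquare (x - algebraMap (𝓞 K) K l) ∧ IsSquare (x - algebraMap (𝓞 K) K m)} \
    {0, algebraMap (𝓞 K) K k, algebraMap (𝓞 K) K l, algebraMap (𝓞 K) K m} with hS
  have hSinf : S.Infinite := Set.Infinite.sdiff hinf (Set.toFinite _)
  have : Infinite S := hSinf.to_subtype
  have hex : ∀ x : S, ∃ z : Fin 4 → K, z 0 ^ 2 = x ∧ IsPt k l m z ∧ ∀ i, z i ≠ 0 := by
    rintro ⟨x, ⟨⟨a, ha⟩, ⟨b, hb⟩, ⟨c, hc⟩, ⟨d, hd⟩⟩, hx⟩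
    simp only [Set.mem_insert_iff, Set.mem_singleton_iff, not_or] at hx
    obtain ⟨x0, x1, x2, x3⟩ := hx
    refine ⟨![a, b, c, d], by simp [ha, sq], ⟨?_, ?_, ?_⟩, ?_⟩
    · simp only [Matrix.cons_val]; rw [sq, sq, ← ha, ← hb]
    · simp only [Matrix.cons_val]; rw [sq, sq, ← ha, ← hc]
    · simp only [Matrix.cons_val]; rw [sq, sq, ← ha, ← hd]
    · intro i
      fin_cases i
      · rintro rfl; exact x0 (by simpa using ha)
      · rintro rfl; exact x1 (sub_eq_zero.1 (by simpa using hb))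
      · rintro rfl; exact x2 (sub_eq_zero.1 (by simpa using hc))
      · rintro rfl; exact x3 (sub_eq_zero.1 (by simpa using hd))
  choose ξ hξx hξ hξ0 using hex
  obtain ⟨C1, hC1⟩ := hX_parallelogram (k := algebraMap (𝓞 K) K k) (l := algebraMap (𝓞 K) K l)
  obtain ⟨C2, hC2⟩ := hX_parallelogram (k := algebraMap (𝓞 K) K k) (l := algebraMap (𝓞 K) K m)
  obtain ⟨q₁, ⟨c₁, hc₁, hq₁⟩, hp₁⟩ := exists_canonical hC1
  obtain ⟨q₂, ⟨c₂, hc₂, hq₂⟩, hp₂⟩ := exists_canonical hC2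
  have pos₁ := canonical_nonneg hX_nonneg hq₁ hp₁
  have pos₂ := canonical_nonneg hX_nonneg hq₂ hp₂
  obtain ⟨B, hB, main⟩ := pair_ineq (K := K) hk hl hm hlm
  -- the sum of the two canonical heights on the product of the two groups
  let q : EP (algebraMap (𝓞 K) K k) (algebraMap (𝓞 K) K l) ×
    EP (algebraMap (𝓞 K) K k) (algebraMap (𝓞 K) K m) → ℝ := fun P => q₁ P.1 + q₂ P.2
  have hq : ∀ x y, q (x + y) + q (x - y) = 2 * (q x + q y) := by
    intro x y
    have h1 := hp₁ x.1 y.1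
    have h2 := hp₂ x.2 y.2
    simp only [q, Prod.fst_add, Prod.fst_sub, Prod.snd_add, Prod.snd_sub]
    linarith
  have hqpos : ∀ x, 0 ≤ q x := fun x => add_nonneg (pos₁ _) (pos₂ _)
  let P : S → EP (algebraMap (𝓞 K) K k) (algebraMap (𝓞 K) K l) ×
    EP (algebraMap (𝓞 K) K k) (algebraMap (𝓞 K) K m) :=
    fun x => (pt _ _ (hξ x).eqA, pt _ _ (hξ x).eqB)
  have hqP₁ : ∀ x, |q₁ (P x).1 - logHeight₁ (x : K)| ≤ c₁ := by
    intro x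
    have := hq₁ (P x).1
    rwa [show hX (P x).1 = logHeight₁ (x : K) by rw [← hξx]; exact hX_pt (hξ x).eqA] at this
  have hqP₂ : ∀ x, |q₂ (P x).2 - logHeight₁ (x : K)| ≤ c₂ := by
    intro x
    have := hq₂ (P x).2
    rwa [show hX (P x).2 = logHeight₁ (x : K) by rw [← hξx]; exact hX_pt (hξ x).eqB] at this
  have hfin : ∀ b : ℝ, {x | q (P x) ≤ b}.Finite := by
    intro b
    have h1 := (finite_setOfPred_logHeight₁_le K (b + c₁)).preimage
      (f := fun x : S => (x : K)) Subtype.val_injective.injOn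
    refine h1.subset fun x hx => ?_
    change q₁ (P x).1 + q₂ (P x).2 ≤ b at hx
    have h2 := pos₂ (P x).2
    have h3 := (abs_le.1 (hqP₁ x)).1
    change logHeight₁ (x : K) ≤ b + c₁
    linarith
  obtain ⟨N, hN⟩ := pow_unbounded_of_one_lt (48 * B) (by norm_num : (1 : ℝ) < 4)
  obtain ⟨i, j, r, hNr, hbig, hclose⟩ := cluster hq hqpos P hfin (ε := 1 / 12) (by norm_num)
    (48 * (1 + 10 * (c₁ + c₂) + 3 * B + B * (c₁ + c₂))) N
  set D : ℝ := 4 ^ (r + 1) with hDdef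
  have hD1 : 1 ≤ D := one_le_pow₀ (by norm_num)
  have hDB : 48 * B ≤ D := by
    refine hN.le.trans (pow_le_pow_right₀ (by norm_num) (by omega))
  set h0 := logHeight₁ (i : K) with hh0
  set t0 := logHeight₁ (j : K) with ht0
  have i1 := abs_le.1 (hqP₁ i)
  have i2 := abs_le.1 (hqP₂ i)
  have j1 := abs_le.1 (hqP₁ j)
  have j2 := abs_le.1 (hqP₂ j)
  have hBc : 0 ≤ B * (c₁ + c₂) := mul_nonneg hB (add_nonneg hc₁ hc₂)
  have qi : q (P i) = q₁ (P i).1 + q₂ (P i).2 := rfl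
  have qj : q (P j) = q₁ (P j).1 + q₂ (P j).2 := rfl
  have hDq : D * (48 * (1 + 10 * (c₁ + c₂) + 3 * B + B * (c₁ + c₂))) ≤ D * q (P i) :=
    mul_le_mul_of_nonneg_left hbig.le (by linarith)
  have hapos : ∀ n, q (2 ^ n • P i) = 4 ^ n * q (P i) := fun n => q_two_pow hq n (P i)
  -- the second point has large height
  have hQbig : 5 / 12 * (D * q (P i)) ≤ q (P j) := by
    have h1 := hq (P j) (2 ^ (r + 1) • P i - P j)
    have h2 := hqpos (P j - (2 ^ (r + 1) • P i - P j))
    rw [add_sub_cancel, hapos] at h1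
    linarith
  -- the second point enters with the opposite sign
  set σ : Fin 4 → K := ![-ξ j 0, ξ j 1, ξ j 2, ξ j 3] with hσdef
  have hσ : IsPt k l m σ := by
    refine ⟨?_, ?_, ?_⟩ <;> simp only [hσdef, Matrix.cons_val, neg_sq]
    exacts [(hξ j).h1, (hξ j).h2, (hξ j).h3]
  have hσ0 : ∀ t, σ t ≠ 0 := by
    intro t
    fin_cases t
    exacts [neg_ne_zero.2 (hξ0 j 0), hξ0 j 1, hξ0 j 2, hξ0 j 3]
  have eσ : σ 0 ^ 2 = (j : K) := by rw [← hξx j]; exact neg_sq _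
  have eA : pt _ _ hσ.eqA = -(P j).1 := by
    change _ = - pt _ _ (hξ j).eqA
    rw [neg_pt, pt_inj]
    constructor <;> simp [hσdef]
  have eB : pt _ _ hσ.eqB = -(P j).2 := by
    change _ = - pt _ _ (hξ j).eqB
    rw [neg_pt, pt_inj]
    constructor <;> simp [hσdef]
  have tor₁ : ∀ n : ℕ, 2 ^ n • (P i).1 ≠ 0 := by
    intro n h
    have h1 := q_two_pow hp₁ n (P i).1
    rw [h, q_zero hp₁] at h1
    have : 0 < (4 : ℝ) ^ n * q₁ (P i).1 := mul_pos (by positivity) (by linarith)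
    linarith
  have tor₂ : ∀ n : ℕ, 2 ^ n • (P i).2 ≠ 0 := by
    intro n h
    have h1 := q_two_pow hp₂ n (P i).2
    rw [h, q_zero hp₂] at h1
    have : 0 < (4 : ℝ) ^ n * q₂ (P i).2 := mul_pos (by positivity) (by linarith)
    linarith
  have hDc : D * (c₁ + c₂) ≥ c₁ + c₂ := le_mul_of_one_le_left (add_nonneg hc₁ hc₂) hD1
  have hDB' : 0 ≤ D * (B * (c₁ + c₂)) := by positivity
  have M := main r (ξ i) σ (hξ i) hσ (hξ0 i) hσ0 (by rw [hξx]; linarith)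
    (by rw [eσ]; nlinarith) tor₁ tor₂
  rw [eA, eB] at M
  change hX (2 ^ (r + 1) • (P i).1) + hX (2 ^ (r + 1) • (P i).2) +
    hX (2 ^ (r + 1) • (P i).1 - -(P j).1) + hX (2 ^ (r + 1) • (P i).2 - -(P j).2) ≤
    17 / 3 * D * logHeight₁ (ξ i 0 ^ 2) + 4 * logHeight₁ (σ 0 ^ 2) + 2 * B * D +
      2 * B * logHeight₁ (ξ i 0 ^ 2) + B at M
  rw [eσ, sub_neg_eq_add, sub_neg_eq_add, hξx i, ← hh0, ← ht0] at M
  have u1 := (abs_le.1 (hq₁ (2 ^ (r + 1) • (P i).1))).2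
  have u2 := (abs_le.1 (hq₂ (2 ^ (r + 1) • (P i).2))).2
  have u3 := (abs_le.1 (hq₁ (2 ^ (r + 1) • (P i).1 + (P j).1))).2
  have u4 := (abs_le.1 (hq₂ (2 ^ (r + 1) • (P i).2 + (P j).2))).2
  rw [q_two_pow hp₁] at u1
  rw [q_two_pow hp₂] at u2
  have par := hq (2 ^ (r + 1) • P i) (P j)
  rw [hapos] at par
  have e5 : q (2 ^ (r + 1) • P i + P j) = q₁ (2 ^ (r + 1) • (P i).1 + (P j).1) +
    q₂ (2 ^ (r + 1) • (P i).2 + (P j).2) := rfl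
  have w1 : D * h0 ≤ D * ((q (P i) + (c₁ + c₂)) / 2) :=
    mul_le_mul_of_nonneg_left (by linarith) (by linarith)
  have w2 : B * h0 ≤ B * ((q (P i) + (c₁ + c₂)) / 2) :=
    mul_le_mul_of_nonneg_left (by linarith) hB
  have w3 : 48 * B * q (P i) ≤ D * q (P i) := mul_le_mul_of_nonneg_right hDB (hqpos _)
  have w4 : B ≤ D * B := le_mul_of_one_le_left hB hD1
  have w5 : B * (c₁ + c₂) ≤ D * (B * (c₁ + c₂)) := le_mul_of_one_le_left hBc hD1
  linarith
end
end HE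

/-! ### Reduction of the hyperelliptic equation -/

namespace HE
set_option linter.unusedSectionVars false

section
open Polynomial NumberField

lemma isSquare_of_splits {K L : Type*} [Field K] [Field L] [Algebra K L] {p : K[X]} (hp : p ≠ 0)
    (hsp : (p.map (algebraMap K L)).Splits) {t : K} (hdvd : X ^ 2 - C t ∣ p) :
    IsSquare (algebraMap K L t) := by
  have h2 : ((X ^ 2 - C t).map (algebraMap K L)).Splits :=
    hsp.of_dvd (Polynomial.map_ne_zero hp) (Polynomial.map_dvd (algebraMap K L) hdvd)
  have hdeg : ((X ^ 2 - C t).map (algebraMap K L)).degree ≠ 0 := by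
    rw [degree_map, degree_X_pow_sub_C two_pos]; decide
  obtain ⟨r, hr⟩ := h2.exists_eval_eq_zero hdeg
  refine ⟨r, ?_⟩
  simp only [Polynomial.map_sub, Polynomial.map_pow, map_X, map_C, eval_sub, eval_pow, eval_X,
    eval_C] at hr
  rw [← sq]
  exact (sub_eq_zero.1 hr).symm

lemma exists_splitting {K : Type} [Field K] [NumberField K] (p : K[X]) :
    ∃ (L : Type) (_ : Field L) (_ : NumberField L) (_ : Algebra K L),
      (p.map (algebraMap K L)).Splits :=
  ⟨p.SplittingField, inferInstance, NumberField.of_module_finite K _, inferInstance,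
    SplittingField.splits p⟩

lemma exists_sqrt_field {K : Type} [Field K] [NumberField K] {T : Set K} (hT : T.Finite) :
    ∃ (L : Type) (_ : Field L) (_ : NumberField L) (_ : Algebra K L),
      ∀ t ∈ T, IsSquare (algebraMap K L t) := by
  classical
  have hp : ∏ t ∈ hT.toFinset, (X ^ 2 - C t) ≠ 0 :=
    Finset.prod_ne_zero_iff.2 fun t _ => X_pow_sub_C_ne_zero two_pos t
  obtain ⟨L, i1, i2, i3, hsp⟩ := exists_splitting (∏ t ∈ hT.toFinset, (X ^ 2 - C t))
  exact ⟨L, i1, i2, i3, fun t ht => isSquare_of_splits hp hsp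
    (Finset.dvd_prod_of_mem (fun t => X ^ 2 - C t) (hT.mem_toFinset.2 ht))⟩

/-- The hyperelliptic statement over a number field containing all the roots. Dividing by
`x - a 4` turns the four remaining factors into shifts of `u = (x - a 0) / (x - a 4)`, which are
squares in a fixed extension up to finitely many classes. -/
theorem split_finite {K : Type} [Field K] [NumberField K] {ι : Type*} [Fintype ι] (α : ι → K)
    (hα : Function.Injective α) {c : K} (hc : c ≠ 0) (hι : 5 ≤ Fintype.card ι) :
    {x : K | ∃ y, y ≠ 0 ∧ y ^ 2 = c * ∏ t, (x - α t)}.Finite := by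
  classical
  obtain ⟨e⟩ : Nonempty (Fin 5 ↪ ι) :=
    Function.Embedding.nonempty_of_card_le (by simpa using hι)
  obtain ⟨T, hT, hT0, hTs⟩ := selmer_finite α hα hc
  set a : Fin 5 → K := fun i => α (e i) with ha
  have hinj : Function.Injective a := hα.comp e.injective
  have ne4 : ∀ i : Fin 4, a i.castSucc - a 4 ≠ 0 := fun i =>
    sub_ne_zero.2 (hinj.ne (Fin.castSucc_lt_last i).ne)
  let κ : Fin 4 → K := fun i => (a i.castSucc - a 0) / (a i.castSucc - a 4)
  let γ : Fin 4 → K := fun i => (a 0 - a 4) / (a i.castSucc - a 4)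
  have h04 : a 0 - a 4 ≠ 0 := ne4 0
  have κinj : Function.Injective κ := by
    intro i j hij
    have := (div_eq_div_iff (ne4 i) (ne4 j)).1 hij
    have h : (a i.castSucc - a j.castSucc) * (a 0 - a 4) = 0 := by linear_combination this
    exact Fin.castSucc_injective _ (hinj (sub_eq_zero.1 ((mul_eq_zero.1 h).resolve_right h04)))
  have κ0 : κ 0 = 0 := by simp [κ]
  have hT' : (Set.image2 (fun t i => t * γ i) T Set.univ).Finite := hT.image2 _ Set.finite_univ
  obtain ⟨L, _, _, _, hL⟩ := exists_sqrt_field hT'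
  let u : K → K := fun x => (x - a 0) / (x - a 4)
  set X := {x : K | ∃ y, y ≠ 0 ∧ y ^ 2 = c * ∏ t, (x - α t)} with hX
  have hxa : ∀ x ∈ X, ∀ t, x - α t ≠ 0 := by
    rintro x ⟨y, hy, h⟩ t h0
    rw [Finset.prod_eq_zero (Finset.mem_univ t) h0, mul_zero] at h
    exact hy (pow_eq_zero_iff two_ne_zero |>.1 h)
  have hsq : ∀ x ∈ X, ∀ i, IsSquare (algebraMap K L (u x - κ i)) := by
    rintro x hx i
    obtain ⟨y, hy, h⟩ := id hx
    obtain ⟨t, ht, b, hb, hab⟩ := hTs _ ⟨x, y, e i.castSucc, e 4, hy, h, rfl⟩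
    obtain ⟨s, hs⟩ := hL _ ⟨t, ht, i, trivial, rfl⟩
    have h4 : x - a 4 ≠ 0 := hxa x hx _
    have e1 : u x - κ i = t * γ i * (b / (x - a 4)) ^ 2 := by
      change (x - a i.castSucc) * (x - a 4) = _ at hab
      have := ne4 i
      simp only [u, κ, γ]
      field_simp
      linear_combination (a 0 - a 4) * hab
    refine ⟨s * algebraMap K L (b / (x - a 4)), ?_⟩
    rw [e1, map_mul, hs, map_pow]; ring
  obtain ⟨N, hN⟩ := IsLocalization.exist_integer_multiples (nonZeroDivisors (𝓞 L)) Finset.univ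
    (fun i => algebraMap K L (κ i))
  choose k hk using fun i => hN i (Finset.mem_univ i)
  have hN0 : algebraMap (𝓞 L) L N ≠ 0 := by simp
  have hk' : ∀ i, algebraMap (𝓞 L) L (N * k i) =
      algebraMap (𝓞 L) L N ^ 2 * algebraMap K L (κ i) := by
    intro i
    rw [map_mul, hk, Algebra.smul_def]; ring
  have kinj : ∀ {i j}, i ≠ j → (N : 𝓞 L) * k i ≠ N * k j := by
    intro i j hij h
    have h' := congrArg (algebraMap (𝓞 L) L) h
    rw [hk', hk'] at h'
    exact hij (κinj ((algebraMap K L).injective (mul_left_cancel₀ (pow_ne_zero 2 hN0) h')))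
  have k0 : (N : 𝓞 L) * k 0 = 0 := by
    apply RingOfIntegers.coe_injective
    rw [hk', κ0]; simp
  have fin := four_squares_finite (k := (N : 𝓞 L) * k 1) (l := N * k 2) (m := N * k 3)
    (by rw [← k0]; exact kinj (by decide)) (by rw [← k0]; exact kinj (by decide))
    (by rw [← k0]; exact kinj (by decide)) (kinj (by decide)) (kinj (by decide))
    (kinj (by decide))
  refine Set.Finite.of_finite_image (f := fun x => algebraMap (𝓞 L) L N ^ 2 * algebraMap K L (u x))
    (fin.subset ?_) ?_
  · rintro _ ⟨x, hx, rfl⟩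
    have key : ∀ i, IsSquare (algebraMap (𝓞 L) L N ^ 2 * algebraMap K L (u x) -
        algebraMap (𝓞 L) L (N * k i)) := by
      intro i
      rw [hk', ← mul_sub, ← map_sub]
      exact (IsSquare.sq _).mul (hsq x hx i)
    refine ⟨?_, key 1, key 2, key 3⟩
    have := key 0
    rwa [k0, map_zero, sub_zero] at this
  · intro x hx x' hx' h
    have h1 : u x = u x' := (algebraMap K L).injective (mul_left_cancel₀ (pow_ne_zero 2 hN0) h)
    have h2 := (div_eq_div_iff (hxa x hx (e 4)) (hxa x' hx' (e 4))).1 h1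
    have h3 : (x - x') * (a 0 - a 4) = 0 := by
      change (x - a 0) * (x' - a 4) = (x' - a 0) * (x - a 4) at h2
      linear_combination h2
    exact sub_eq_zero.1 ((mul_eq_zero.1 h3).resolve_right h04)
end
end HE

/-- If `f ∈ ℚ[x]` is squarefree of degree at least 5, then the hyperelliptic curve
`y² = f(x)` has only finitely many rational points. -/
theorem finitely_many_rational_points_on_hyperelliptic_curves
    (f : Polynomial ℚ) (hsf : Squarefree f) (hdeg : 5 ≤ f.natDegree) :
    {P : ℚ × ℚ | P.2 ^ 2 = f.eval P.1}.Finite := by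
  classical
  have hf0 : f ≠ 0 := hsf.ne_zero
  have hsep : f.Separable := PerfectField.separable_iff_squarefree.2 hsf
  let φ := algebraMap ℚ f.SplittingField
  have : NumberField f.SplittingField := NumberField.of_module_finite ℚ _
  have hsp : (f.map φ).Splits := Polynomial.SplittingField.splits f
  have hnd : (f.map φ).roots.Nodup := Polynomial.nodup_roots hsep.map
  have hcard : 5 ≤ Fintype.card {a // a ∈ (f.map φ).roots.toFinset} := by
    rw [Fintype.card_coe, Multiset.toFinset_card_of_nodup hnd, ← hsp.natDegree_eq_card_roots,
      Polynomial.natDegree_map]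
    exact hdeg
  have hc : φ f.leadingCoeff ≠ 0 := by simpa using hf0
  have heval : ∀ x : ℚ, φ (f.eval x) = φ f.leadingCoeff *
      ∏ t : {a // a ∈ (f.map φ).roots.toFinset}, (φ x - t) := by
    intro x
    have h1 := congrArg (Polynomial.eval (φ x)) hsp.eq_prod_roots
    rw [Polynomial.eval_map_apply, Polynomial.eval_mul, Polynomial.eval_C,
      Polynomial.leadingCoeff_map, Polynomial.eval_multiset_prod, Multiset.map_map] at h1
    rw [Finset.prod_coe_sort (f.map φ).roots.toFinset (fun t => φ x - t), h1,
      Finset.prod_eq_multiset_prod, Multiset.toFinset_val, hnd.dedup]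
    simp
  have hX := (HE.split_finite (fun t : {a // a ∈ (f.map φ).roots.toFinset} => (t : f.SplittingField))
    Subtype.val_injective hc hcard).preimage (f := φ) φ.injective.injOn
  have hX' : {x : ℚ | IsSquare (f.eval x)}.Finite := by
    refine (hX.union (f.roots.toFinset.finite_toSet)).subset ?_
    rintro x ⟨y, hy⟩
    by_cases hy0 : y = 0
    · right
      simpa [hf0, hy0] using hy
    · left
      refine ⟨φ y, by simpa using hy0, ?_⟩
      rw [← heval, hy, map_mul, sq]
  refine Set.Finite.subset (Set.Finite.biUnion hX' (t := fun x => {x} ×ˢ {y : ℚ | y ^ 2 = f.eval x})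
    fun x _ => (Set.finite_singleton x).prod ?_) ?_
  · have := (Polynomial.X_pow_sub_C_ne_zero two_pos (f.eval x))
    refine ((Polynomial.X ^ 2 - Polynomial.C (f.eval x)).roots.toFinset.finite_toSet).subset ?_
    intro y hy
    have hy : y ^ 2 = f.eval x := hy
    simp [this, hy]
  · rintro ⟨x, y⟩ h
    have h : y ^ 2 = f.eval x := h
    simp only [Set.mem_iUnion]
    exact ⟨x, ⟨y, by rw [← h, sq]⟩, rfl, h⟩
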